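/- There are constants d' > 0 and b ≥ 1 such that for every integer t ≥ 1, every K_{t,t}-free string graph G on n ≥ 2 vertices has a separator of size at most d'·t^{1/(2b)}·(log₂ n)^{1+1/(2b)}·n^{1−1/(2b)}. -/

import Mathlib

/-- A curve in the plane: the image of a continuous map from `[0,1]` to `ℝ²`. -/
def IsCurve (c : Set (ℝ × ℝ)) : Prop :=
  ∃ f : ℝ → ℝ × ℝ, ContinuousOn f (Set.Icc 0 1) ∧ c = f '' Set.Icc 0 1

/-- A string graph: an intersection graph of curves in the plane. -/
def IsStringGraph {V : Type*} (G : SimpleGraph V) : Prop :=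
  ∃ γ : V → Set (ℝ × ℝ), (∀ v, IsCurve (γ v)) ∧
    ∀ u v : V, u ≠ v → (G.Adj u v ↔ (γ u ∩ γ v).Nonempty)

/-- A graph is `K_{t,t}`-free if there are no two disjoint `t`-element vertex sets `A`
and `B` such that every vertex of `A` is adjacent to every vertex of `B`. -/
def KttFree {V : Type*} (G : SimpleGraph V) (t : ℕ) : Prop :=
  ¬ ∃ A B : Finset V, Disjoint A B ∧ A.card = t ∧ B.card = t ∧
      ∀ a ∈ A, ∀ b ∈ B, G.Adj a b

/-- `S` is a separator of `G`: the vertex set is partitioned as `S ∪ V₁ ∪ V₂` with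
`|V₁|, |V₂| ≤ (2/3)|V|` and no edges between `V₁` and `V₂`. -/
def IsSeparator {V : Type*} [Fintype V] [DecidableEq V]
    (G : SimpleGraph V) (S : Finset V) : Prop :=
  ∃ V₁ V₂ : Finset V,
    S ∪ V₁ ∪ V₂ = Finset.univ ∧
    Disjoint S V₁ ∧ Disjoint S V₂ ∧ Disjoint V₁ V₂ ∧
    (V₁.card : ℝ) ≤ 2 / 3 * Fintype.card V ∧
    (V₂.card : ℝ) ≤ 2 / 3 * Fintype.card V ∧
    ∀ u ∈ V₁, ∀ v ∈ V₂, ¬ G.Adj u v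



def LStep (p q : ℤ × ℤ) : Prop :=
  q = p ∨ q = (p.1 + 1, p.2) ∨ q = (p.1 - 1, p.2) ∨ q = (p.1, p.2 + 1) ∨ q = (p.1, p.2 - 1)

lemma LStep.symm {p q : ℤ × ℤ} (h : LStep p q) : LStep q p := by
  obtain ⟨a, b⟩ := p
  obtain ⟨c, d⟩ := q
  simp only [LStep, Prod.mk.injEq] at *
  omega

lemma LStep.refl (p : ℤ × ℤ) : LStep p p := Or.inl rfl

/-- contribution of a step `p → q` to the crossing number with the right ray from `P`. -/
def rr (p q P : ℤ × ℤ) : ℤ :=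
  if P.1 ≤ p.1 ∧ q.2 = P.2 ∧ p.2 = P.2 - 1 then 1
  else if P.1 ≤ p.1 ∧ p.2 = P.2 ∧ q.2 = P.2 - 1 then -1 else 0

def ll (p q P : ℤ × ℤ) : ℤ :=
  if p.1 ≤ P.1 ∧ p.2 = P.2 ∧ q.2 = P.2 + 1 then 1
  else if p.1 ≤ P.1 ∧ q.2 = P.2 ∧ p.2 = P.2 + 1 then -1 else 0

def rho (p P : ℤ × ℤ) : ℤ := if p.2 = P.2 ∧ P.1 ≤ p.1 then 1 else 0

def gtl (p q : ℤ × ℤ) : ℤ := if q.2 < p.2 ∨ (p.2 = q.2 ∧ q.1 < p.1) then 1 else 0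

def fl (p q a b : ℤ × ℤ) : ℤ :=
  (if p = a ∧ q = b then 1 else 0) - (if p = b ∧ q = a then 1 else 0)

lemma rr_right {p q : ℤ × ℤ} (h : LStep p q) (i j : ℤ) :
    rr p q (i + 1, j) - rr p q (i, j) = - fl p q (i, j - 1) (i, j) := by
  obtain ⟨a, b⟩ := p
  obtain ⟨c, d⟩ := q
  simp only [LStep, Prod.mk.injEq] at h
  simp only [rr, fl, Prod.mk.injEq]
  split_ifs <;> omega

lemma rr_up {p q : ℤ × ℤ} (h : LStep p q) (i j : ℤ) :
    rr p q (i, j + 1) - rr p q (i, j)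
      = rho p (i, j) - rho q (i, j) + fl p q (i - 1, j) (i, j) := by
  obtain ⟨a, b⟩ := p
  obtain ⟨c, d⟩ := q
  simp only [LStep, Prod.mk.injEq] at h
  simp only [rr, fl, rho, Prod.mk.injEq]
  split_ifs <;> omega

lemma rr_add_ll {p q P : ℤ × ℤ} (h : LStep p q) (hp : p ≠ P) (hq : q ≠ P) :
    rr p q P + ll p q P = gtl q P - gtl p P := by
  obtain ⟨a, b⟩ := p
  obtain ⟨c, d⟩ := q
  obtain ⟨i, j⟩ := P
  simp only [LStep, Prod.mk.injEq] at h
  simp only [ne_eq, Prod.mk.injEq] at hp hq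
  simp only [rr, ll, gtl]
  split_ifs <;> omega

def RR (f : ℕ → ℤ × ℤ) (M : ℕ) (P : ℤ × ℤ) : ℤ := ∑ k ∈ Finset.range M, rr (f k) (f (k + 1)) P
def LL (f : ℕ → ℤ × ℤ) (M : ℕ) (P : ℤ × ℤ) : ℤ := ∑ k ∈ Finset.range M, ll (f k) (f (k + 1)) P
def FF (f : ℕ → ℤ × ℤ) (M : ℕ) (a b : ℤ × ℤ) : ℤ := ∑ k ∈ Finset.range M, fl (f k) (f (k + 1)) a b

lemma RR_right {f : ℕ → ℤ × ℤ} (hf : ∀ k, LStep (f k) (f (k + 1))) (M : ℕ) (i j : ℤ) :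
    RR f M (i + 1, j) - RR f M (i, j) = - FF f M (i, j - 1) (i, j) := by
  simp only [RR, FF, ← Finset.sum_sub_distrib, ← Finset.sum_neg_distrib]
  exact Finset.sum_congr rfl fun k _ => rr_right (hf k) i j

lemma RR_up {f : ℕ → ℤ × ℤ} (hf : ∀ k, LStep (f k) (f (k + 1))) (M : ℕ) (i j : ℤ) :
    RR f M (i, j + 1) - RR f M (i, j)
      = rho (f 0) (i, j) - rho (f M) (i, j) + FF f M (i - 1, j) (i, j) := by
  have : rho (f 0) (i, j) - rho (f M) (i, j)
      = ∑ k ∈ Finset.range M, (rho (f k) (i, j) - rho (f (k + 1)) (i, j)) :=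
    (Finset.sum_range_sub' (fun k => rho (f k) (i, j)) M).symm
  rw [this]
  simp only [RR, FF, ← Finset.sum_sub_distrib, ← Finset.sum_add_distrib]
  exact Finset.sum_congr rfl fun k _ => rr_up (hf k) i j

lemma RR_add_LL {f : ℕ → ℤ × ℤ} (hf : ∀ k, LStep (f k) (f (k + 1))) (M : ℕ) (P : ℤ × ℤ)
    (hP : ∀ k ≤ M, f k ≠ P) : RR f M P + LL f M P = gtl (f M) P - gtl (f 0) P := by
  rw [← Finset.sum_range_sub (fun k => gtl (f k) P) M]
  simp only [RR, LL, ← Finset.sum_add_distrib]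
  refine Finset.sum_congr rfl fun k hk => ?_
  have := Finset.mem_range.1 hk
  exact rr_add_ll (hf k) (hP k (by omega)) (hP (k + 1) (by omega))

lemma FF_left_zero {f : ℕ → ℤ × ℤ} {M : ℕ} {a : ℤ × ℤ} (ha : ∀ k ≤ M, f k ≠ a) (b : ℤ × ℤ) :
    FF f M a b = 0 := by
  refine Finset.sum_eq_zero fun k hk => ?_
  have := Finset.mem_range.1 hk
  simp [fl, ha k (by omega), ha (k + 1) (by omega)]

lemma fl_antisymm (p q a b : ℤ × ℤ) : fl p q b a = - fl p q a b := by
  simp [fl]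

lemma FF_antisymm (f : ℕ → ℤ × ℤ) (M : ℕ) (a b : ℤ × ℤ) : FF f M b a = - FF f M a b := by
  simp only [FF, ← Finset.sum_neg_distrib]
  exact Finset.sum_congr rfl fun k _ => fl_antisymm _ _ _ _

lemma FF_right_zero {f : ℕ → ℤ × ℤ} {M : ℕ} {a : ℤ × ℤ} (ha : ∀ k ≤ M, f k ≠ a) (b : ℤ × ℤ) :
    FF f M b a = 0 := by rw [FF_antisymm, FF_left_zero ha, neg_zero]

/-- Disjoint walks. -/
lemma star {f g : ℕ → ℤ × ℤ} (hf : ∀ k, LStep (f k) (f (k + 1)))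
    (hg : ∀ k, LStep (g k) (g (k + 1))) (M K : ℕ)
    (hd : ∀ i ≤ M, ∀ j ≤ K, f i ≠ g j) :
    RR g K (f M) - RR g K (f 0) + LL f M (g K) - LL f M (g 0) = 0 := by
  rw [← Finset.sum_range_sub (fun k => RR g K (f k)) M]
  simp only [LL, add_sub_assoc, ← Finset.sum_sub_distrib, ← Finset.sum_add_distrib]
  refine Finset.sum_eq_zero fun k hk => ?_
  have hk := Finset.mem_range.1 hk
  have h1 : ∀ j ≤ K, g j ≠ f k := fun j hj h => hd k (by omega) j hj h.symm
  have h2 : ∀ j ≤ K, g j ≠ f (k + 1) := fun j hj h => hd (k + 1) (by omega) j hj h.symm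
  have hs := hf k
  generalize f k = p at *
  generalize f (k + 1) = q at *
  obtain ⟨a, b⟩ := p
  rcases hs with rfl | rfl | rfl | rfl | rfl
  · have hz : ∀ P : ℤ × ℤ, ll (a, b) (a, b) P = 0 := by
      intro P
      simp only [ll]
      split_ifs <;> omega
    simp [hz]
  · have := RR_right hg K a b
    rw [FF_right_zero h1] at this
    simp [ll]; omega
  · have := RR_right hg K (a - 1) b
    rw [FF_right_zero h2] at this
    simp [ll] at this ⊢; omega
  · have := RR_up hg K a b
    rw [FF_right_zero h1] at this
    simp only [ll, rho] at this ⊢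
    split_ifs at this ⊢ <;> simp at * <;> omega
  · have := RR_up hg K a (b - 1)
    rw [FF_right_zero h2] at this
    simp only [ll, rho, sub_add_cancel] at this ⊢
    split_ifs at this ⊢ <;> simp at * <;> omega

theorem k33 (P : Fin 3 → Fin 3 → ℕ → ℤ × ℤ) (M : Fin 3 → Fin 3 → ℕ) (a b : Fin 3 → ℤ × ℤ)
    (hs : ∀ i j k, LStep (P i j k) (P i j (k + 1)))
    (h0 : ∀ i j, P i j 0 = a i) (h1 : ∀ i j, P i j (M i j) = b j) :
    ∃ i j k l, i ≠ k ∧ j ≠ l ∧ ∃ s ≤ M i j, ∃ r ≤ M k l, P i j s = P k l r := by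
  by_contra hcon
  push Not at hcon
  have hd : ∀ i j k l, i ≠ k → j ≠ l → RR (P k l) (M k l) (b j) - RR (P k l) (M k l) (a i)
      + LL (P i j) (M i j) (b l) - LL (P i j) (M i j) (a k) = 0 := by
    intro i j k l hik hjl
    have := star (hs i j) (hs k l) (M i j) (M k l) (hcon i j k l hik hjl)
    simpa only [h0, h1] using this
  have he : ∀ l j, j ≠ l → RR (P 1 l) (M 1 l) (b j) + LL (P 1 l) (M 1 l) (b j)
      = gtl (b l) (b j) - gtl (a 1) (b j) := by
    intro l j hjl
    have := RR_add_LL (hs 1 l) (M 1 l) (b j) (by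
      intro k hk h
      exact hcon 1 l 0 j (by decide) hjl.symm k hk (M 0 j) le_rfl (by rw [h, h1]))
    simpa only [h0, h1] using this
  have hg : ∀ l j, j ≠ l → gtl (b l) (b j) + gtl (b j) (b l) = 1 := by
    intro l j hjl
    have hne : b l ≠ b j := by
      intro h
      exact hcon 1 l 0 j (by decide) hjl.symm (M 1 l) le_rfl (M 0 j) le_rfl (by rw [h1, h1, h])
    have : (b l).1 ≠ (b j).1 ∨ (b l).2 ≠ (b j).2 := by
      by_contra h; push Not at h; exact hne (Prod.ext h.1 h.2)
    simp only [gtl]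
    split_ifs <;> omega
  have := hd 0 0 1 1 (by decide) (by decide)
  have := hd 0 0 1 2 (by decide) (by decide)
  have := hd 0 1 1 0 (by decide) (by decide)
  have := hd 0 1 1 2 (by decide) (by decide)
  have := hd 0 2 1 0 (by decide) (by decide)
  have := hd 0 2 1 1 (by decide) (by decide)
  have := hd 0 0 2 1 (by decide) (by decide)
  have := hd 0 0 2 2 (by decide) (by decide)
  have := hd 0 1 2 0 (by decide) (by decide)
  have := hd 0 1 2 2 (by decide) (by decide)
  have := hd 0 2 2 0 (by decide) (by decide)
  have := hd 0 2 2 1 (by decide) (by decide)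
  have := hd 1 0 2 1 (by decide) (by decide)
  have := hd 1 0 2 2 (by decide) (by decide)
  have := hd 1 1 2 0 (by decide) (by decide)
  have := hd 1 1 2 2 (by decide) (by decide)
  have := hd 1 2 2 0 (by decide) (by decide)
  have := hd 1 2 2 1 (by decide) (by decide)
  have := he 0 1 (by decide)
  have := he 0 2 (by decide)
  have := he 1 0 (by decide)
  have := he 1 2 (by decide)
  have := he 2 0 (by decide)
  have := he 2 1 (by decide)
  have := hg 0 1 (by decide)
  have := hg 0 2 (by decide)
  have := hg 1 2 (by decide)
  clear hd he hg h0 h1 hs hcon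
  omega


def AStep (A : Set (ℤ × ℤ)) (p q : ℤ × ℤ) : Prop := LStep p q ∧ p ∈ A ∧ q ∈ A

lemma walk_extend {A : Set (ℤ × ℤ)} {g : ℕ → ℤ × ℤ} {N : ℕ} (hg : ∀ k, LStep (g k) (g (k + 1)))
    (hA : ∀ k, g k ∈ A) (hc : ∀ k, N ≤ k → g k = g N) {q : ℤ × ℤ}
    (h : Relation.ReflTransGen (AStep A) (g N) q) :
    ∃ (g' : ℕ → ℤ × ℤ) (N' : ℕ), (∀ k, LStep (g' k) (g' (k + 1))) ∧ (∀ k, g' k ∈ A) ∧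
      (∀ k, N' ≤ k → g' k = g' N') ∧ N ≤ N' ∧ (∀ k ≤ N, g' k = g k) ∧ g' N' = q := by
  induction h with
  | refl => exact ⟨g, N, hg, hA, hc, le_rfl, fun _ _ => rfl, rfl⟩
  | @tail b c hab hbc ih =>
    obtain ⟨g', N', h1, h2, h3, h4, h5, h6⟩ := ih
    refine ⟨fun k => if k ≤ N' then g' k else c, N' + 1, ?_, ?_, ?_, by omega, ?_, ?_⟩
    · intro k
      rcases lt_trichotomy k N' with hk | hk | hk
      · simp only [if_pos hk.le, if_pos (Nat.succ_le_of_lt hk)]; exact h1 k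
      · subst hk; simp [h6]; exact hbc.1
      · simp only [if_neg (not_le.2 hk), if_neg (show ¬ k + 1 ≤ N' by omega)]; exact LStep.refl _
    · intro k
      by_cases hk : k ≤ N'
      · simp [hk, h2]
      · simp [hk]; exact hbc.2.2
    · intro k hk
      simp [show ¬ k ≤ N' by omega]
    · intro k hk
      simp only [if_pos (hk.trans h4)]; exact h5 k hk
    · simp

lemma AStep.symm {A : Set (ℤ × ℤ)} {p q : ℤ × ℤ} (h : AStep A p q) : AStep A q p :=
  ⟨h.1.symm, h.2.2, h.2.1⟩

lemma AStep_gen_symm {A : Set (ℤ × ℤ)} {p q : ℤ × ℤ} (h : Relation.ReflTransGen (AStep A) p q) :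
    Relation.ReflTransGen (AStep A) q p := by
  induction h with
  | refl => exact .refl
  | tail _ hbc ih => exact (Relation.ReflTransGen.single hbc.symm).trans ih

lemma walk_cover {A : Set (ℤ × ℤ)} {p : ℤ × ℤ} (hp : p ∈ A) (T : Finset (ℤ × ℤ))
    (hT : ∀ q ∈ T, Relation.ReflTransGen (AStep A) p q) :
    ∃ (g : ℕ → ℤ × ℤ) (N : ℕ), (∀ k, LStep (g k) (g (k + 1))) ∧ (∀ k, g k ∈ A) ∧
      (∀ k, N ≤ k → g k = g N) ∧ Relation.ReflTransGen (AStep A) p (g N) ∧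
      ∀ q ∈ T, ∃ k ≤ N, g k = q := by
  induction T using Finset.induction_on with
  | empty => exact ⟨fun _ => p, 0, fun _ => LStep.refl _, fun _ => hp, fun _ _ => rfl, .refl, by simp⟩
  | insert a T ha ih =>
    obtain ⟨g, N, h1, h2, h3, h4, h5⟩ := ih fun q hq => hT q (Finset.mem_insert_of_mem hq)
    have ha' := hT a (Finset.mem_insert_self _ _)
    obtain ⟨g', N', k1, k2, k3, k4, k5, k6⟩ := walk_extend h1 h2 h3 ((AStep_gen_symm h4).trans ha')
    refine ⟨g', N', k1, k2, k3, k6 ▸ ha', ?_⟩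
    intro q hq
    rcases Finset.mem_insert.1 hq with rfl | hq
    · exact ⟨N', le_rfl, k6⟩
    · obtain ⟨k, hk, hkq⟩ := h5 q hq
      exact ⟨k, hk.trans k4, by rw [k5 k hk, hkq]⟩

noncomputable def cell (h : ℝ) (p : ℝ × ℝ) : ℤ × ℤ := (⌊p.1 / h⌋, ⌊p.2 / h⌋)

def nearSet (h : ℝ) (f : ℝ → ℝ × ℝ) : Set (ℤ × ℤ) :=
  {q | ∃ s ∈ Set.Icc (0 : ℝ) 1, |h * q.1 - (f s).1| ≤ 2 * h ∧ |h * q.2 - (f s).2| ≤ 2 * h}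

lemma cell_bound {h : ℝ} (hh : 0 < h) (x : ℝ) :
    h * (⌊x / h⌋ : ℝ) ≤ x ∧ x < h * (⌊x / h⌋ : ℝ) + h := by
  have h1 := Int.floor_le (x / h)
  have h2 := Int.lt_floor_add_one (x / h)
  rw [le_div_iff₀ hh] at h1
  rw [div_lt_iff₀ hh] at h2
  constructor <;> linarith

lemma cell_near {h : ℝ} (hh : 0 < h) {x y : ℝ} (hxy : |x - y| < h) :
    ⌊x / h⌋ = ⌊y / h⌋ ∨ ⌊x / h⌋ = ⌊y / h⌋ + 1 ∨ ⌊x / h⌋ = ⌊y / h⌋ - 1 := by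
  obtain ⟨a1, a2⟩ := cell_bound hh x
  obtain ⟨b1, b2⟩ := cell_bound hh y
  rw [abs_lt] at hxy
  have h1 : h * (⌊x / h⌋ : ℝ) < h * ((⌊y / h⌋ + 2 : ℤ) : ℝ) := by push_cast; linarith
  have h2 : h * (⌊y / h⌋ : ℝ) < h * ((⌊x / h⌋ + 2 : ℤ) : ℝ) := by push_cast; linarith
  have h3 := Int.cast_lt.1 (lt_of_mul_lt_mul_left h1 hh.le)
  have h4 := Int.cast_lt.1 (lt_of_mul_lt_mul_left h2 hh.le)
  omega

lemma cell_mem {h : ℝ} (hh : 0 < h) (f : ℝ → ℝ × ℝ) {s : ℝ} (hs : s ∈ Set.Icc (0 : ℝ) 1) :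
    cell h (f s) ∈ nearSet h f := by
  obtain ⟨a1, a2⟩ := cell_bound hh (f s).1
  obtain ⟨b1, b2⟩ := cell_bound hh (f s).2
  refine ⟨s, hs, ?_, ?_⟩ <;> simp only [cell] <;> rw [abs_le] <;> constructor <;> linarith

lemma cell_conn_local {h : ℝ} (hh : 0 < h) (f : ℝ → ℝ × ℝ) {s s' : ℝ} (hs : s ∈ Set.Icc (0 : ℝ) 1)
    (hs' : s' ∈ Set.Icc (0 : ℝ) 1) (hd : dist (f s') (f s) < h) :
    Relation.ReflTransGen (AStep (nearSet h f)) (cell h (f s)) (cell h (f s')) := by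
  rw [Prod.dist_eq, max_lt_iff, Real.dist_eq, Real.dist_eq] at hd
  have c1 := cell_near hh hd.1
  have c2 := cell_near hh hd.2
  have hm : ((⌊(f s').1 / h⌋, ⌊(f s).2 / h⌋) : ℤ × ℤ) ∈ nearSet h f := by
    obtain ⟨a1, a2⟩ := cell_bound hh (f s').1
    obtain ⟨b1, b2⟩ := cell_bound hh (f s).2
    obtain ⟨d1, d2⟩ := hd
    rw [abs_lt] at d1
    refine ⟨s, hs, ?_, ?_⟩ <;> simp only <;> rw [abs_le] <;> constructor <;> linarith
  refine (Relation.ReflTransGen.single (b := ((⌊(f s').1 / h⌋, ⌊(f s).2 / h⌋) : ℤ × ℤ))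
    ⟨?_, cell_mem hh f hs, hm⟩).trans (Relation.ReflTransGen.single ⟨?_, hm, cell_mem hh f hs'⟩)
  all_goals
    simp only [LStep, cell, Prod.mk.injEq, true_and, and_true]
    omega

lemma cell_conn {h : ℝ} (hh : 0 < h) {f : ℝ → ℝ × ℝ} (hf : ContinuousOn f (Set.Icc (0 : ℝ) 1))
    {s s' : ℝ} (hs : s ∈ Set.Icc (0 : ℝ) 1) (hs' : s' ∈ Set.Icc (0 : ℝ) 1) :
    Relation.ReflTransGen (AStep (nearSet h f)) (cell h (f s)) (cell h (f s')) := by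
  refine (isPreconnected_Icc (a := (0 : ℝ)) (b := 1)).induction₂
    (fun s s' : ℝ => Relation.ReflTransGen (AStep (nearSet h f)) (cell h (f s)) (cell h (f s')))
    ?_ (fun x y z _ _ _ => Relation.ReflTransGen.trans)
    (fun x y _ _ => AStep_gen_symm) hs hs'
  intro x hx
  have := Metric.tendsto_nhds.1 (hf x hx) h hh
  filter_upwards [this, self_mem_nhdsWithin] with y hy hy'
  exact cell_conn_local hh f hx hy' hy

theorem discretize {V : Type*} [Fintype V] (G : SimpleGraph V) (hG : IsStringGraph G) :
    ∃ (w : V → ℕ → ℤ × ℤ) (N : ℕ), (∀ v k, LStep (w v k) (w v (k + 1))) ∧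
      ∀ u v, u ≠ v → (G.Adj u v ↔ ∃ i ≤ N, ∃ j ≤ N, w u i = w v j) := by
  classical
  obtain ⟨γ, hγ, hadj⟩ := hG
  choose f hf hfγ using hγ
  have hcomp : ∀ v, IsCompact (γ v) := fun v => by
    rw [hfγ]; exact isCompact_Icc.image_of_continuousOn (hf v)
  have hev : ∀ u v, ∀ᶠ h in nhdsWithin (0 : ℝ) (Set.Ioi 0), ¬ (γ u ∩ γ v).Nonempty →
      ∀ x ∈ γ u, ∀ y ∈ γ v, 5 * h ≤ dist x y := by
    intro u v
    by_cases hn : (γ u ∩ γ v).Nonempty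
    · simp [hn]
    · have hdis : Disjoint (γ u) (γ v) := Set.disjoint_iff_inter_eq_empty.2 (Set.not_nonempty_iff_eq_empty.1 hn)
      obtain ⟨r, hr, hr'⟩ := Metric.exists_pos_forall_lt_edist (hcomp u) (hcomp v).isClosed hdis
      have hr0 : (0 : ℝ) < r / 5 := by positivity
      filter_upwards [Ioo_mem_nhdsGT hr0] with h hh _ x hx y hy
      have := hr' x hx y hy
      rw [edist_nndist] at this
      have h2 : (r : ℝ) < dist x y := by
        rw [← coe_nndist]; exact_mod_cast this
      have := hh.2
      linarith
  have hev2 := (Filter.eventually_all.2 fun u => Filter.eventually_all.2 (hev u)).and self_mem_nhdsWithin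
  obtain ⟨h, hsep, hh⟩ := hev2.exists
  have hh : 0 < h := hh
  -- special points
  have hpt : ∀ u v, ∃ P : ℝ × ℝ, (γ u ∩ γ v).Nonempty → P ∈ γ u ∩ γ v := by
    intro u v
    by_cases hn : (γ u ∩ γ v).Nonempty
    · exact ⟨hn.some, fun _ => hn.some_mem⟩
    · exact ⟨0, fun h => absurd h hn⟩
  choose Pt hPt using hpt
  have h01 : (0 : ℝ) ∈ Set.Icc (0 : ℝ) 1 := by simp
  have hw : ∀ v, ∃ (g : ℕ → ℤ × ℤ) (N : ℕ), (∀ k, LStep (g k) (g (k + 1))) ∧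
      (∀ k, g k ∈ nearSet h (f v)) ∧ (∀ k, N ≤ k → g k = g N) ∧
      ∀ u u', Pt u u' ∈ γ v → ∃ k ≤ N, g k = cell h (Pt u u') := by
    intro v
    obtain ⟨g, N, h1, h2, h3, -, h5⟩ := walk_cover (cell_mem hh (f v) h01)
      ((Finset.univ.filter fun p : V × V => Pt p.1 p.2 ∈ γ v).image fun p => cell h (Pt p.1 p.2)) (by
        intro q hq
        simp only [Finset.mem_image, Finset.mem_filter, Finset.mem_univ, true_and] at hq
        obtain ⟨p, hp, rfl⟩ := hq
        rw [hfγ] at hp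
        obtain ⟨s, hs, hs'⟩ := hp
        rw [← hs']
        exact cell_conn hh (hf v) h01 hs)
    refine ⟨g, N, h1, h2, h3, fun u u' hu => h5 _ ?_⟩
    simp only [Finset.mem_image, Finset.mem_filter, Finset.mem_univ, true_and]
    exact ⟨(u, u'), hu, rfl⟩
  choose w Nv w1 w2 w3 w4 using hw
  refine ⟨w, Finset.univ.sup Nv, w1, fun u v huv => ?_⟩
  rw [hadj u v huv]
  constructor
  · intro hn
    obtain ⟨hu, hv⟩ := hPt u v hn
    obtain ⟨i, hi, hi'⟩ := w4 u u v hu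
    obtain ⟨j, hj, hj'⟩ := w4 v u v hv
    exact ⟨i, hi.trans (Finset.le_sup (Finset.mem_univ u)), j,
      hj.trans (Finset.le_sup (Finset.mem_univ v)), by rw [hi', hj']⟩
  · rintro ⟨i, -, j, -, hij⟩
    by_contra hn
    obtain ⟨s, hs, a1, a2⟩ := w2 u i
    obtain ⟨s', hs', b1, b2⟩ := w2 v j
    rw [hij] at a1 a2
    have := hsep u v hn (f u s) (by rw [hfγ]; exact ⟨s, hs, rfl⟩) (f v s') (by rw [hfγ]; exact ⟨s', hs', rfl⟩)
    rw [Prod.dist_eq, Real.dist_eq, Real.dist_eq] at this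
    rw [abs_le] at a1 a2 b1 b2
    rcases le_max_iff.1 this with h' | h' <;> rcases le_abs.1 h' with h' | h' <;> linarith


set_option linter.unusedSectionVars false

section PartS
variable {V : Type*} [Fintype V] [DecidableEq V]

lemma expander (G : SimpleGraph V) {δ : ℝ} (hδ : 0 < δ) (hδ' : δ ≤ 1 / 4)
    (hns : ∀ S : Finset V, IsSeparator G S → δ * Fintype.card V < S.card)
    (Z : Finset V) (hZ : (Z.card : ℝ) ≤ δ * Fintype.card V / 2) :
    ∃ U : Finset V, Disjoint U Z ∧ (Fintype.card V : ℝ) ≤ 2 * U.card ∧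
      ∀ A ⊆ U, A.Nonempty → 2 * A.card ≤ U.card →
        ∀ N : Finset V, (∀ u ∈ U, u ∉ A → (∃ a ∈ A, G.Adj a u) → u ∈ N) →
          δ / 2 * A.card < N.card := by
  classical
  set n : ℝ := ((Fintype.card V : ℕ) : ℝ) with hn
  have hn0 : 0 ≤ n := by positivity
  let C : Finset (Finset V × Finset V) := Finset.univ.filter fun p =>
    Z ⊆ p.2 ∧ Disjoint p.1 p.2 ∧ (∀ a ∈ p.1, ∀ b, b ∉ p.1 → b ∉ p.2 → ¬ G.Adj a b) ∧
      (p.2.card : ℝ) ≤ Z.card + δ / 2 * p.1.card ∧ (p.1.card : ℝ) ≤ n / 3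
  have hC : C.Nonempty := ⟨(∅, Z), by simp [C]; positivity⟩
  obtain ⟨⟨R, S⟩, hRS, hmax⟩ := Finset.exists_max_image C (fun p => p.1.card) hC
  simp only [C, Finset.mem_filter, Finset.mem_univ, true_and] at hRS
  obtain ⟨h1, h2, h3, h4, h5⟩ := hRS
  have hUc : ((R ∪ S)ᶜ.card : ℝ) = n - R.card - S.card := by
    have := Finset.card_add_card_compl (R ∪ S)
    rw [Finset.card_union_of_disjoint h2] at this
    have h' : ((R.card + S.card + (R ∪ S)ᶜ.card : ℕ) : ℝ) = n := by rw [hn, this]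
    push_cast at h'
    linarith
  have hS : (S.card : ℝ) ≤ n / 6 := by nlinarith
  refine ⟨(R ∪ S)ᶜ, ?_, ?_, ?_⟩
  · rw [Finset.disjoint_left]
    intro a ha hz
    simp only [Finset.mem_compl, Finset.mem_union, not_or] at ha
    exact ha.2 (h1 hz)
  · rw [hUc]; linarith
  · intro A hAU hA hA2 N0 hN0
    by_contra hlt
    push Not at hlt
    let N := N0.filter fun u => u ∈ (R ∪ S)ᶜ ∧ u ∉ A
    have hlt : (N.card : ℝ) ≤ δ / 2 * A.card :=
      le_trans (by exact_mod_cast Finset.card_le_card (Finset.filter_subset _ _)) hlt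
    have hAR : Disjoint R A := by
      rw [Finset.disjoint_left]
      intro a ha haA
      have := hAU haA
      simp [ha] at this
    have hAcard : ((R ∪ A).card : ℝ) = R.card + A.card := by
      rw [Finset.card_union_of_disjoint hAR]; push_cast; rfl
    have hdis : Disjoint (R ∪ A) (S ∪ N) := by
      rw [Finset.disjoint_left]
      intro a ha hb
      simp only [Finset.mem_union, N, Finset.mem_filter, Finset.mem_compl] at ha hb
      rcases ha with ha | ha
      · rcases hb with hb | hb
        · exact Finset.disjoint_left.1 h2 ha hb
        · exact hb.2.1 (Or.inl ha)
      · have h' := hAU ha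
        simp only [Finset.mem_union, Finset.mem_compl] at h'
        rcases hb with hb | hb
        · exact h' (Or.inr hb)
        · exact hb.2.2 ha
    have hno : ∀ a ∈ R ∪ A, ∀ b, b ∉ R ∪ A → b ∉ S ∪ N → ¬ G.Adj a b := by
      intro a ha b hb hb' hab
      have hbA : b ∉ A := fun h => hb (Finset.mem_union_right _ h)
      have hbR : b ∉ R := fun h => hb (Finset.mem_union_left _ h)
      have hbS : b ∉ S := fun h => hb' (Finset.mem_union_left _ h)
      rcases Finset.mem_union.1 ha with ha | ha
      · exact h3 a ha b hbR hbS hab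
      · apply hb'
        have hbU : b ∈ (R ∪ S)ᶜ := by simp [hbR, hbS]
        exact Finset.mem_union_right _ (Finset.mem_filter.2 ⟨hN0 b hbU hbA ⟨a, ha, hab⟩, hbU, hbA⟩)
    have hScard : ((S ∪ N).card : ℝ) ≤ Z.card + δ / 2 * (R ∪ A).card := by
      have : ((S ∪ N).card : ℝ) ≤ S.card + N.card := by exact_mod_cast Finset.card_union_le _ _
      rw [hAcard]; linarith
    have hA2' : 2 * (A.card : ℝ) ≤ n - R.card - S.card := by
      rw [← hUc]; exact_mod_cast hA2
    have hApos : 0 < A.card := hA.card_pos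
    by_cases hle : ((R ∪ A).card : ℝ) ≤ n / 3
    · have := hmax (R ∪ A, S ∪ N) (by
        simp only [C, Finset.mem_filter, Finset.mem_univ, true_and]
        exact ⟨h1.trans Finset.subset_union_left, hdis, hno, hScard, hle⟩)
      simp only [Finset.card_union_of_disjoint hAR] at this
      omega
    · push Not at hle
      have hSpos : (0 : ℝ) ≤ S.card := by positivity
      have hRAn : ((R ∪ A).card : ℝ) ≤ n := by
        rw [hn]; exact_mod_cast Finset.card_le_univ _
      have hsep : IsSeparator G (S ∪ N) := by
        refine ⟨R ∪ A, ((S ∪ N) ∪ (R ∪ A))ᶜ, ?_, hdis.symm, ?_, ?_, ?_, ?_, ?_⟩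
        · exact Finset.union_compl _
        · rw [Finset.disjoint_left]; intro a ha hb; simp at ha hb; tauto
        · rw [Finset.disjoint_left]; intro a ha hb; simp at ha hb; tauto
        · rw [hAcard]; linarith
        · have := Finset.card_add_card_compl ((S ∪ N) ∪ (R ∪ A))
          have h6 : ((R ∪ A).card) ≤ ((S ∪ N) ∪ (R ∪ A)).card :=
            Finset.card_le_card Finset.subset_union_right
          have h7 : ((((S ∪ N) ∪ (R ∪ A)).card + ((S ∪ N) ∪ (R ∪ A))ᶜ.card : ℕ) : ℝ) = n := by
            rw [hn, this]
          have h8 : ((R ∪ A).card : ℝ) ≤ ((S ∪ N) ∪ (R ∪ A)).card := by exact_mod_cast h6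
          push_cast at h7
          linarith
        · intro u hu v hv
          simp only [Finset.mem_compl] at hv
          exact hno u hu v (fun h => hv (Finset.mem_union_right _ h)) (fun h => hv (Finset.mem_union_left _ h))
      have := hns _ hsep
      nlinarith

/-- union of the discrete curves of the vertices in `P`. -/
def curveSet (w : V → ℕ → ℤ × ℤ) (N : ℕ) (P : Finset V) : Set (ℤ × ℤ) :=
  {q | ∃ x ∈ P, ∃ i ≤ N, q = w x i}

def Link (w : V → ℕ → ℤ × ℤ) (N : ℕ) (P : Finset V) (u v : V) : Prop :=
  Relation.ReflTransGen (AStep (curveSet w N P)) (w u 0) (w v 0)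

lemma Link.mono {w : V → ℕ → ℤ × ℤ} {N : ℕ} {P Q : Finset V} (h : P ⊆ Q) {u v : V}
    (hl : Link w N P u v) : Link w N Q u v := by
  refine Relation.ReflTransGen.mono ?_ _ _ hl
  rintro a b ⟨h1, ⟨x, hx, h2⟩, ⟨y, hy, h3⟩⟩
  exact ⟨h1, ⟨x, h hx, h2⟩, ⟨y, h hy, h3⟩⟩

lemma Link.symm {w : V → ℕ → ℤ × ℤ} {N : ℕ} {P : Finset V} {u v : V}
    (hl : Link w N P u v) : Link w N P v u := AStep_gen_symm hl

lemma link_along {w : V → ℕ → ℤ × ℤ} {N : ℕ} (hw : ∀ v k, LStep (w v k) (w v (k + 1)))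
    {P : Finset V} {u : V} (hu : u ∈ P) {i : ℕ} (hi : i ≤ N) :
    Relation.ReflTransGen (AStep (curveSet w N P)) (w u 0) (w u i) := by
  induction i with
  | zero => exact .refl
  | succ k ih =>
    exact (ih (by omega)).tail ⟨hw u k, ⟨u, hu, k, by omega, rfl⟩, ⟨u, hu, k + 1, hi, rfl⟩⟩

lemma link_adj {w : V → ℕ → ℤ × ℤ} {N : ℕ} (hw : ∀ v k, LStep (w v k) (w v (k + 1)))
    {P : Finset V} {u v : V} (hu : u ∈ P) (hv : v ∈ P)
    (h : ∃ i ≤ N, ∃ j ≤ N, w u i = w v j) : Link w N P u v := by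
  obtain ⟨i, hi, j, hj, hij⟩ := h
  refine (link_along hw hu hi).trans ?_
  rw [hij]
  exact AStep_gen_symm (link_along hw hv hj)

lemma ball_link (G : SimpleGraph V) {w : V → ℕ → ℤ × ℤ} {N : ℕ}
    (hw : ∀ v k, LStep (w v k) (w v (k + 1)))
    (hadj : ∀ u v, u ≠ v → (G.Adj u v ↔ ∃ i ≤ N, ∃ j ≤ N, w u i = w v j))
    (U : Finset V) {φ : ℝ} (hφ : 0 < φ)
    (hexp : ∀ A ⊆ U, A.Nonempty → 2 * A.card ≤ U.card →
        ∀ N : Finset V, (∀ u ∈ U, u ∉ A → (∃ a ∈ A, G.Adj a u) → u ∈ N) →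
          φ * A.card < N.card) (u : V) (hu : u ∈ U) (r : ℕ) :
    ∃ B ⊆ U, u ∈ B ∧ (∀ v ∈ B, ∃ P ⊆ U, u ∈ P ∧ v ∈ P ∧ P.card ≤ r + 1 ∧ Link w N P u v) ∧
      (U.card < 2 * B.card ∨ (1 + φ) ^ r ≤ B.card) := by
  classical
  induction r with
  | zero =>
    refine ⟨{u}, by simpa using hu, by simp, ?_, by simp⟩
    intro v hv
    rw [Finset.mem_singleton] at hv
    subst hv
    exact ⟨{v}, by simpa using hu, by simp, by simp, by simp, .refl⟩
  | succ r ih =>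
    obtain ⟨B, hBU, huB, hB, hgrow⟩ := ih
    let M := (U \ B).filter fun v => ∃ a ∈ B, G.Adj a v
    refine ⟨B ∪ M, ?_, Finset.mem_union_left _ huB, ?_, ?_⟩
    · refine Finset.union_subset hBU ?_
      exact (Finset.filter_subset _ _).trans Finset.sdiff_subset
    · intro v hv
      rcases Finset.mem_union.1 hv with hv | hv
      · obtain ⟨P, h1, h2, h2', h3, h4⟩ := hB v hv
        exact ⟨P, h1, h2, h2', by omega, h4⟩
      · simp only [M, Finset.mem_filter, Finset.mem_sdiff] at hv
        obtain ⟨⟨hvU, hvB⟩, a, ha, hav⟩ := hv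
        obtain ⟨P, h1, h2, h2', h3, h4⟩ := hB a ha
        refine ⟨insert v P, ?_, by simp [h2], by simp, ?_, ?_⟩
        · intro x hx
          rcases Finset.mem_insert.1 hx with rfl | hx
          · exact hvU
          · exact h1 hx
        · exact (Finset.card_insert_le _ _).trans (by omega)
        · refine Relation.ReflTransGen.trans (h4.mono (Finset.subset_insert _ _)) ?_
          exact link_adj hw (by simp [h2']) (by simp) ((hadj a v hav.ne).1 hav)
    · have hdis : Disjoint B M := by
        rw [Finset.disjoint_left]; intro a ha hb
        simp [M] at hb; exact hb.1.2 ha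
      rw [Finset.card_union_of_disjoint hdis]
      by_cases hbig : U.card < 2 * B.card
      · left; omega
      · right
        have h1 := hgrow.resolve_left hbig
        have h2 := hexp B hBU ⟨u, huB⟩ (by omega) M (by
          intro v hv hvB hva
          simp only [M, Finset.mem_filter, Finset.mem_sdiff]
          exact ⟨⟨hv, hvB⟩, hva⟩)
        push_cast
        rw [pow_succ]
        nlinarith

lemma diam_link (G : SimpleGraph V) {w : V → ℕ → ℤ × ℤ} {N : ℕ}
    (hw : ∀ v k, LStep (w v k) (w v (k + 1)))
    (hadj : ∀ u v, u ≠ v → (G.Adj u v ↔ ∃ i ≤ N, ∃ j ≤ N, w u i = w v j))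
    (U : Finset V) {φ : ℝ} (hφ : 0 < φ)
    (hexp : ∀ A ⊆ U, A.Nonempty → 2 * A.card ≤ U.card →
        ∀ N : Finset V, (∀ u ∈ U, u ∉ A → (∃ a ∈ A, G.Adj a u) → u ∈ N) →
          φ * A.card < N.card) (r : ℕ) (hr : (Fintype.card V : ℝ) ≤ (1 + φ) ^ r)
    (u v : V) (hu : u ∈ U) (hv : v ∈ U) :
    ∃ P ⊆ U, u ∈ P ∧ P.card ≤ 2 * r + 2 ∧ Link w N P u v := by
  classical
  have key : ∀ u ∈ U, ∃ B ⊆ U, (∀ v ∈ B, ∃ P ⊆ U, u ∈ P ∧ v ∈ P ∧ P.card ≤ r + 1 ∧ Link w N P u v) ∧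
      U.card < 2 * B.card := by
    intro u hu
    obtain ⟨B, h1, h2, h3, h4⟩ := ball_link G hw hadj U hφ hexp u hu r
    refine ⟨B, h1, h3, ?_⟩
    rcases h4 with h4 | h4
    · exact h4
    · have h5 : (Fintype.card V : ℝ) ≤ B.card := hr.trans h4
      have h6 : Fintype.card V ≤ B.card := by exact_mod_cast h5
      have h7 : 0 < B.card := Finset.card_pos.2 ⟨u, h2⟩
      have h8 := Finset.card_le_univ U
      omega
  obtain ⟨B, hB, hBP, hBc⟩ := key u hu
  obtain ⟨B', hB', hBP', hBc'⟩ := key v hv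
  have : ¬ Disjoint B B' := by
    intro h
    have h1 := Finset.card_union_of_disjoint h
    have h2 := Finset.card_le_card (Finset.union_subset hB hB')
    omega
  rw [Finset.not_disjoint_iff] at this
  obtain ⟨x, hx, hx'⟩ := this
  obtain ⟨P, p1, p2, -, p3, p4⟩ := hBP x hx
  obtain ⟨Q, q1, q2, -, q3, q4⟩ := hBP' x hx'
  refine ⟨P ∪ Q, Finset.union_subset p1 q1, Finset.mem_union_left _ p2, ?_, ?_⟩
  · exact (Finset.card_union_le _ _).trans (by omega)
  · exact Relation.ReflTransGen.trans (p4.mono Finset.subset_union_left)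
      (q4.mono Finset.subset_union_right).symm

lemma routing (G : SimpleGraph V) {w : V → ℕ → ℤ × ℤ} {N : ℕ}
    (hw : ∀ v k, LStep (w v k) (w v (k + 1)))
    (hadj : ∀ u v, u ≠ v → (G.Adj u v ↔ ∃ i ≤ N, ∃ j ≤ N, w u i = w v j))
    {δ : ℝ} (hδ : 0 < δ) (hδ' : δ ≤ 1 / 4)
    (hns : ∀ S : Finset V, IsSeparator G S → δ * Fintype.card V < S.card)
    (r lam : ℕ) (hr : (Fintype.card V : ℝ) ≤ (1 + δ / 2) ^ r)
    (hlam : 2 * (Fintype.card V : ℝ) * (2 * r + 2) ≤ δ * lam) (hlam0 : 0 < lam) :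
    ∃ (U : Finset V) (Q : V × V → Finset V), (Fintype.card V : ℝ) ≤ 2 * U.card ∧
      (∀ u ∈ U, ∀ v ∈ U, u ∈ Q (u, v) ∧ Link w N (Q (u, v)) u v) ∧
      ∀ x, (Finset.univ.filter fun p => x ∈ Q p).card ≤ lam := by
  classical
  let C : Finset (V × V → Finset V) := Finset.univ.filter fun Q =>
    (∀ p, Q p = ∅ ∨ ((Q p).card ≤ 2 * r + 2 ∧ p.1 ∈ Q p ∧ Link w N (Q p) p.1 p.2)) ∧
    ∀ x, (Finset.univ.filter fun p => x ∈ Q p).card ≤ lam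
  have hC : C.Nonempty := ⟨fun _ => ∅, by simp [C]⟩
  obtain ⟨Q, hQ, hmax⟩ := Finset.exists_max_image C
    (fun Q => (Finset.univ.filter fun p => Q p ≠ ∅).card) hC
  simp only [C, Finset.mem_filter, Finset.mem_univ, true_and] at hQ hmax
  obtain ⟨hQ1, hQ2⟩ := hQ
  let Z : Finset V := Finset.univ.filter fun x => lam ≤ (Finset.univ.filter fun p => x ∈ Q p).card
  have hZ1 : Z.card * lam ≤ Fintype.card V * Fintype.card V * (2 * r + 2) := by
    calc Z.card * lam ≤ ∑ x ∈ Z, (Finset.univ.filter fun p => x ∈ Q p).card := by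
          rw [← smul_eq_mul]
          exact Finset.card_nsmul_le_sum _ _ _ fun x hx => by simpa [Z] using hx
      _ ≤ ∑ x, (Finset.univ.filter fun p => x ∈ Q p).card :=
          Finset.sum_le_univ_sum_of_nonneg fun _ => Nat.zero_le _
      _ = ∑ p, (Q p).card := by
          have := Finset.sum_card_bipartiteAbove_eq_sum_card_bipartiteBelow
            (s := (Finset.univ : Finset V)) (t := (Finset.univ : Finset (V × V))) (fun x p => x ∈ Q p)
          simpa [Finset.bipartiteAbove, Finset.bipartiteBelow] using this
      _ ≤ ∑ p : V × V, (2 * r + 2) := Finset.sum_le_sum fun p _ => by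
          rcases hQ1 p with h | h
          · simp [h]
          · exact h.1
      _ = _ := by simp [Fintype.card_prod]
  have hZ2 : (Z.card : ℝ) ≤ δ * Fintype.card V / 2 := by
    have h1 : (Z.card : ℝ) * lam ≤ Fintype.card V * Fintype.card V * (2 * r + 2) := by
      exact_mod_cast hZ1
    have h2 : (0 : ℝ) < lam := by exact_mod_cast hlam0
    have hn : (0 : ℝ) ≤ Fintype.card V := by positivity
    have h3 : (Z.card : ℝ) * lam ≤ (δ * Fintype.card V / 2) * lam := by nlinarith
    exact le_of_mul_le_mul_right h3 h2
  obtain ⟨U, hUZ, hUn, hUe⟩ := expander G hδ hδ' hns Z hZ2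
  refine ⟨U, Q, hUn, ?_, hQ2⟩
  intro u hu v hv
  rcases hQ1 (u, v) with h | h
  swap
  · exact h.2
  exfalso
  obtain ⟨P, hPU, huP, hPc, hPl⟩ := diam_link G hw hadj U (by positivity) hUe r hr u v hu hv
  have hnew := hmax (Function.update Q (u, v) P) ⟨?_, ?_⟩
  · have hlt : (Finset.univ.filter fun p => Q p ≠ ∅).card <
        (Finset.univ.filter fun p => Function.update Q (u, v) P p ≠ ∅).card := by
      apply Finset.card_lt_card
      rw [Finset.ssubset_iff]
      refine ⟨(u, v), by simp [h], ?_⟩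
      intro p hp
      simp only [Finset.mem_insert, Finset.mem_filter, Finset.mem_univ, true_and] at hp ⊢
      by_cases hpe : p = (u, v)
      · subst hpe; simp; exact Finset.ne_empty_of_mem huP
      · rw [Function.update_of_ne hpe]; exact hp.resolve_left hpe
    omega
  · intro p
    by_cases hpe : p = (u, v)
    · subst hpe; right; simpa using ⟨hPc, huP, hPl⟩
    · rw [Function.update_of_ne hpe]; exact hQ1 p
  · intro x
    by_cases hx : x ∈ P
    · have hxZ : x ∉ Z := Finset.disjoint_left.1 hUZ (hPU hx)
      simp only [Z, Finset.mem_filter, Finset.mem_univ, true_and, not_le] at hxZ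
      have hsub : (Finset.univ.filter fun p => x ∈ Function.update Q (u, v) P p) ⊆
          insert (u, v) (Finset.univ.filter fun p => x ∈ Q p) := by
        intro p hp
        simp only [Finset.mem_insert, Finset.mem_filter, Finset.mem_univ, true_and] at hp ⊢
        by_cases hpe : p = (u, v)
        · left; exact hpe
        · rw [Function.update_of_ne hpe] at hp; right; exact hp
      have := Finset.card_le_card hsub
      have := Finset.card_insert_le (u, v) (Finset.univ.filter fun p => x ∈ Q p)
      omega
    · refine (Finset.card_le_card ?_).trans (hQ2 x)
      intro p hp
      simp only [Finset.mem_filter, Finset.mem_univ, true_and] at hp ⊢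
      by_cases hpe : p = (u, v)
      · subst hpe; simp [hx] at hp
      · rwa [Function.update_of_ne hpe] at hp

end PartS


set_option linter.unusedSectionVars false

section PartS2
variable {V : Type*} [Fintype V] [DecidableEq V]

lemma link_walk {w : V → ℕ → ℤ × ℤ} {N : ℕ} {P : Finset V} {u v : V} (h : Link w N P u v)
    (hP : w u 0 ∈ curveSet w N P) :
    ∃ (g : ℕ → ℤ × ℤ) (M : ℕ), (∀ k, LStep (g k) (g (k + 1))) ∧ g 0 = w u 0 ∧ g M = w v 0 ∧
      ∀ k, g k ∈ curveSet w N P := by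
  obtain ⟨g, M, h1, h2, h3, h4, h5, h6⟩ := walk_extend (A := curveSet w N P) (g := fun _ => w u 0) (N := 0)
    (fun _ => LStep.refl _) (fun _ => hP) (fun _ _ => rfl) h
  exact ⟨g, M, h1, h5 0 le_rfl, h6, h2⟩

lemma third_cover : ∀ i k : Fin 3, i ≠ k → ∀ m : Fin 3, m = i ∨ m = k ∨ m = -(i + k) := by decide

lemma crossing (G : SimpleGraph V) {w : V → ℕ → ℤ × ℤ} {N : ℕ}
    (hadj : ∀ u v, u ≠ v → (G.Adj u v ↔ ∃ i ≤ N, ∃ j ≤ N, w u i = w v j))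
    (U : Finset V) (Q : V × V → Finset V) (lam : ℕ)
    (hl : ∀ u ∈ U, ∀ v ∈ U, Link w N (Q (u, v)) u v)
    (hm : ∀ u ∈ U, ∀ v ∈ U, w u 0 ∈ curveSet w N (Q (u, v)))
    (hc : ∀ x, (Finset.univ.filter fun p => x ∈ Q p).card ≤ lam)
    [DecidableRel G.Adj] :
    U.card ^ 6 ≤ 81 * ((Finset.univ.filter fun p : V × V => p.1 = p.2 ∨ G.Adj p.1 p.2).card * (lam * lam)) *
      (Fintype.card V * Fintype.card V) := by
  classical
  let Cr : Finset ((V × V) × (V × V)) := Finset.univ.filter fun pq =>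
    ∃ x ∈ Q pq.1, ∃ y ∈ Q pq.2, x = y ∨ G.Adj x y
  have hCr : Cr.card ≤ (Finset.univ.filter fun p : V × V => p.1 = p.2 ∨ G.Adj p.1 p.2).card * (lam * lam) := by
    have hsub : Cr ⊆ (Finset.univ.filter fun p : V × V => p.1 = p.2 ∨ G.Adj p.1 p.2).biUnion fun xy =>
        (Finset.univ.filter fun p => xy.1 ∈ Q p) ×ˢ (Finset.univ.filter fun p => xy.2 ∈ Q p) := by
      intro pq hpq
      simp only [Cr, Finset.mem_filter, Finset.mem_univ, true_and] at hpq
      obtain ⟨x, hx, y, hy, hxy⟩ := hpq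
      simp only [Finset.mem_biUnion, Finset.mem_filter, Finset.mem_univ, true_and, Finset.mem_product]
      exact ⟨(x, y), hxy, hx, hy⟩
    refine (Finset.card_le_card hsub).trans ?_
    refine Finset.card_biUnion_le_card_mul _ _ _ fun xy _ => ?_
    rw [Finset.card_product]
    exact Nat.mul_le_mul (hc _) (hc _)
  have hex : ∀ ab : (Fin 3 → U) × (Fin 3 → U), ∃ i j k l : Fin 3, i ≠ k ∧ j ≠ l ∧
      (((ab.1 i : V), (ab.2 j : V)), ((ab.1 k : V), (ab.2 l : V))) ∈ Cr := by
    rintro ⟨a, b⟩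
    have hwk := fun i j => link_walk (hl (a i) (a i).2 (b j) (b j).2) (hm (a i) (a i).2 (b j) (b j).2)
    choose P M h1 h2 h3 h4 using hwk
    obtain ⟨i, j, k, l, hik, hjl, s, hs, r, hr, hsr⟩ := k33 P M (fun i => w (a i) 0) (fun j => w (b j) 0) h1 h2 h3
    refine ⟨i, j, k, l, hik, hjl, ?_⟩
    simp only [Cr, Finset.mem_filter, Finset.mem_univ, true_and]
    obtain ⟨x, hx, ix, hix, hx'⟩ := h4 i j s
    obtain ⟨y, hy, iy, hiy, hy'⟩ := h4 k l r
    refine ⟨x, hx, y, hy, ?_⟩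
    by_cases hxy : x = y
    · left; exact hxy
    · right
      rw [hadj x y hxy]
      exact ⟨ix, hix, iy, hiy, by rw [← hx', ← hy', hsr]⟩
  choose i j k l hik hjl hcr using hex
  let F : (Fin 3 → U) × (Fin 3 → U) →
      (((Fin 3 × Fin 3) × (Fin 3 × Fin 3)) × ((V × V) × (V × V))) × (V × V) := fun ab =>
    ((((i ab, j ab), (k ab, l ab)), (((ab.1 (i ab) : V), (ab.2 (j ab) : V)), ((ab.1 (k ab) : V), (ab.2 (l ab) : V)))),
      ((ab.1 (-(i ab + k ab)) : V), (ab.2 (-(j ab + l ab)) : V)))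
  have hinj : Function.Injective F := by
    intro ab cd h
    simp only [F, Prod.mk.injEq] at h
    obtain ⟨⟨⟨⟨h1, h2⟩, h3, h4⟩, ⟨h5, h6⟩, h7, h8⟩, h9, h10⟩ := h
    rw [← h1] at h5; rw [← h2] at h6; rw [← h3] at h7; rw [← h4] at h8
    rw [← h1, ← h3] at h9; rw [← h2, ← h4] at h10
    refine Prod.ext (funext fun m => ?_) (funext fun m => ?_)
    · rcases third_cover _ _ (hik ab) m with rfl | rfl | rfl
      · exact Subtype.ext h5
      · exact Subtype.ext h7
      · exact Subtype.ext h9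
    · rcases third_cover _ _ (hjl ab) m with rfl | rfl | rfl
      · exact Subtype.ext h6
      · exact Subtype.ext h8
      · exact Subtype.ext h10
  have hcard := Finset.card_le_card_of_injOn (s := (Finset.univ : Finset ((Fin 3 → U) × (Fin 3 → U))))
    (t := ((Finset.univ : Finset ((Fin 3 × Fin 3) × (Fin 3 × Fin 3))) ×ˢ Cr) ×ˢ (Finset.univ : Finset (V × V))) F
    (fun ab _ => by simp only [F, Finset.coe_product, Set.mem_prod]; simpa using hcr ab) hinj.injOn
  simp only [Finset.card_product, Finset.card_univ, Fintype.card_prod, Fintype.card_fun,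
    Fintype.card_fin, Fintype.card_coe] at hcard
  calc U.card ^ 6 = U.card ^ 3 * U.card ^ 3 := by ring
    _ ≤ _ := hcard
    _ ≤ _ := by
      apply Nat.mul_le_mul_right
      exact Nat.mul_le_mul (by norm_num) hCr

theorem partS (G : SimpleGraph V) [DecidableRel G.Adj] {w : V → ℕ → ℤ × ℤ} {N : ℕ}
    (hw : ∀ v k, LStep (w v k) (w v (k + 1)))
    (hadj : ∀ u v, u ≠ v → (G.Adj u v ↔ ∃ i ≤ N, ∃ j ≤ N, w u i = w v j))
    {δ : ℝ} (hδ : 0 < δ) (hδ' : δ ≤ 1 / 4)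
    (hns : ∀ S : Finset V, IsSeparator G S → δ * Fintype.card V < S.card)
    (L : ℕ) (hL : 1 ≤ L) (hLn : Fintype.card V ≤ 2 ^ L) (hV : 1 ≤ Fintype.card V) :
    (Fintype.card V : ℝ) ^ 2 * δ ^ 4 ≤ 1200000 * L ^ 2 *
      ((Finset.univ.filter fun p : V × V => p.1 = p.2 ∨ G.Adj p.1 p.2).card : ℝ) := by
  set n : ℝ := ((Fintype.card V : ℕ) : ℝ) with hn
  have hn1 : (1 : ℝ) ≤ n := by rw [hn]; exact_mod_cast hV
  have hL1 : (1 : ℝ) ≤ L := by exact_mod_cast hL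
  set r : ℕ := ⌈2 / δ⌉₊ * L with hrdef
  have hceil : 2 / δ ≤ (⌈2 / δ⌉₊ : ℝ) := Nat.le_ceil _
  have hceil' : (⌈2 / δ⌉₊ : ℝ) < 2 / δ + 1 := Nat.ceil_lt_add_one (by positivity)
  have hr : n ≤ (1 + δ / 2) ^ r := by
    have h1 : (2 : ℝ) ≤ (1 + δ / 2) ^ ⌈2 / δ⌉₊ := by
      have := one_add_mul_le_pow (a := δ / 2) (by linarith) ⌈2 / δ⌉₊
      refine le_trans ?_ this
      have : 2 / δ * (δ / 2) ≤ (⌈2 / δ⌉₊ : ℝ) * (δ / 2) := by gcongr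
      have h3 : 2 / δ * (δ / 2) = 1 := by field_simp
      linarith
    calc n ≤ 2 ^ L := by rw [hn]; exact_mod_cast hLn
      _ ≤ ((1 + δ / 2) ^ ⌈2 / δ⌉₊) ^ L := by gcongr
      _ = _ := by rw [← pow_mul]
  set X : ℝ := L / δ with hX
  have hX4 : 4 ≤ X := by
    rw [hX, le_div_iff₀ hδ]; nlinarith
  have hr2 : 2 * (r : ℝ) + 2 ≤ 7 * X := by
    have h1 : (r : ℝ) ≤ (2 / δ + 1) * L := by
      rw [hrdef]; push_cast; gcongr
    have h2 : (2 / δ + 1) * (L : ℝ) = 2 * X + L := by rw [hX]; ring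
    have h3 : (L : ℝ) ≤ X / 4 := by
      rw [hX, le_div_iff₀ (by norm_num), le_div_iff₀ hδ]; nlinarith
    linarith
  set lam : ℕ := ⌈2 * n * (2 * r + 2) / δ⌉₊ with hlamdef
  have hlpos : 0 < 2 * n * (2 * r + 2) / δ := by positivity
  have hlam : 2 * n * (2 * r + 2) ≤ δ * lam := by
    have := Nat.le_ceil (2 * n * (2 * r + 2) / δ)
    rw [div_le_iff₀ hδ] at this
    linarith
  have hlam0 : 0 < lam := Nat.ceil_pos.2 hlpos
  have hlamle : (lam : ℝ) ≤ 15 * n * X / δ := by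
    have h1 := Nat.ceil_lt_add_one hlpos.le
    have h2 : 2 * n * (2 * r + 2) / δ ≤ 14 * n * X / δ := by
      apply div_le_div_of_nonneg_right _ hδ.le
      nlinarith
    have h3 : 1 ≤ n * X / δ := by
      rw [le_div_iff₀ hδ]; nlinarith
    have h4 : 15 * n * X / δ = 14 * n * X / δ + n * X / δ := by ring
    rw [h4]; linarith
  obtain ⟨U, Q, hU, hl, hc⟩ := routing G hw hadj hδ hδ' hns r lam hr hlam hlam0
  have hcross := crossing G hadj U Q lam (fun u hu v hv => (hl u hu v hv).2)
    (fun u hu v hv => ⟨u, (hl u hu v hv).1, 0, Nat.zero_le _, rfl⟩) hc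
  set D : ℕ := (Finset.univ.filter fun p : V × V => p.1 = p.2 ∨ G.Adj p.1 p.2).card with hD
  have hcr : (U.card : ℝ) ^ 6 ≤ 81 * (D * (lam * lam)) * (n * n) := by
    rw [hn]; exact_mod_cast hcross
  have h6 : (n / 2) ^ 6 ≤ (U.card : ℝ) ^ 6 := by
    apply pow_le_pow_left₀ (by positivity); linarith
  have hll : (lam : ℝ) * lam ≤ (15 * n * X / δ) * (15 * n * X / δ) := by gcongr
  have h7 : n ^ 6 / 64 ≤ 81 * (D * ((15 * n * X / δ) * (15 * n * X / δ))) * (n * n) := by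
    calc n ^ 6 / 64 = (n / 2) ^ 6 := by ring
      _ ≤ 81 * (D * (lam * lam)) * (n * n) := h6.trans hcr
      _ ≤ _ := by gcongr
  have h8 : (81 * (D * ((15 * n * X / δ) * (15 * n * X / δ))) * (n * n) : ℝ)
      = n ^ 4 * (18225 * L ^ 2 * D / δ ^ 4) := by
    rw [hX]; field_simp; ring
  rw [h8] at h7
  have h9 : n ^ 4 * (n ^ 2 / 64) ≤ n ^ 4 * (18225 * L ^ 2 * D / δ ^ 4) := by
    calc n ^ 4 * (n ^ 2 / 64) = n ^ 6 / 64 := by ring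
      _ ≤ _ := h7
  have h10 := le_of_mul_le_mul_left h9 (by positivity)
  rw [le_div_iff₀ (by positivity)] at h10
  have h11 : (0 : ℝ) ≤ L ^ 2 * D := by positivity
  nlinarith

end PartS2


def nb (v : ℤ × ℤ) (d : Fin 4) : ℤ × ℤ :=
  ![(v.1 + 1, v.2), (v.1, v.2 + 1), (v.1 - 1, v.2), (v.1, v.2 - 1)] d
def Lc (v : ℤ × ℤ) (d : Fin 4) : ℤ × ℤ :=
  ![(v.1 + 1, v.2 + 1), (v.1, v.2 + 1), (v.1, v.2), (v.1 + 1, v.2)] d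
def Rc (v : ℤ × ℤ) (d : Fin 4) : ℤ × ℤ :=
  ![(v.1 + 1, v.2), (v.1 + 1, v.2 + 1), (v.1, v.2 + 1), (v.1, v.2)] d

lemma nb_inj (v : ℤ × ℤ) {d d' : Fin 4} (h : nb v d = nb v d') : d = d' := by
  fin_cases d <;> fin_cases d' <;> simp [nb] at h ⊢ <;> omega

lemma nb_nb (v : ℤ × ℤ) (d : Fin 4) : nb (nb v d) (d + 2) = v := by
  fin_cases d <;> simp [nb]

lemma Lc_nb (v : ℤ × ℤ) (d : Fin 4) : Lc (nb v d) (d + 2) = Rc v d := by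
  fin_cases d <;> simp [nb, Lc, Rc]

lemma Rc_nb (v : ℤ × ℤ) (d : Fin 4) : Rc (nb v d) (d + 2) = Lc v d := by
  fin_cases d <;> simp [nb, Lc, Rc]

lemma Rc_eq (v : ℤ × ℤ) (d : Fin 4) : Rc v d = Lc v (d - 1) := by
  fin_cases d <;> rfl

lemma LStep.exists_nb {p q : ℤ × ℤ} (h : LStep p q) (hne : q ≠ p) : ∃ d, q = nb p d := by
  rcases h with h | h | h | h | h
  · exact absurd h hne
  · exact ⟨0, h⟩
  · exact ⟨2, h⟩
  · exact ⟨1, h⟩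
  · exact ⟨3, h⟩

lemma LStep.exists_corner {p q : ℤ × ℤ} (h : LStep p q) : ∃ d d', Lc p d = Lc q d' := by
  by_cases hne : q = p
  · subst hne; exact ⟨0, 0, rfl⟩
  · obtain ⟨d, rfl⟩ := h.exists_nb hne
    exact ⟨d - 1, d + 2, by rw [Lc_nb, Rc_eq]⟩

lemma stokes (α : Finset (ℤ × ℤ)) (Φ : ℤ × ℤ → ℤ) :
    ∑ v ∈ α, ∑ d : Fin 4, (if nb v d ∈ α then 0 else Φ (Lc v d) - Φ (Rc v d)) = 0 := by
  have h1 : ∀ v, ∑ d : Fin 4, (Φ (Lc v d) - Φ (Rc v d)) = 0 := by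
    intro v
    simp only [Fin.sum_univ_four, Lc, Rc]
    simp
  have h2 : ∑ v ∈ α, ∑ d : Fin 4, (if nb v d ∈ α then Φ (Lc v d) - Φ (Rc v d) else 0) = 0 := by
    rw [← Finset.sum_product', ← Finset.sum_filter]
    refine Finset.sum_involution (fun p _ => (nb p.1 p.2, p.2 + 2)) ?_ ?_ ?_ ?_
    · rintro ⟨v, d⟩ h
      simp only [Lc_nb, Rc_nb]; ring
    · rintro ⟨v, d⟩ h _ h3
      simp only [Prod.mk.injEq] at h3
      revert h3
      fin_cases d <;> simp
    · rintro ⟨v, d⟩ h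
      simp only [Finset.mem_filter, Finset.mem_product, Finset.mem_univ, and_true] at h ⊢
      exact ⟨h.2, by rw [nb_nb]; exact h.1⟩
    · rintro ⟨v, d⟩ h
      simp only [nb_nb, Prod.mk.injEq, true_and]
      fin_cases d <;> rfl
  have h3 : ∑ v ∈ α, ∑ d : Fin 4, (if nb v d ∈ α then 0 else Φ (Lc v d) - Φ (Rc v d))
      = ∑ v ∈ α, ∑ d : Fin 4, (Φ (Lc v d) - Φ (Rc v d)) -
        ∑ v ∈ α, ∑ d : Fin 4, (if nb v d ∈ α then Φ (Lc v d) - Φ (Rc v d) else 0) := by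
    rw [← Finset.sum_sub_distrib]
    refine Finset.sum_congr rfl fun v _ => ?_
    rw [← Finset.sum_sub_distrib]
    refine Finset.sum_congr rfl fun d _ => ?_
    split_ifs <;> ring
  rw [h3, h2, Finset.sum_eq_zero fun v _ => h1 v]; rfl

/-- `g` is a potential for the flow `F`. -/
def Pot (g : ℤ × ℤ → ℤ) (F : ℤ × ℤ → ℤ × ℤ → ℤ) : Prop :=
  ∀ v d, g (Lc v d) - g (Rc v d) = F v (nb v d)

lemma pot_of {g : ℤ × ℤ → ℤ} {F : ℤ × ℤ → ℤ × ℤ → ℤ}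
    (h1 : ∀ i j, g (i + 1, j) - g (i, j) = - F (i, j - 1) (i, j))
    (h2 : ∀ i j, g (i, j + 1) - g (i, j) = F (i - 1, j) (i, j))
    (h3 : ∀ a b, F b a = - F a b) : Pot g F := by
  rintro ⟨i, j⟩ d
  fin_cases d
  · have := h2 (i + 1) j
    simpa [Lc, Rc, nb] using this
  · have := h1 i (j + 1)
    simp only [add_sub_cancel_right] at this
    simp only [Lc, Rc, nb]
    simp; omega
  · have := h2 i j
    have := h3 (i - 1, j) (i, j)
    simp only [Lc, Rc, nb]
    simp; omega
  · have := h1 i j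
    have := h3 (i, j - 1) (i, j)
    simp only [Lc, Rc, nb]
    simp; omega

lemma Pot.const {g : ℤ × ℤ → ℤ} {F : ℤ × ℤ → ℤ × ℤ → ℤ} (h : Pot g F) {v : ℤ × ℤ}
    (hv : ∀ b, F v b = 0) (d d' : Fin 4) : g (Lc v d) = g (Lc v d') := by
  have e0 := h v 0
  have e1 := h v 1
  have e2 := h v 2
  have e3 := h v 3
  simp only [hv, Rc_eq] at e0 e1 e2 e3
  have f0 : (0 - 1 : Fin 4) = 3 := rfl
  have f1 : (1 - 1 : Fin 4) = 0 := rfl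
  have f2 : (2 - 1 : Fin 4) = 1 := rfl
  have f3 : (3 - 1 : Fin 4) = 2 := rfl
  rw [f0] at e0; rw [f1] at e1; rw [f2] at e2; rw [f3] at e3
  fin_cases d <;> fin_cases d' <;> simp <;> omega

/-- local picture at an interior vertex of a simple path -/
lemma Pot.through {g : ℤ × ℤ → ℤ} {F : ℤ × ℤ → ℤ × ℤ → ℤ} (h : Pot g F) {v p q : ℤ × ℤ}
    {d1 d2 : Fin 4} (hq : q = nb v d1) (hp : p = nb v d2) (hpq : p ≠ q)
    (hv : ∀ b, F v b = (if b = q then 1 else 0) - (if b = p then 1 else 0)) :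
    (∀ d, g (Lc v d) = g (Lc v d1) ∨ g (Lc v d) = g (Lc v d1) - 1) ∧
      g (Rc v d1) = g (Lc v d1) - 1 ∧ g (Rc v d2) = g (Lc v d1) ∧ g (Lc v d2) = g (Lc v d1) - 1 := by
  have hne : d1 ≠ d2 := by rintro rfl; exact hpq (hp.trans hq.symm)
  have hF : ∀ d, F v (nb v d) = (if d = d1 then 1 else 0) - (if d = d2 then 1 else 0) := by
    intro d
    rw [hv, hq, hp]
    congr 1
    · exact if_congr ⟨fun h => nb_inj v h, fun h => by rw [h]⟩ rfl rfl
    · exact if_congr ⟨fun h => nb_inj v h, fun h => by rw [h]⟩ rfl rfl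
  have e0 := h v 0
  have e1 := h v 1
  have e2 := h v 2
  have e3 := h v 3
  simp only [hF, Rc_eq] at e0 e1 e2 e3
  have f0 : (0 - 1 : Fin 4) = 3 := rfl
  have f1 : (1 - 1 : Fin 4) = 0 := rfl
  have f2 : (2 - 1 : Fin 4) = 1 := rfl
  have f3 : (3 - 1 : Fin 4) = 2 := rfl
  rw [f0] at e0; rw [f1] at e1; rw [f2] at e2; rw [f3] at e3
  have e4 := Rc_eq v d1
  have e5 := Rc_eq v d2
  rw [e4, e5]
  clear h hv hF hq hp e4 e5
  generalize Lc v = l at *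
  refine ⟨?_, ?_⟩
  · intro d
    fin_cases d1 <;> fin_cases d2 <;> simp at hne e0 e1 e2 e3 ⊢ <;> fin_cases d <;> simp <;> omega
  · fin_cases d1 <;> fin_cases d2 <;> simp at hne e0 e1 e2 e3 <;> simp [f2, f3, show (-1 : Fin 4) = 3 from rfl] <;> omega


structure Strip (ι : Type*) where
  wa : ℕ → ℤ × ℤ
  wb : ℕ → ℤ × ℤ
  Na : ℕ
  Nb : ℕ
  σ : ι → ℕ → ℤ × ℤ
  M : ι → ℕ
  ka : ι → ℕ
  kb : ι → ℕ
  Int : ι → Set (ℤ × ℤ)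
  Full : ι → Set (ℤ × ℤ)
  hwa : ∀ k, LStep (wa k) (wa (k + 1))
  hwb : ∀ k, LStep (wb k) (wb (k + 1))
  hσ : ∀ x k, LStep (σ x k) (σ x (k + 1))
  hka : ∀ x, ka x ≤ Na
  hkb : ∀ x, kb x ≤ Nb
  hσ0 : ∀ x, σ x 0 = wa (ka x)
  hσM : ∀ x, σ x (M x) = wb (kb x)
  hM : ∀ x, 2 ≤ M x
  inj : ∀ x i j, i ≤ M x → j ≤ M x → σ x i = σ x j → i = j
  hinner : ∀ x k, 0 < k → k < M x → σ x k ∈ Int x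
  Int_a : ∀ x, ∀ p ∈ Int x, ∀ k ≤ Na, wa k ≠ p
  Int_b : ∀ x, ∀ p ∈ Int x, ∀ k ≤ Nb, wb k ≠ p
  hab : ∀ i ≤ Na, ∀ j ≤ Nb, wa i ≠ wb j
  Int_full : ∀ x, Int x ⊆ Full x
  σ_full : ∀ x k, k ≤ M x → σ x k ∈ Full x
  conn : ∀ x, ∀ p ∈ Int x, Relation.ReflTransGen (AStep (Int x)) (σ x 1) p

namespace Strip
variable {ι : Type*} (S : Strip ι)

def R (x : ι) (P : ℤ × ℤ) : ℤ := RR S.wa (S.ka x) P + RR (S.σ x) (S.M x) P - RR S.wb (S.kb x) P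
def F (x : ι) (a b : ℤ × ℤ) : ℤ :=
  FF S.wa (S.ka x) a b + FF (S.σ x) (S.M x) a b - FF S.wb (S.kb x) a b
def drift (P : ℤ × ℤ) : ℤ := rho (S.wa 0) P - rho (S.wb 0) P
def Dis (x z : ι) : Prop := ∀ p ∈ S.Full x, p ∉ S.Full z

variable {S}
lemma Dis.symm {x z : ι} (h : S.Dis x z) : S.Dis z x := fun p hp hp' => h p hp' hp
variable (S)

lemma R_right (x : ι) (i j : ℤ) : S.R x (i + 1, j) - S.R x (i, j) = - S.F x (i, j - 1) (i, j) := by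
  have h1 := RR_right S.hwa (S.ka x) i j
  have h2 := RR_right (S.hσ x) (S.M x) i j
  have h3 := RR_right S.hwb (S.kb x) i j
  simp only [R, F]; linarith

lemma R_up (x : ι) (i j : ℤ) :
    S.R x (i, j + 1) - S.R x (i, j) = S.drift (i, j) + S.F x (i - 1, j) (i, j) := by
  have h1 := RR_up S.hwa (S.ka x) i j
  have h2 := RR_up (S.hσ x) (S.M x) i j
  have h3 := RR_up S.hwb (S.kb x) i j
  rw [S.hσ0, S.hσM] at h2
  simp only [R, F, drift]; linarith

lemma F_antisymm (x : ι) (a b : ℤ × ℤ) : S.F x b a = - S.F x a b := by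
  simp only [F, FF_antisymm _ _ a b]; ring

lemma pot (x z : ι) : Pot (fun P => S.R x P - S.R z P) (fun a b => S.F x a b - S.F z a b) := by
  refine pot_of ?_ ?_ ?_
  · intro i j
    have := S.R_right x i j
    have := S.R_right z i j
    linarith
  · intro i j
    have := S.R_up x i j
    have := S.R_up z i j
    linarith
  · intro a b
    simp only [S.F_antisymm _ a b]; ring

/-- lattice point not on the two ends -/
def Off (v : ℤ × ℤ) : Prop := (∀ k ≤ S.Na, S.wa k ≠ v) ∧ (∀ k ≤ S.Nb, S.wb k ≠ v)

lemma off_int {x : ι} {p : ℤ × ℤ} (hp : p ∈ S.Int x) : S.Off p := ⟨S.Int_a x p hp, S.Int_b x p hp⟩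

lemma F_off {x : ι} {v : ℤ × ℤ} (hv : S.Off v) (hs : ∀ k ≤ S.M x, S.σ x k ≠ v) (b : ℤ × ℤ) :
    S.F x v b = 0 := by
  simp only [F]
  rw [FF_left_zero (fun k hk => hv.1 k (hk.trans (S.hka x))),
    FF_left_zero (fun k hk => hv.2 k (hk.trans (S.hkb x))), FF_left_zero hs]; rfl

lemma F_int {x : ι} {k : ℕ} (h0 : 0 < k) (hk : k < S.M x) (b : ℤ × ℤ) :
    S.F x (S.σ x k) b = (if b = S.σ x (k + 1) then 1 else 0) - (if b = S.σ x (k - 1) then 1 else 0) := by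
  have hv := S.off_int (S.hinner x k h0 hk)
  simp only [F]
  rw [FF_left_zero (fun k hk => hv.1 k (hk.trans (S.hka x))),
    FF_left_zero (fun k hk => hv.2 k (hk.trans (S.hkb x)))]
  simp only [FF, fl, Finset.sum_sub_distrib, zero_add, sub_zero]
  congr 1
  · rw [Finset.sum_eq_single k]
    · simp [eq_comm]
    · intro i hi hik
      rw [if_neg]
      rintro ⟨h1, -⟩
      exact hik (S.inj x i k (by have := Finset.mem_range.1 hi; omega) (by omega) h1)
    · intro h; exact absurd (Finset.mem_range.2 hk) h
  · rw [Finset.sum_eq_single (k - 1)]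
    · have : k - 1 + 1 = k := by omega
      simp [this, eq_comm]
    · intro i hi hik
      rw [if_neg]
      rintro ⟨-, h1⟩
      have := S.inj x (i + 1) k (by have := Finset.mem_range.1 hi; omega) (by omega) h1
      omega
    · intro h; exact absurd (Finset.mem_range.2 (by omega)) h

lemma spine_a {x : ι} {i k : ℕ} (hi : i ≤ S.M x) (hk : k ≤ S.Na) (h : S.σ x i = S.wa k) : i = 0 := by
  by_contra h0
  rcases hi.lt_or_eq with h1 | h1
  · exact S.Int_a x _ (S.hinner x i (by omega) h1) k hk h.symm
  · rw [h1, S.hσM] at h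
    exact S.hab k hk _ (S.hkb x) h.symm

lemma F_bdry {x : ι} {k : ℕ} (hk : k ≤ S.Na) {v' : ℤ × ℤ} (hv' : ∀ k ≤ S.Na, S.wa k ≠ v') :
    S.F x (S.wa k) v' = if S.wa k = S.σ x 0 ∧ v' = S.σ x 1 then 1 else 0 := by
  simp only [F]
  rw [FF_right_zero (fun k hk => hv' k (hk.trans (S.hka x))),
    FF_left_zero (f := S.wb) (fun j hj h => S.hab k hk j (hj.trans (S.hkb x)) h.symm)]
  simp only [FF, fl, Finset.sum_sub_distrib, zero_add, sub_zero]
  rw [Finset.sum_eq_zero (f := fun i => if S.σ x i = v' ∧ S.σ x (i + 1) = S.wa k then (1 : ℤ) else 0)]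
  · rw [Finset.sum_eq_single 0]
    · simp [eq_comm]
    · intro i hi hik
      rw [if_neg]
      rintro ⟨h1, -⟩
      exact hik (S.spine_a (by have := Finset.mem_range.1 hi; omega) hk h1)
    · intro h; exact absurd (Finset.mem_range.2 (by have := S.hM x; omega)) h
  · intro i hi
    rw [if_neg]
    rintro ⟨-, h1⟩
    have := S.spine_a (by have := Finset.mem_range.1 hi; omega) hk h1
    omega

lemma spine_nb {x : ι} {k : ℕ} (hk : k < S.M x) : ∃ d, S.σ x (k + 1) = nb (S.σ x k) d :=
  (S.hσ x k).exists_nb fun h => by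
    have := S.inj x _ _ (by omega) (by omega) h
    omega

lemma dis_F {x z : ι} (h : S.Dis x z) {p : ℤ × ℤ} (hp : p ∈ S.Int x) (b : ℤ × ℤ) : S.F z p b = 0 :=
  S.F_off (S.off_int hp) (fun k hk he => h p (S.Int_full x hp) (he ▸ S.σ_full z k hk)) b

lemma through {x z : ι} (h : S.Dis x z) {k : ℕ} (hk : k + 1 < S.M x) {d d1 : Fin 4}
    (hd : S.σ x (k + 1) = nb (S.σ x k) d) (hd1 : S.σ x (k + 2) = nb (S.σ x (k + 1)) d1) :
    let g := fun P => S.R x P - S.R z P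
    (∀ d', g (Lc (S.σ x (k + 1)) d') = g (Lc (S.σ x (k + 1)) d1) ∨
        g (Lc (S.σ x (k + 1)) d') = g (Lc (S.σ x (k + 1)) d1) - 1) ∧
      g (Lc (S.σ x k) d) = g (Lc (S.σ x (k + 1)) d1) ∧
      g (Rc (S.σ x k) d) = g (Lc (S.σ x (k + 1)) d1) - 1 := by
  intro g
  have hback : S.σ x k = nb (S.σ x (k + 1)) (d + 2) := by rw [hd, nb_nb]
  have := (S.pot x z).through (v := S.σ x (k + 1)) (p := S.σ x k) (q := S.σ x (k + 2)) hd1 hback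
    (by
      intro he
      have := S.inj x _ _ (by omega) (by omega) he
      omega)
    (by
      intro b
      rw [S.dis_F h (S.hinner x (k + 1) (by omega) hk), S.F_int (by omega) hk]
      simp)
  obtain ⟨a1, a2, a3, a4⟩ := this
  refine ⟨a1, ?_, ?_⟩
  · rw [← Rc_nb, ← hd]; exact a3
  · rw [← Lc_nb, ← hd]; exact a4

lemma lemA {x z : ι} (h : S.Dis x z) :
    ∃ c, (∀ k, 0 < k → k < S.M x → ∀ d, S.R x (Lc (S.σ x k) d) - S.R z (Lc (S.σ x k) d) = c ∨
        S.R x (Lc (S.σ x k) d) - S.R z (Lc (S.σ x k) d) = c - 1) ∧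
      (∀ d, S.σ x 1 = nb (S.σ x 0) d →
        S.R x (Lc (S.σ x 0) d) - S.R z (Lc (S.σ x 0) d) = c ∧
        S.R x (Rc (S.σ x 0) d) - S.R z (Rc (S.σ x 0) d) = c - 1) := by
  have hM := S.hM x
  obtain ⟨d0, hd0⟩ := S.spine_nb (x := x) (k := 0) (by omega)
  refine ⟨S.R x (Lc (S.σ x 0) d0) - S.R z (Lc (S.σ x 0) d0), ?_, ?_⟩
  · have key : ∀ k, k + 1 < S.M x →
        (∀ d, S.R x (Lc (S.σ x (k + 1)) d) - S.R z (Lc (S.σ x (k + 1)) d) =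
            S.R x (Lc (S.σ x 0) d0) - S.R z (Lc (S.σ x 0) d0) ∨
          S.R x (Lc (S.σ x (k + 1)) d) - S.R z (Lc (S.σ x (k + 1)) d) =
            S.R x (Lc (S.σ x 0) d0) - S.R z (Lc (S.σ x 0) d0) - 1) ∧
        ∀ d, S.σ x (k + 2) = nb (S.σ x (k + 1)) d →
          S.R x (Lc (S.σ x (k + 1)) d) - S.R z (Lc (S.σ x (k + 1)) d) =
            S.R x (Lc (S.σ x 0) d0) - S.R z (Lc (S.σ x 0) d0) := by
      intro k
      induction k with
      | zero =>
        intro hk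
        obtain ⟨d1, hd1⟩ := S.spine_nb (x := x) (k := 1) (by omega)
        have := S.through h hk hd0 hd1
        simp only at this
        obtain ⟨t1, t2, t3⟩ := this
        rw [t2]
        refine ⟨t1, fun d hd => ?_⟩
        have hdd : d = d1 := nb_inj _ (hd.symm.trans hd1)
        subst hdd; rfl
      | succ k ih =>
        intro hk
        obtain ⟨-, ih⟩ := ih (by omega)
        obtain ⟨d1, hd1⟩ := S.spine_nb (x := x) (k := k + 1) (by omega)
        obtain ⟨d2, hd2⟩ := S.spine_nb (x := x) (k := k + 2) (by omega)
        have := S.through h hk hd1 hd2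
        simp only at this
        obtain ⟨t1, t2, t3⟩ := this
        rw [ih d1 hd1] at t2
        rw [t2]
        refine ⟨t1, fun d hd => ?_⟩
        have hdd : d = d2 := nb_inj _ (hd.symm.trans hd2)
        subst hdd; rfl
    intro k hk0 hk
    obtain ⟨j, rfl⟩ : ∃ j, k = j + 1 := ⟨k - 1, by omega⟩
    exact (key j hk).1
  · intro d hd
    obtain rfl : d = d0 := nb_inj _ (hd.symm.trans hd0)
    obtain ⟨d1, hd1⟩ := S.spine_nb (x := x) (k := 1) (by omega)
    have := S.through h (k := 0) (by omega) hd hd1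
    simp only at this
    obtain ⟨t1, t2, t3⟩ := this
    exact ⟨rfl, by rw [t2]; exact t3⟩

end Strip


namespace Strip
variable {ι : Type*} (S : Strip ι)

def A : Finset (ℤ × ℤ) := (Finset.range (S.Na + 1)).image S.wa

lemma mem_A {v : ℤ × ℤ} : v ∈ S.A ↔ ∃ k ≤ S.Na, S.wa k = v := by
  simp [A, Nat.lt_succ_iff]

lemma bdry_edge (x z : ι) {v : ℤ × ℤ} (hv : v ∈ S.A) {d : Fin 4} (hd : nb v d ∉ S.A) :
    (S.R x (Lc v d) - S.R z (Lc v d)) - (S.R x (Rc v d) - S.R z (Rc v d)) =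
      (if v = S.σ x 0 ∧ nb v d = S.σ x 1 then 1 else 0) -
      (if v = S.σ z 0 ∧ nb v d = S.σ z 1 then 1 else 0) := by
  obtain ⟨k, hk, rfl⟩ := S.mem_A.1 hv
  have h := S.pot x z (S.wa k) d
  have hd' : ∀ j ≤ S.Na, S.wa j ≠ nb (S.wa k) d := fun j hj he => hd (S.mem_A.2 ⟨j, hj, he⟩)
  simp only [S.F_bdry hk hd'] at h
  exact h

lemma first_mem (x : ι) : S.σ x 0 ∈ S.A := S.mem_A.2 ⟨S.ka x, S.hka x, (S.hσ0 x).symm⟩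
lemma first_int (x : ι) : S.σ x 1 ∈ S.Int x := S.hinner x 1 (by omega) (by have := S.hM x; omega)
lemma int_not_mem {x : ι} {p : ℤ × ℤ} (hp : p ∈ S.Int x) : p ∉ S.A := by
  intro h
  obtain ⟨k, hk, he⟩ := S.mem_A.1 h
  exact S.Int_a x p hp k hk he

lemma double_sum_single {A : Finset (ℤ × ℤ)} {f : ℤ × ℤ → Fin 4 → ℤ} {v0 : ℤ × ℤ} {d0 : Fin 4}
    (hv0 : v0 ∈ A) (hf : ∀ v ∈ A, ∀ d, ¬ (v = v0 ∧ d = d0) → f v d = 0) :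
    ∑ v ∈ A, ∑ d, f v d = f v0 d0 := by
  rw [Finset.sum_eq_single_of_mem v0 hv0, Finset.sum_eq_single_of_mem d0 (Finset.mem_univ _)]
  · intro d _ hd; exact hf v0 hv0 d fun h => hd h.2
  · intro v hv hne
    exact Finset.sum_eq_zero fun d _ => hf v hv d fun h => hne h.1

lemma first_ne {x z : ι} (h : S.Dis x z) : S.σ x 0 ≠ S.σ z 0 := fun he =>
  h _ (S.σ_full x 0 (Nat.zero_le _)) (he ▸ S.σ_full z 0 (Nat.zero_le _))

lemma lemB {x z : ι} (h : S.Dis x z) :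
    ∃ c, (∀ k, 0 < k → k < S.M x → ∀ d, S.R x (Lc (S.σ x k) d) - S.R z (Lc (S.σ x k) d) = c ∨
        S.R x (Lc (S.σ x k) d) - S.R z (Lc (S.σ x k) d) = c - 1) ∧
      (∀ k, 0 < k → k < S.M z → ∀ d, S.R x (Lc (S.σ z k) d) - S.R z (Lc (S.σ z k) d) = c ∨
        S.R x (Lc (S.σ z k) d) - S.R z (Lc (S.σ z k) d) = c - 1) ∧
      (∀ d, S.σ x 1 = nb (S.σ x 0) d →
        S.R x (Lc (S.σ x 0) d) - S.R z (Lc (S.σ x 0) d) = c ∧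
        S.R x (Rc (S.σ x 0) d) - S.R z (Rc (S.σ x 0) d) = c - 1) ∧
      (∀ d, S.σ z 1 = nb (S.σ z 0) d →
        S.R x (Lc (S.σ z 0) d) - S.R z (Lc (S.σ z 0) d) = c - 1 ∧
        S.R x (Rc (S.σ z 0) d) - S.R z (Rc (S.σ z 0) d) = c) := by
  obtain ⟨c, hc1, hc2⟩ := S.lemA h
  obtain ⟨c', hc1', hc2'⟩ := S.lemA h.symm
  obtain ⟨dx, hdx⟩ := S.spine_nb (x := x) (k := 0) (by have := S.hM x; omega)
  obtain ⟨dz, hdz⟩ := S.spine_nb (x := z) (k := 0) (by have := S.hM z; omega)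
  simp only [zero_add] at hdx hdz
  have hcc : c = 1 - c' := by
    have st := stokes S.A (fun P => if c ≤ S.R x P - S.R z P then 1 else 0)
    set f : ℤ × ℤ → Fin 4 → ℤ := fun v d => if nb v d ∈ S.A then 0 else
      (if c ≤ S.R x (Lc v d) - S.R z (Lc v d) then 1 else 0) -
      (if c ≤ S.R x (Rc v d) - S.R z (Rc v d) then 1 else 0) with hf
    change ∑ v ∈ S.A, ∑ d, f v d = 0 at st
    obtain ⟨ex1, ex2⟩ := hc2 dx hdx
    obtain ⟨ez1, ez2⟩ := hc2' dz hdz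
    by_contra hne
    rw [double_sum_single (v0 := S.σ x 0) (d0 := dx) (S.first_mem x)] at st
    · simp only [hf] at st
      rw [← hdx, if_neg (S.int_not_mem (S.first_int x)), ex1, ex2] at st
      simp at st
    · intro v hv d hvd
      simp only [hf]
      by_cases hin : nb v d ∈ S.A
      · simp [hin]
      · rw [if_neg hin]
        have hb := S.bdry_edge x z hv hin
        rw [if_neg] at hb
        swap
        · rintro ⟨h1, h2⟩
          subst h1
          exact hvd ⟨rfl, nb_inj _ (h2.trans hdx)⟩
        by_cases hz : v = S.σ z 0 ∧ nb v d = S.σ z 1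
        · obtain ⟨h1, h2⟩ := hz
          subst h1
          obtain rfl : d = dz := nb_inj _ (h2.trans hdz)
          split_ifs <;> omega
        · rw [if_neg hz] at hb
          have : S.R x (Lc v d) - S.R z (Lc v d) = S.R x (Rc v d) - S.R z (Rc v d) := by omega
          rw [this, sub_self]
  refine ⟨c, hc1, ?_, hc2, ?_⟩
  · intro k hk hk' d
    have := hc1' k hk hk' d
    omega
  · intro d hd
    have := hc2' d hd
    omega

lemma lemC {x z : ι} (h : S.Dis x z) :
    ∃ c, (∀ u, ∀ p ∈ S.Int u, ∀ d, S.R x (Lc p d) - S.R z (Lc p d) = c ∨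
        S.R x (Lc p d) - S.R z (Lc p d) = c - 1) ∧
      (∀ d, S.σ x 1 = nb (S.σ x 0) d →
        S.R x (Lc (S.σ x 0) d) - S.R z (Lc (S.σ x 0) d) = c ∧
        S.R x (Rc (S.σ x 0) d) - S.R z (Rc (S.σ x 0) d) = c - 1) := by
  obtain ⟨c, hx, hz, ex, ez⟩ := S.lemB h
  refine ⟨c, ?_, ex⟩
  -- points on the spines
  have key : ∀ u, ∀ p ∈ S.Int u, (∀ d, S.R x (Lc p d) - S.R z (Lc p d) = c ∨
        S.R x (Lc p d) - S.R z (Lc p d) = c - 1) ∨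
      ((∀ k ≤ S.M x, S.σ x k ≠ p) ∧ (∀ k ≤ S.M z, S.σ z k ≠ p) ∧
        ∀ d d', S.R x (Lc p d) - S.R z (Lc p d) = S.R x (Lc p d') - S.R z (Lc p d')) := by
    intro u p hp
    have hoff := S.off_int hp
    have hsp : ∀ y k, k ≤ S.M y → S.σ y k = p → 0 < k ∧ k < S.M y := by
      intro y k hk he
      constructor
      · by_contra h0
        obtain rfl : k = 0 := by omega
        rw [S.hσ0] at he
        exact hoff.1 _ (S.hka y) he
      · by_contra h0
        obtain rfl : k = S.M y := by omega
        rw [S.hσM] at he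
        exact hoff.2 _ (S.hkb y) he
    by_cases h1 : ∃ k ≤ S.M x, S.σ x k = p
    · obtain ⟨k, hk, he⟩ := h1
      left
      obtain ⟨k0, k1⟩ := hsp x k hk he
      rw [← he]
      exact hx k k0 k1
    by_cases h2 : ∃ k ≤ S.M z, S.σ z k = p
    · obtain ⟨k, hk, he⟩ := h2
      left
      obtain ⟨k0, k1⟩ := hsp z k hk he
      rw [← he]
      exact hz k k0 k1
    right
    push Not at h1 h2
    refine ⟨h1, h2, fun d d' => ?_⟩
    exact (S.pot x z).const (v := p) (fun b => by rw [S.F_off hoff h1, S.F_off hoff h2, sub_zero]) d d'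
  intro u
  have hfirst : ∀ d, S.R x (Lc (S.σ u 1) d) - S.R z (Lc (S.σ u 1) d) = c ∨
        S.R x (Lc (S.σ u 1) d) - S.R z (Lc (S.σ u 1) d) = c - 1 := by
    rcases key u _ (S.first_int u) with h1 | ⟨h1, h2, h3⟩
    · exact h1
    by_contra hcon
    push Not at hcon
    obtain ⟨d0, hd0⟩ := hcon
    obtain ⟨du, hdu⟩ := S.spine_nb (x := u) (k := 0) (by have := S.hM u; omega)
    simp only [zero_add] at hdu
    set W := S.R x (Lc (S.σ u 1) d0) - S.R z (Lc (S.σ u 1) d0) with hW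
    have st := stokes S.A (fun P => if S.R x P - S.R z P = W then S.R x P - S.R u P else 0)
    set f : ℤ × ℤ → Fin 4 → ℤ := fun v d => if nb v d ∈ S.A then 0 else
      (if S.R x (Lc v d) - S.R z (Lc v d) = W then S.R x (Lc v d) - S.R u (Lc v d) else 0) -
      (if S.R x (Rc v d) - S.R z (Rc v d) = W then S.R x (Rc v d) - S.R u (Rc v d) else 0) with hf
    change ∑ v ∈ S.A, ∑ d, f v d = 0 at st
    rw [double_sum_single (v0 := S.σ u 0) (d0 := du) (S.first_mem u)] at st
    · simp only [hf] at st
      have hin := (S.int_not_mem (S.first_int u))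
      have hL : S.R x (Lc (S.σ u 0) du) - S.R z (Lc (S.σ u 0) du) = W := by
        rw [← Rc_nb, ← hdu, Rc_eq]; exact h3 _ _
      have hR : S.R x (Rc (S.σ u 0) du) - S.R z (Rc (S.σ u 0) du) = W := by
        rw [← Lc_nb, ← hdu]; exact h3 _ _
      have hb := S.bdry_edge x u (S.first_mem u) (d := du) (by rw [← hdu]; exact hin)
      rw [if_neg, if_pos ⟨rfl, hdu.symm⟩] at hb
      · rw [← hdu, if_neg hin, if_pos hL, if_pos hR] at st
        omega
      · rintro ⟨-, h4⟩
        rw [← hdu] at h4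
        exact h1 1 (by have := S.hM x; omega) h4.symm
    · intro v hv d hvd
      simp only [hf]
      by_cases hin : nb v d ∈ S.A
      · simp [hin]
      · rw [if_neg hin]
        by_cases hbx : v = S.σ x 0 ∧ nb v d = S.σ x 1
        · obtain ⟨e1, e2⟩ := hbx
          subst e1
          have := ex d e2.symm
          rw [if_neg (by omega), if_neg (by omega)]; rfl
        by_cases hbz : v = S.σ z 0 ∧ nb v d = S.σ z 1
        · obtain ⟨e1, e2⟩ := hbz
          subst e1
          have := ez d e2.symm
          rw [if_neg (by omega), if_neg (by omega)]; rfl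
        have hb := S.bdry_edge x z hv hin
        rw [if_neg hbx, if_neg hbz] at hb
        have hb' := S.bdry_edge x u hv hin
        rw [if_neg hbx, if_neg (by
          rintro ⟨e1, e2⟩
          subst e1
          exact hvd ⟨rfl, nb_inj _ (e2.trans hdu)⟩)] at hb'
        have e : S.R x (Lc v d) - S.R z (Lc v d) = S.R x (Rc v d) - S.R z (Rc v d) := by omega
        have e' : S.R x (Lc v d) - S.R u (Lc v d) = S.R x (Rc v d) - S.R u (Rc v d) := by omega
        rw [e, e', sub_self]
  intro p hp
  have := S.conn u p hp
  induction this with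
  | refl => exact hfirst
  | @tail a b hab hst ih =>
    have ih := ih hst.2.1
    rcases key u b hst.2.2 with h1 | ⟨-, -, h3⟩
    · exact h1
    · obtain ⟨d1, d2, hd⟩ := hst.1.exists_corner
      intro d
      rw [h3 d d2, ← hd]
      exact ih d1

/-- two arcs both disjoint from `p` have constant difference along `p`. -/
lemma const_along {w w' p : ι} (h : S.Dis p w) (h' : S.Dis p w') {q : ℤ × ℤ} (hq : q ∈ S.Int p)
    (d d' : Fin 4) : S.R w (Lc q d) - S.R w' (Lc q d) =
      S.R w (Lc (S.σ p 1) d') - S.R w' (Lc (S.σ p 1) d') := by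
  have key : ∀ q ∈ S.Int p, ∀ d d', S.R w (Lc q d) - S.R w' (Lc q d) =
      S.R w (Lc q d') - S.R w' (Lc q d') := by
    intro q hq d d'
    exact (S.pot w w').const (v := q) (fun b => by rw [S.dis_F h hq, S.dis_F h' hq, sub_zero]) d d'
  have := S.conn p q hq
  induction this generalizing d with
  | refl => exact key _ hq _ _
  | @tail a b hab hst ih =>
    obtain ⟨d1, d2, hd⟩ := hst.1.exists_corner
    rw [key b hst.2.2 d d2, ← hd]
    exact ih hst.2.1 d1

end Strip


lemma exists_sort {ι : Type*} [Fintype ι] (key : ι → ℤ) :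
    ∃ e : ι ≃ Fin (Fintype.card ι), ∀ x z, e x < e z → key x ≤ key z := by
  let e0 := Fintype.equivFin ι
  let f : Fin (Fintype.card ι) → ℤ := fun i => key (e0.symm i)
  refine ⟨e0.trans (Tuple.sort f).symm, fun x z h => ?_⟩
  have := Tuple.monotone_sort f h.le
  simpa [f] using this

namespace Strip
variable {ι : Type*} (S : Strip ι)

def Bst (p q : ℤ × ℤ) : ℤ :=
  if q.2 = p.2 + 1 then S.drift p else if q.2 = p.2 - 1 then - S.drift q else 0

def Jw (y : ℕ → ℤ × ℤ) (k : ℕ) : ℤ := ∑ i ∈ Finset.range k, S.Bst (y i) (y (i + 1))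

lemma F_off' {x : ι} {v : ℤ × ℤ} (hv : S.Off v) (hs : ∀ k ≤ S.M x, S.σ x k ≠ v) (b : ℤ × ℤ) :
    S.F x b v = 0 := by rw [S.F_antisymm, S.F_off hv hs, neg_zero]

lemma R_step {z : ι} {p q : ℤ × ℤ} (h : LStep p q) (hp : S.Off p) (hq : S.Off q)
    (hp' : ∀ k ≤ S.M z, S.σ z k ≠ p) (hq' : ∀ k ≤ S.M z, S.σ z k ≠ q) :
    S.R z q - S.R z p = S.Bst p q := by
  obtain ⟨i, j⟩ := p
  rcases h with rfl | rfl | rfl | rfl | rfl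
  · simp [Bst]; intro h; omega
  · have := S.R_right z i j
    rw [S.F_off' hp hp'] at this
    simp [Bst]; omega
  · have := S.R_right z (i - 1) j
    rw [S.F_off' hq hq'] at this
    simp [Bst] at this ⊢; omega
  · have := S.R_up z i j
    rw [S.F_off' hp hp'] at this
    simp [Bst]; omega
  · have := S.R_up z i (j - 1)
    rw [S.F_off' hq hq'] at this
    simp only [sub_add_cancel] at this
    have h1 : ¬ (j - 1 = j + 1) := by omega
    simp [Bst, h1]; omega

lemma R_walk {z : ι} {y : ℕ → ℤ × ℤ} {L : ℕ} (hy : ∀ k, LStep (y k) (y (k + 1)))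
    (hoff : ∀ k ≤ L, S.Off (y k)) (hz : ∀ k ≤ L, y k ∉ S.Int z) (k : ℕ) (hk : k ≤ L) :
    S.R z (y k) - S.Jw y k = S.R z (y 0) := by
  have hs : ∀ i ≤ L, ∀ k ≤ S.M z, S.σ z k ≠ y i := by
    intro i hi k hk he
    rcases Nat.eq_zero_or_pos k with rfl | h0
    · rw [S.hσ0] at he; exact (hoff i hi).1 _ (S.hka z) he
    · rcases hk.lt_or_eq with h1 | rfl
      · exact hz i hi (he ▸ S.hinner z k h0 h1)
      · rw [S.hσM] at he; exact (hoff i hi).2 _ (S.hkb z) he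
  induction k with
  | zero => simp [Jw]
  | succ k ih =>
    have := S.R_step (z := z) (hy k) (hoff k (by omega)) (hoff (k + 1) hk) (hs k (by omega)) (hs (k + 1) hk)
    have ih := ih (by omega)
    simp only [Jw, Finset.sum_range_succ] at ih ⊢
    linarith

theorem strip_order [Fintype ι] (hfin : ∀ x, (S.Int x).Finite) :
    ∃ e : ι ≃ Fin (Fintype.card ι), ∀ (y : ℕ → ℤ × ℤ) (L : ℕ), (∀ k, LStep (y k) (y (k + 1))) →
      (∀ k ≤ L, S.Off (y k)) → ∃ (H : ι → ι → ℤ) (kk : ι → ℤ),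
        (∀ p, (∃ i ≤ L, y i ∈ S.Int p) → ∀ x z, S.Dis x z → e x < e z → H z p ≤ H x p ∧ H x p ≤ H z p + 1) ∧
        (∀ p, (∃ i ≤ L, y i ∈ S.Int p) → ∀ x, S.Dis p x →
          (e p < e x → H x p = kk p) ∧ (e x < e p → H x p = kk p + 1)) ∧
        (∀ z, ¬ (∃ i ≤ L, y i ∈ S.Int z) → ∀ p p', (∃ i ≤ L, y i ∈ S.Int p) →
          (∃ i ≤ L, y i ∈ S.Int p') → H z p = H z p') := by
  classical
  let Ω : Finset (ℤ × ℤ) := Finset.univ.biUnion fun x : ι => (hfin x).toFinset.biUnion fun q =>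
    Finset.univ.image fun d => Lc q d
  have hΩ : ∀ P, P ∈ Ω ↔ ∃ x, ∃ q ∈ S.Int x, ∃ d, P = Lc q d := by
    intro P; simp [Ω, eq_comm]
  let T : ι → ℤ := fun x => ∑ P ∈ Ω, S.R x P
  let c0 : ℤ := Ω.card
  let key : ι → ℤ := fun x => (- T x) % c0
  let s : ι → ℤ := fun x => (- T x) / c0
  let R' : ι → ℤ × ℤ → ℤ := fun x P => S.R x P + s x
  have hkey : ∀ x, ∑ P ∈ Ω, R' x P = - key x := by
    intro x
    simp only [R', Finset.sum_add_distrib, Finset.sum_const, nsmul_eq_mul]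
    have := Int.emod_add_mul_ediv (- T x) c0
    change T x + c0 * s x = - key x
    simp only [key, s]; linarith
  have hlevel : ∀ x z, S.Dis x z → ∃ c : ℤ, (∀ P ∈ Ω, R' x P - R' z P = c ∨ R' x P - R' z P = c - 1) ∧
      (∀ d, S.σ x 1 = nb (S.σ x 0) d → R' x (Lc (S.σ x 1) (d + 1)) - R' z (Lc (S.σ x 1) (d + 1)) = c) ∧
      ((key x < key z ∧ c = 1) ∨ (key z < key x ∧ c = 0)) := by
    intro x z hxz
    obtain ⟨c, h1, h2⟩ := S.lemC hxz
    obtain ⟨d0, hd0⟩ := S.spine_nb (x := x) (k := 0) (by have := S.hM x; omega)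
    simp only [zero_add] at hd0
    have hL : ∀ d, S.σ x 1 = nb (S.σ x 0) d → Lc (S.σ x 0) d = Lc (S.σ x 1) (d + 1) := by
      intro d hd
      rw [← Rc_nb, ← hd, Rc_eq]
      congr 1
      fin_cases d <;> rfl
    have hR : Rc (S.σ x 0) d0 = Lc (S.σ x 1) (d0 + 2) := by rw [← Lc_nb, ← hd0]
    have hlev : ∀ P ∈ Ω, R' x P - R' z P = c + s x - s z ∨ R' x P - R' z P = c + s x - s z - 1 := by
      intro P hP
      obtain ⟨u, q, hq, d, rfl⟩ := (hΩ P).1 hP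
      have := h1 u q hq d
      simp only [R']
      omega
    refine ⟨c + s x - s z, hlev, ?_, ?_⟩
    · intro d hd
      have := (h2 d hd).1
      rw [hL d hd] at this
      simp only [R']; omega
    · set c' := c + s x - s z with hc'
      have hsum : ∑ P ∈ Ω, (R' x P - R' z P) = key z - key x := by
        rw [Finset.sum_sub_distrib, hkey, hkey]; ring
      have m1 : Lc (S.σ x 1) (d0 + 1) ∈ Ω := (hΩ _).2 ⟨x, _, S.first_int x, _, rfl⟩
      have m2 : Lc (S.σ x 1) (d0 + 2) ∈ Ω := (hΩ _).2 ⟨x, _, S.first_int x, _, rfl⟩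
      have v1 : R' x (Lc (S.σ x 1) (d0 + 1)) - R' z (Lc (S.σ x 1) (d0 + 1)) = c' := by
        have := (h2 d0 hd0).1
        rw [hL d0 hd0] at this
        simp only [R']; omega
      have v2 : R' x (Lc (S.σ x 1) (d0 + 2)) - R' z (Lc (S.σ x 1) (d0 + 2)) = c' - 1 := by
        have := (h2 d0 hd0).2
        rw [hR] at this
        simp only [R']; omega
      have hlt : ∑ P ∈ Ω, (R' x P - R' z P) < c0 * c' := by
        have : ∑ P ∈ Ω, (R' x P - R' z P) < ∑ P ∈ Ω, c' :=
          Finset.sum_lt_sum (fun P hP => by have := hlev P hP; omega) ⟨_, m2, by omega⟩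
        rw [Finset.sum_const, nsmul_eq_mul] at this; exact this
      have hgt : c0 * (c' - 1) < ∑ P ∈ Ω, (R' x P - R' z P) := by
        have : ∑ P ∈ Ω, (c' - 1) < ∑ P ∈ Ω, (R' x P - R' z P) :=
          Finset.sum_lt_sum (fun P hP => by have := hlev P hP; omega) ⟨_, m1, by omega⟩
        rw [Finset.sum_const, nsmul_eq_mul] at this; exact this
      have hc0 : 0 < c0 := by
        have : 0 < Ω.card := Finset.card_pos.2 ⟨_, m1⟩
        simp only [c0]; omega
      rw [hsum] at hlt hgt
      have k1 : 0 ≤ key x := Int.emod_nonneg _ hc0.ne'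
      have k2 : 0 ≤ key z := Int.emod_nonneg _ hc0.ne'
      have k3 : key x < c0 := Int.emod_lt_of_pos _ hc0
      have k4 : key z < c0 := Int.emod_lt_of_pos _ hc0
      have c1 : 0 ≤ c' := by
        by_contra hneg
        push Not at hneg
        nlinarith
      have c2 : c' ≤ 1 := by
        by_contra hneg
        push Not at hneg
        nlinarith
      have : c' = 0 ∨ c' = 1 := by omega
      rcases this with h0 | h0 <;> rw [h0] at hlt hgt ⊢
      · right; constructor <;> linarith
      · left; constructor <;> linarith
  obtain ⟨e, he⟩ := exists_sort key
  refine ⟨e, fun y L hy hoff => ?_⟩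
  have hpos : ∀ p, ∃ i, (∃ i ≤ L, y i ∈ S.Int p) → i ≤ L ∧ y i ∈ S.Int p := by
    intro p
    by_cases h : ∃ i ≤ L, y i ∈ S.Int p
    · obtain ⟨i, h1, h2⟩ := h; exact ⟨i, fun _ => ⟨h1, h2⟩⟩
    · exact ⟨0, fun h' => absurd h' h⟩
  choose pos hpos using hpos
  have hface : ∀ q : ℤ × ℤ, Lc q 2 = q := fun q => rfl
  let H : ι → ι → ℤ := fun x p => R' x (y (pos p)) - S.Jw y (pos p)
  have hb : ∀ p, ∃ kp, (∃ i ≤ L, y i ∈ S.Int p) → ∀ x, S.Dis p x →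
          (e p < e x → H x p = kp) ∧ (e x < e p → H x p = kp + 1) := by
    intro p
    by_cases hw : ∃ w0, S.Dis p w0
    · obtain ⟨w0, hw0⟩ := hw
      obtain ⟨cw, -, hw2, -⟩ := hlevel p w0 hw0
      refine ⟨H w0 p + cw - 1, fun hit x hx => ?_⟩
      obtain ⟨cx, -, hx2, hx3⟩ := hlevel p x hx
      obtain ⟨d0, hd0⟩ := S.spine_nb (x := p) (k := 0) (by have := S.hM p; omega)
      simp only [zero_add] at hd0
      have e1 := hw2 d0 hd0
      have e2 := hx2 d0 hd0
      have e3 := S.const_along hw0 hx (hpos p hit).2 2 (d0 + 1)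
      rw [hface] at e3
      have e4 : H x p = H w0 p + cw - cx := by
        simp only [H, R'] at e1 e2 ⊢; omega
      constructor
      · intro h
        have := he _ _ h
        have : cx = 1 := by rcases hx3 with h | h <;> omega
        omega
      · intro h
        have := he _ _ h
        have : cx = 0 := by rcases hx3 with h | h <;> omega
        omega
    · exact ⟨0, fun _ x hx => absurd ⟨x, hx⟩ hw⟩
  choose kk hkk using hb
  refine ⟨H, kk, ?_, hkk, ?_⟩
  · intro p hit x z hxz hlt
    obtain ⟨c, h1, -, h3⟩ := hlevel x z hxz
    have := he _ _ hlt
    have hc : c = 1 := by rcases h3 with h | h <;> omega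
    have := h1 (y (pos p)) ((hΩ _).2 ⟨p, _, (hpos p hit).2, 2, rfl⟩)
    simp only [H]
    omega
  · intro z hz p p' hp hp'
    have hz' : ∀ k ≤ L, y k ∉ S.Int z := fun k hk h => hz ⟨k, hk, h⟩
    have h1 := S.R_walk hy hoff hz' _ (hpos p hp).1
    have h2 := S.R_walk hy hoff hz' _ (hpos p' hp').1
    simp only [H, R']
    linarith

end Strip


lemma arc_conn {u : ℕ → ℤ × ℤ} {len : ℕ} (hu : ∀ k, LStep (u k) (u (k + 1))) (k : ℕ) (h0 : 0 < k)
    (hk : k < len) :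
    Relation.ReflTransGen (AStep {p | ∃ k, 0 < k ∧ k < len ∧ u k = p}) (u 1) (u k) := by
  induction k with
  | zero => omega
  | succ k ih =>
    rcases Nat.eq_zero_or_pos k with rfl | hpos
    · exact Relation.ReflTransGen.refl
    · exact (ih hpos (by omega)).tail ⟨hu k, ⟨k, hpos, by omega, rfl⟩, ⟨k + 1, h0, hk, rfl⟩⟩

lemma exists_spine {u : ℕ → ℤ × ℤ} {len : ℕ} (hu : ∀ k, LStep (u k) (u (k + 1))) (hlen : 2 ≤ len)
    (I : Set (ℤ × ℤ)) (hI : ∀ k, 0 < k → k < len → u k ∈ I) (h0 : u 0 ∉ I) (h1 : u len ∉ I)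
    (h01 : u 0 ≠ u len) :
    ∃ (s : ℕ → ℤ × ℤ) (M : ℕ), (∀ k, LStep (s k) (s (k + 1))) ∧ s 0 = u 0 ∧ s 1 = u 1 ∧ s M = u len ∧
      2 ≤ M ∧ (∀ k, 0 < k → k < M → s k ∈ I) ∧
      (∀ i j, i ≤ M → j ≤ M → s i = s j → i = j) := by
  classical
  let P : ℕ → Prop := fun M => 2 ≤ M ∧ ∃ s : ℕ → ℤ × ℤ, (∀ k, LStep (s k) (s (k + 1))) ∧ s 0 = u 0 ∧
    s 1 = u 1 ∧ s M = u len ∧ (∀ k, 0 < k → k < M → s k ∈ I)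
  have hP : ∃ M, P M := ⟨len, hlen, u, hu, rfl, rfl, rfl, hI⟩
  obtain ⟨hM, s, hs, s0, s1, sM, sI⟩ := Nat.find_spec hP
  set M := Nat.find hP with hMdef
  refine ⟨s, M, hs, s0, s1, sM, hM, sI, ?_⟩
  have key : ∀ i j, i < j → j ≤ M → s i ≠ s j := by
    intro i j hij hj he
    rcases Nat.eq_zero_or_pos i with rfl | hi
    · rcases hj.lt_or_eq with h | rfl
      · exact h0 (by rw [← s0, he]; exact sI j hij h)
      · exact h01 (by rw [← s0, he, sM])
    rcases hj.lt_or_eq with h | rfl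
    swap
    · exact h1 (by rw [← sM, ← he]; exact sI i hi hij)
    have : P (M - (j - i)) := by
      refine ⟨by omega, fun k => if k ≤ i then s k else s (k + (j - i)), ?_, ?_, ?_, ?_, ?_⟩
      · intro k
        by_cases h2 : k + 1 ≤ i
        · have h3 : k ≤ i := by omega
          simp only [h2, h3, if_true]; exact hs k
        · by_cases h3 : k ≤ i
          · have h4 : k = i := by omega
            subst h4
            simp only [le_refl, if_true, h2, if_false]
            rw [he, show k + 1 + (j - k) = j + 1 by omega]
            exact hs j
          · simp only [h2, h3, if_false]
            rw [show k + 1 + (j - i) = k + (j - i) + 1 by omega]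
            exact hs _
      · simpa using s0
      · simp only [show 1 ≤ i by omega, if_true]; exact s1
      · simp only [show ¬ (M - (j - i) ≤ i) by omega, if_false]
        rw [show M - (j - i) + (j - i) = M by omega]; exact sM
      · intro k hk0 hk
        dsimp only
        split_ifs with h5
        · exact sI k hk0 (by omega)
        · exact sI _ (by omega) (by omega)
    have := Nat.find_min' hP this
    omega
  intro i j hi hj he
  rcases lt_trichotomy i j with h | h | h
  · exact absurd he (key i j h hj)
  · exact h
  · exact absurd he.symm (key j i h hi)

/-- Output data of the strip analysis: heights and windings for one floating walk. -/
def GoodData {ι : Type*} {m : ℕ} (e : ι → Fin m) (D : ι → ι → Prop) (hit : ι → Prop)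
    (H : ι → ι → ℤ) (kk : ι → ℤ) : Prop :=
  (∀ p, hit p → ∀ x z, D x z → e x < e z → H z p ≤ H x p ∧ H x p ≤ H z p + 1) ∧
  (∀ p, hit p → ∀ x, D p x → (e p < e x → H x p = kk p) ∧ (e x < e p → H x p = kk p + 1)) ∧
  (∀ z, ¬ hit z → ∀ p p', hit p → hit p' → H z p = H z p')

theorem arcs_order {ι : Type*} [Fintype ι] (wa wb : ℕ → ℤ × ℤ) (Na Nb : ℕ)
    (hwa : ∀ k, LStep (wa k) (wa (k + 1))) (hwb : ∀ k, LStep (wb k) (wb (k + 1)))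
    (hab : ∀ i ≤ Na, ∀ j ≤ Nb, wa i ≠ wb j)
    (u : ι → ℕ → ℤ × ℤ) (len : ι → ℕ) (hu : ∀ x k, LStep (u x k) (u x (k + 1)))
    (hlen : ∀ x, 2 ≤ len x) (ha : ∀ x, ∃ k ≤ Na, wa k = u x 0)
    (hb : ∀ x, ∃ k ≤ Nb, wb k = u x (len x))
    (hia : ∀ x k, 0 < k → k < len x → ∀ i ≤ Na, wa i ≠ u x k)
    (hib : ∀ x k, 0 < k → k < len x → ∀ i ≤ Nb, wb i ≠ u x k) :
    ∃ e : ι ≃ Fin (Fintype.card ι), ∀ (y : ℕ → ℤ × ℤ) (L : ℕ), (∀ k, LStep (y k) (y (k + 1))) →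
      (∀ k ≤ L, (∀ i ≤ Na, wa i ≠ y k) ∧ (∀ i ≤ Nb, wb i ≠ y k)) → ∃ (H : ι → ι → ℤ) (kk : ι → ℤ),
      GoodData e (fun x z => ∀ i ≤ len x, ∀ j ≤ len z, u x i ≠ u z j)
        (fun p => ∃ i ≤ L, ∃ k, 0 < k ∧ k < len p ∧ u p k = y i) H kk := by
  let I : ι → Set (ℤ × ℤ) := fun x => {p | ∃ k, 0 < k ∧ k < len x ∧ u x k = p}
  have hsp := fun x => exists_spine (hu x) (hlen x) (I x) (fun k h0 h1 => ⟨k, h0, h1, rfl⟩)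
    (by
      rintro ⟨k, h0, h1, h2⟩
      obtain ⟨k', h3, h4⟩ := ha x
      exact hia x k h0 h1 k' h3 (h4.trans h2.symm))
    (by
      rintro ⟨k, h0, h1, h2⟩
      obtain ⟨k', h3, h4⟩ := hb x
      exact hib x k h0 h1 k' h3 (h4.trans h2.symm))
    (by
      intro h
      obtain ⟨k', h3, h4⟩ := ha x
      obtain ⟨k, h1, h2⟩ := hb x
      exact hab k' h3 k h1 (by rw [h4, h2, h]))
  choose s M hs s0 s1 sM hM sI inj using hsp
  choose ka hka hka' using ha
  choose kb hkb hkb' using hb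
  let S : Strip ι :=
    { wa := wa, wb := wb, Na := Na, Nb := Nb, σ := s, M := M, ka := ka, kb := kb, Int := I,
      Full := fun x => {p | ∃ k ≤ len x, u x k = p}
      hwa := hwa, hwb := hwb, hσ := hs, hka := hka, hkb := hkb
      hσ0 := fun x => (s0 x).trans (hka' x).symm
      hσM := fun x => (sM x).trans (hkb' x).symm
      hM := hM, inj := inj, hinner := sI
      Int_a := by rintro x p ⟨k, h0, h1, rfl⟩ i hi; exact hia x k h0 h1 i hi
      Int_b := by rintro x p ⟨k, h0, h1, rfl⟩ i hi; exact hib x k h0 h1 i hi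
      hab := hab
      Int_full := by rintro x p ⟨k, h0, h1, rfl⟩; exact ⟨k, h1.le, rfl⟩
      σ_full := by
        intro x k hk
        rcases Nat.eq_zero_or_pos k with rfl | h0
        · exact ⟨0, by omega, (s0 x).symm⟩
        · rcases hk.lt_or_eq with h1 | rfl
          · obtain ⟨j, h2, h3, h4⟩ := sI x k h0 h1
            exact ⟨j, h3.le, h4⟩
          · exact ⟨len x, le_rfl, (sM x).symm⟩
      conn := by
        rintro x p ⟨k, h0, h1, rfl⟩
        rw [s1]
        exact arc_conn (hu x) k h0 h1 }
  have hfin : ∀ x, (S.Int x).Finite := by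
    intro x
    refine ((Finset.range (len x)).image (u x)).finite_toSet.subset ?_
    rintro p ⟨k, h0, h1, rfl⟩
    simp only [Finset.coe_image, Finset.coe_range]
    exact ⟨k, h1, rfl⟩
  have hDis : ∀ x z, S.Dis x z ↔ ∀ i ≤ len x, ∀ j ≤ len z, u x i ≠ u z j := by
    intro x z
    constructor
    · intro h i hi j hj he
      exact h (u x i) ⟨i, hi, rfl⟩ ⟨j, hj, he.symm⟩
    · rintro h p ⟨i, hi, rfl⟩ ⟨j, hj, h2⟩
      exact h i hi j hj h2.symm
  obtain ⟨e, he⟩ := S.strip_order hfin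
  refine ⟨e, fun y L hy hoff => ?_⟩
  obtain ⟨H, kk, h1, h2, h3⟩ := he y L hy hoff
  refine ⟨H, kk, ?_, ?_, ?_⟩
  · intro p hp x z hxz; exact h1 p hp x z ((hDis x z).2 hxz)
  · intro p hp x hx; exact h2 p hp x ((hDis p x).2 hx)
  · exact h3


open Classical in
/-- elements of block `k` reachable from `z` -/
noncomputable def reach {X : Type*} (Bl : ℕ → Finset X) (E : X → X → Prop) : ℕ → X → Finset X
  | 0, z => {z}
  | k + 1, z => (Bl (k + 1)).filter fun c => ∃ a ∈ reach Bl E k z, E a c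

lemma reach_mono_fun {X : Type*} {Bl : ℕ → Finset X} {E : X → X → Prop} (f : X → ℤ)
    (hf : ∀ a c, E a c → f a ≤ f c) (k : ℕ) (z c : X) (hc : c ∈ reach Bl E k z) : f z ≤ f c := by
  induction k generalizing c with
  | zero => simp only [reach, Finset.mem_singleton] at hc; rw [hc]
  | succ k ih =>
    simp only [reach, Finset.mem_filter] at hc
    obtain ⟨-, a, ha, hac⟩ := hc
    exact (ih a ha).trans (hf a c hac)

lemma halving {X : Type*} (Bl : ℕ → Finset X) (E : X → X → Prop) (L : ℕ)
    (hE : ∀ k, ∀ A ⊆ Bl k, ∀ C ⊆ Bl (k + 1), 2 ^ L ≤ A.card → 2 ^ L ≤ C.card → ∃ a ∈ A, ∃ c ∈ C, E a c)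
    (hB : ∀ k, 3 * 2 ^ L ≤ (Bl k).card) :
    ((Bl 0).filter fun z => (reach Bl E L z).card < 2 ^ L).card < 2 ^ L := by
  classical
  by_contra hcon
  push Not at hcon
  obtain ⟨Z, hZ, hZc⟩ := Finset.exists_subset_card_eq hcon
  have key : ∀ k ≤ L, ∃ Zk ⊆ Z, Zk.card ≤ 2 ^ (L - k) ∧ 2 ^ L ≤ (Zk.biUnion (reach Bl E k)).card ∧
      Zk.biUnion (reach Bl E k) ⊆ Bl k := by
    intro k
    induction k with
    | zero =>
      intro _
      have : Z.biUnion (reach Bl E 0) = Z := by ext z; simp [reach]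
      refine ⟨Z, subset_rfl, by simp [hZc], by rw [this, hZc], ?_⟩
      rw [this]
      exact hZ.trans (Finset.filter_subset _ _)
    | succ k ih =>
      intro hk
      obtain ⟨Zk, h1, h2, h3, h4⟩ := ih (by omega)
      have hsub : ∀ W : Finset X, W.biUnion (reach Bl E (k + 1)) ⊆ Bl (k + 1) := by
        intro W c hc
        simp only [Finset.mem_biUnion, reach, Finset.mem_filter] at hc
        obtain ⟨_, _, h, _⟩ := hc
        exact h
      have hbig : 2 * 2 ^ L ≤ (Zk.biUnion (reach Bl E (k + 1))).card := by
        by_contra hlt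
        push Not at hlt
        have h5 := Finset.le_card_sdiff (Zk.biUnion (reach Bl E (k + 1))) (Bl (k + 1))
        have h6 := hB (k + 1)
        obtain ⟨a, ha, c, hc, hac⟩ := hE k _ h4 (Bl (k + 1) \ Zk.biUnion (reach Bl E (k + 1)))
          Finset.sdiff_subset h3 (by omega)
        rw [Finset.mem_sdiff] at hc
        refine hc.2 ?_
        rw [Finset.mem_biUnion] at ha ⊢
        obtain ⟨z, hz, haz⟩ := ha
        refine ⟨z, hz, ?_⟩
        simp only [reach, Finset.mem_filter]
        exact ⟨hc.1, a, haz, hac⟩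
      obtain ⟨W, hW, hWc⟩ := Finset.exists_subset_card_eq (show Zk.card / 2 ≤ Zk.card from Nat.div_le_self _ _)
      have hpow : 2 ^ (L - k) = 2 * 2 ^ (L - (k + 1)) := by
        rw [← pow_succ']; congr 1; omega
      have hun : Zk.biUnion (reach Bl E (k + 1)) =
          W.biUnion (reach Bl E (k + 1)) ∪ (Zk \ W).biUnion (reach Bl E (k + 1)) := by
        rw [← Finset.union_biUnion, Finset.union_sdiff_of_subset hW]
      have hcu := Finset.card_union_le (W.biUnion (reach Bl E (k + 1))) ((Zk \ W).biUnion (reach Bl E (k + 1)))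
      rw [← hun] at hcu
      by_cases hc : 2 ^ L ≤ (W.biUnion (reach Bl E (k + 1))).card
      · exact ⟨W, hW.trans h1, by omega, hc, hsub _⟩
      · refine ⟨Zk \ W, Finset.sdiff_subset.trans h1, ?_, by omega, hsub _⟩
        rw [Finset.card_sdiff_of_subset hW]; omega
  obtain ⟨ZL, h1, h2, h3, h4⟩ := key L le_rfl
  simp only [Nat.sub_self, pow_zero] at h2
  have hpos : 0 < 2 ^ L := by positivity
  have hne : ZL.Nonempty := by
    rw [Finset.nonempty_iff_ne_empty]
    rintro rfl
    simp at h3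
  obtain ⟨z, rfl⟩ := Finset.card_eq_one.1 (le_antisymm h2 hne.card_pos)
  rw [Finset.singleton_biUnion] at h3
  have := hZ (h1 (Finset.mem_singleton_self z))
  rw [Finset.mem_filter] at this
  omega


lemma reach_subset {X : Type*} {Bl : ℕ → Finset X} {E : X → X → Prop} {z : X} (hz : z ∈ Bl 0) (k : ℕ) :
    reach Bl E k z ⊆ Bl k := by
  cases k with
  | zero => simpa [reach] using hz
  | succ k => intro c hc; simp only [reach, Finset.mem_filter] at hc; exact hc.1

lemma divmod_lt {m i j : ℤ} (hm : 0 < m) (h : i < j) : i / m < j / m ∨ (i / m = j / m ∧ i % m < j % m) := by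
  have h1 := Int.ediv_le_ediv hm h.le
  rcases h1.lt_or_eq with h2 | h2
  · exact Or.inl h2
  · right
    refine ⟨h2, ?_⟩
    have h3 := Int.emod_add_mul_ediv i m
    have h4 := Int.emod_add_mul_ediv j m
    rw [h2] at h3
    linarith

lemma mod_inj_Ico {m B a : ℤ} (hBm : B ≤ m) {i j : ℤ} (hi : i ∈ Finset.Ico a (a + B))
    (hj : j ∈ Finset.Ico a (a + B)) (h : i % m = j % m) : i = j := by
  rw [Finset.mem_Ico] at hi hj
  have h1 : m ∣ i - j := Int.dvd_of_emod_eq_zero (Int.emod_eq_emod_iff_emod_sub_eq_zero.1 h)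
  have h2 := Int.eq_zero_of_abs_lt_dvd h1 (by rw [abs_lt]; constructor <;> linarith)
  linarith

section
variable {ι : Type*} {m : ℕ} (e : ι → Fin m) (D : ι → ι → Prop) (arc : ℤ → ι)

noncomputable def blk (B : ℕ) (q : ℤ) : Finset ℤ := Finset.Ico (q * B) (q * B + B)

noncomputable def upR (B L : ℕ) (q : ℤ) (z : ℤ) : Finset ℤ :=
  reach (fun k => blk B (q + k)) (fun i j => i < j ∧ D (arc i) (arc j)) L z
noncomputable def dnR (B L : ℕ) (q : ℤ) (z : ℤ) : Finset ℤ :=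
  reach (fun k => blk B (q - k)) (fun i j => j < i ∧ D (arc i) (arc j)) L z

open Classical in
noncomputable def goodIdx (B L : ℕ) (q : ℤ) : Finset ℤ :=
  (blk B q).filter fun z => 2 ^ L ≤ (upR D arc B L q z).card ∧ 2 ^ L ≤ (dnR D arc B L q z).card

variable {e D arc}

lemma arc_inj_blk (harc : ∀ i, ((e (arc i) : ℕ) : ℤ) = i % m) {B : ℕ} (hB : B ≤ m) (q : ℤ) :
    Set.InjOn arc (blk B q) := by
  intro i hi j hj h
  refine mod_inj_Ico (m := m) (B := B) (a := q * B) (by exact_mod_cast hB) hi hj ?_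
  rw [← harc, ← harc, h]

lemma goodIdx_card (harc : ∀ i, ((e (arc i) : ℕ) : ℤ) = i % m) {B L : ℕ} (hB : B ≤ m)
    (hD : ∀ A C : Finset ι, 2 ^ L ≤ A.card → 2 ^ L ≤ C.card → ∃ a ∈ A, ∃ c ∈ C, D a c)
    (hBL : 3 * 2 ^ L ≤ B) (q : ℤ) : B - 2 * 2 ^ L ≤ (goodIdx D arc B L q).card := by
  classical
  have hDb : ∀ q q' : ℤ, ∀ A ⊆ blk B q, ∀ C ⊆ blk B q', 2 ^ L ≤ A.card → 2 ^ L ≤ C.card →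
      ∃ a ∈ A, ∃ c ∈ C, D (arc a) (arc c) := by
    intro q q' A hA C hC h1 h2
    obtain ⟨a, ha, c, hc, hac⟩ := hD (A.image arc) (C.image arc)
      (by rwa [Finset.card_image_of_injOn ((arc_inj_blk harc hB q).mono (by exact_mod_cast hA))])
      (by rwa [Finset.card_image_of_injOn ((arc_inj_blk harc hB q').mono (by exact_mod_cast hC))])
    simp only [Finset.mem_image] at ha hc
    obtain ⟨a', ha', rfl⟩ := ha
    obtain ⟨c', hc', rfl⟩ := hc
    exact ⟨a', ha', c', hc', hac⟩
  have hcard : ∀ q : ℤ, (blk B q).card = B := by intro q; simp [blk]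
  have hup := halving (fun k : ℕ => blk B (q + k)) (fun i j => i < j ∧ D (arc i) (arc j)) L
    (by
      intro k A hA C hC h1 h2
      obtain ⟨a, ha, c, hc, hac⟩ := hDb _ _ A hA C hC h1 h2
      refine ⟨a, ha, c, hc, ?_, hac⟩
      have h3 := hA ha
      have h4 := hC hc
      simp only [blk, Finset.mem_Ico] at h3 h4
      push_cast at h4
      nlinarith) (by intro k; rw [hcard]; exact hBL)
  have hdn := halving (fun k : ℕ => blk B (q - k)) (fun i j => j < i ∧ D (arc i) (arc j)) L
    (by
      intro k A hA C hC h1 h2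
      obtain ⟨a, ha, c, hc, hac⟩ := hDb _ _ A hA C hC h1 h2
      refine ⟨a, ha, c, hc, ?_, hac⟩
      have h3 := hA ha
      have h4 := hC hc
      simp only [blk, Finset.mem_Ico] at h3 h4
      push_cast at h4
      nlinarith) (by intro k; rw [hcard]; exact hBL)
  simp only [Nat.cast_zero, add_zero, sub_zero] at hup hdn
  replace hup : ((blk B q).filter (fun z => (upR D arc B L q z).card < 2 ^ L)).card < 2 ^ L := hup
  replace hdn : ((blk B q).filter (fun z => (dnR D arc B L q z).card < 2 ^ L)).card < 2 ^ L := hdn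
  have hsub : blk B q ⊆ goodIdx D arc B L q ∪
      ((blk B q).filter (fun z => (upR D arc B L q z).card < 2 ^ L) ∪
      (blk B q).filter (fun z => (dnR D arc B L q z).card < 2 ^ L)) := by
    intro z hz
    simp only [goodIdx, Finset.mem_union, Finset.mem_filter, hz, true_and]
    omega
  have h1 := Finset.card_le_card hsub
  have h2 := Finset.card_union_le (goodIdx D arc B L q)
      ((blk B q).filter (fun z => (upR D arc B L q z).card < 2 ^ L) ∪
      (blk B q).filter (fun z => (dnR D arc B L q z).card < 2 ^ L))
  have h3 := Finset.card_union_le ((blk B q).filter (fun z => (upR D arc B L q z).card < 2 ^ L))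
      ((blk B q).filter (fun z => (dnR D arc B L q z).card < 2 ^ L))
  rw [hcard] at h1
  omega

lemma good_core (harc : ∀ i, ((e (arc i) : ℕ) : ℤ) = i % m) (hm : 0 < m) {B L : ℕ} (hB : B ≤ m)
    (he : Function.Injective e) (hDs : ∀ x z, D x z → D z x) (hDi : ∀ x, ¬ D x x)
    (hD : ∀ A C : Finset ι, 2 ^ L ≤ A.card → 2 ^ L ≤ C.card → ∃ a ∈ A, ∃ c ∈ C, D a c)
    {hit : ι → Prop} {H : ι → ι → ℤ} {kk : ι → ℤ} (hg : GoodData e D hit H kk) (q : ℤ)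
    (Ul Uh : Finset ι) (hUl : ∀ u ∈ Ul, hit u ∧ kk u * m + (e u : ℕ) < (q - L) * B)
    (hUh : ∀ u ∈ Uh, hit u ∧ (q + L + 1) * B ≤ kk u * m + (e u : ℕ))
    (hl : 2 ^ L ≤ Ul.card) (hh : 2 ^ L ≤ Uh.card) :
    ∀ z ∈ goodIdx D arc B L q, hit (arc z) := by
  classical
  obtain ⟨ha, hb, hc⟩ := hg
  have hm' : (0 : ℤ) < m := by exact_mod_cast hm
  have elt : ∀ x z, ((e x : ℕ) : ℤ) < (e z : ℕ) ↔ e x < e z := by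
    intro x z; rw [Fin.lt_def]; exact_mod_cast Iff.rfl
  have mono : ∀ p, hit p → ∀ i j, i < j → D (arc i) (arc j) →
      H (arc j) p - j / m ≤ H (arc i) p - i / m := by
    intro p hp i j hij hDij
    rcases divmod_lt hm' hij with h | ⟨h, h'⟩
    · by_cases heq : e (arc i) = e (arc j)
      · rw [he heq]; omega
      · rcases lt_or_gt_of_ne heq with h2 | h2
        · have := ha p hp _ _ hDij h2; omega
        · have := ha p hp _ _ (hDs _ _ hDij) h2; omega
    · rw [← harc, ← harc, elt] at h'
      have := ha p hp _ _ hDij h'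
      omega
  have idx : ∀ u, (kk u * m + (e u : ℕ)) / (m : ℤ) = kk u ∧ (kk u * m + (e u : ℕ)) % (m : ℤ) = (e u : ℕ) := by
    intro u
    have h1 : ((e u : ℕ) : ℤ) < m := by exact_mod_cast (e u).2
    have h2 : (0 : ℤ) ≤ (e u : ℕ) := by positivity
    rw [Int.ediv_emod_unique hm']
    exact ⟨by ring, h2, h1⟩
  have hval : ∀ p x, hit p → D p x → kk p ≤ H x p ∧ H x p ≤ kk p + 1 := by
    intro p x hp hpx
    have h1 := hb p hp x hpx
    by_cases heq : e p = e x
    · have hpe := he heq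
      subst hpe
      exact absurd hpx (hDi p)
    · rcases lt_or_gt_of_ne heq with h2 | h2
      · have := h1.1 h2; omega
      · have := h1.2 h2; omega
  have above : ∀ p j, hit p → D p (arc j) → kk p * m + (e p : ℕ) < j → H (arc j) p - j / m ≤ 0 := by
    intro p j hp hpj hlt
    have h3 := hval p _ hp hpj
    rcases divmod_lt hm' hlt with h | ⟨h, h'⟩
    · rw [(idx p).1] at h; omega
    · rw [(idx p).1] at h
      rw [(idx p).2, ← harc, elt] at h'
      have := (hb p hp _ hpj).1 h'
      omega
  have below : ∀ p j, hit p → D p (arc j) → j < kk p * m + (e p : ℕ) → 1 ≤ H (arc j) p - j / m := by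
    intro p j hp hpj hlt
    have h3 := hval p _ hp hpj
    rcases divmod_lt hm' hlt with h | ⟨h, h'⟩
    · rw [(idx p).1] at h; omega
    · rw [(idx p).1] at h
      rw [(idx p).2, ← harc, elt] at h'
      have := (hb p hp _ hpj).2 h'
      omega
  intro z hz
  by_contra hnot
  simp only [goodIdx, Finset.mem_filter] at hz
  obtain ⟨hz0, hzu, hzd⟩ := hz
  have hus : upR D arc B L q z ⊆ blk B (q + L) :=
    reach_subset (Bl := fun k : ℕ => blk B (q + k)) (by simpa using hz0) L
  have hds : dnR D arc B L q z ⊆ blk B (q - L) :=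
    reach_subset (Bl := fun k : ℕ => blk B (q - k)) (by simpa using hz0) L
  obtain ⟨u, hu, d, hd, hud⟩ := hD Ul ((dnR D arc B L q z).image arc) hl
    (by rwa [Finset.card_image_of_injOn ((arc_inj_blk harc hB _).mono (by exact_mod_cast hds))])
  obtain ⟨u', hu', d', hd', hud'⟩ := hD Uh ((upR D arc B L q z).image arc) hh
    (by rwa [Finset.card_image_of_injOn ((arc_inj_blk harc hB _).mono (by exact_mod_cast hus))])
  simp only [Finset.mem_image] at hd hd'
  obtain ⟨d, hd, rfl⟩ := hd
  obtain ⟨d', hd', rfl⟩ := hd'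
  have b1 := hds hd
  have b2 := hus hd'
  simp only [blk, Finset.mem_Ico] at b1 b2
  obtain ⟨hu, hu2⟩ := hUl u hu
  obtain ⟨hu', hu2'⟩ := hUh u' hu'
  have c1 := above u d hu hud (by linarith)
  have c2 := below u' d' hu' hud' (by nlinarith)
  have c3 := reach_mono_fun (fun i => H (arc i) u - i / m) (fun a c h => mono u hu c a h.1 (hDs _ _ h.2)) L z d hd
  have c4 := reach_mono_fun (fun i => - (H (arc i) u' - i / m))
    (fun a c h => neg_le_neg (mono u' hu' a c h.1 h.2)) L z d' hd'
  have c5 := hc _ hnot u u' hu hu'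
  omega
end


lemma GoodData.shift {ι : Type*} {m : ℕ} {e : ι → Fin m} {D : ι → ι → Prop} {hit : ι → Prop}
    {H : ι → ι → ℤ} {kk : ι → ℤ} (h : GoodData e D hit H kk) (s : ℤ) :
    GoodData e D hit (fun x p => H x p - s) (fun p => kk p - s) := by
  obtain ⟨h1, h2, h3⟩ := h
  refine ⟨?_, ?_, ?_⟩
  · intro p hp x z a b
    have := h1 p hp x z a b
    constructor <;> simp only <;> omega
  · intro p hp x a
    have := h2 p hp x a
    constructor
    · intro b; have := this.1 b; simp only; omega
    · intro b; have := this.2 b; simp only; omega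
  · intro z hz p p' hp hp'
    simp only; rw [h3 z hz p p' hp hp']

theorem block_lemma {ι : Type*} [Fintype ι] {m : ℕ} (e : ι ≃ Fin m) (D : ι → ι → Prop) (B L : ℕ)
    (hB : B ≤ m) (hBL : 3 * 2 ^ L ≤ B) (hDs : ∀ x z, D x z → D z x) (hDi : ∀ x, ¬ D x x)
    (hD : ∀ A C : Finset ι, 2 ^ L ≤ A.card → 2 ^ L ≤ C.card → ∃ a ∈ A, ∃ c ∈ C, D a c) :
    ∃ Good : ℕ → Finset ι, (∀ r, B - 2 * 2 ^ L ≤ (Good r).card) ∧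
      ∀ (hit : ι → Prop) (H : ι → ι → ℤ) (kk : ι → ℤ), GoodData e D hit H kk →
      ∀ U : Finset ι, (∀ u ∈ U, hit u) → 2 * 2 ^ L + (2 * L + 3) * B ≤ U.card →
      ∃ r ≤ m / B, ∀ z ∈ Good r, hit z := by
  classical
  have hpow : 0 < 2 ^ L := by positivity
  have hB0 : 0 < B := by omega
  have hm : 0 < m := by omega
  have hm' : (0 : ℤ) < m := by exact_mod_cast hm
  have hB0' : (0 : ℤ) < B := by exact_mod_cast hB0
  have harc : ∀ i : ℤ, ∃ x, ((e x : ℕ) : ℤ) = i % m := by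
    intro i
    have h1 := Int.emod_nonneg i hm'.ne'
    have h2 := Int.emod_lt_of_pos i hm'
    refine ⟨e.symm ⟨(i % m).toNat, by omega⟩, ?_⟩
    simp [h1]
  choose arc harc using harc
  refine ⟨fun r => (goodIdx D arc B L (r + 1 + L)).image arc, ?_, ?_⟩
  · intro r
    rw [Finset.card_image_of_injOn]
    · exact goodIdx_card (e := e) harc hB hD hBL _
    · refine (arc_inj_blk (e := e) harc hB (r + 1 + L)).mono ?_
      intro i hi
      exact (Finset.mem_filter.1 hi).1
  intro hit H kk hg U hU hUc
  let ix : ι → ℤ := fun u => kk u * m + (e u : ℕ)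
  have ixinj : Function.Injective ix := by
    intro u v huv
    have key : ∀ u, ix u % m = (e u : ℕ) := by
      intro u
      have h1 : ((e u : ℕ) : ℤ) < m := by exact_mod_cast (e u).2
      have h2 : (0 : ℤ) ≤ (e u : ℕ) := by positivity
      simp only [ix]
      rw [add_comm, Int.add_mul_emod_self_right, Int.emod_eq_of_lt h2 h1]
    have := key u
    rw [huv, key v] at this
    have h3 : (e v : ℕ) = (e u : ℕ) := by exact_mod_cast this
    exact (e.injective (Fin.ext h3)).symm
  have hcnt : ∀ (W : Finset ι) (a b : ℤ), (∀ u ∈ W, a ≤ ix u ∧ ix u < b) → W.card ≤ (b - a).toNat := by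
    intro W a b h
    rw [← Int.card_Ico]
    exact Finset.card_le_card_of_injOn ix (fun u hu => by
      have := h u hu
      simp only [Finset.coe_Ico, Set.mem_Ico]; exact this) ixinj.injOn
  let C : ℤ := ∑ u ∈ U, |ix u|
  have hC : ∀ u ∈ U, - C ≤ ix u ∧ ix u ≤ C := by
    intro u hu
    have : |ix u| ≤ C := Finset.single_le_sum (f := fun u => |ix u|) (fun i _ => abs_nonneg _) hu
    exact abs_le.1 this
  obtain ⟨j, hj, hjmin⟩ := Int.exists_least_of_bdd (P := fun j => 2 ^ L ≤ (U.filter fun u => ix u < j).card)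
    ⟨- C, by
      intro z hz
      by_contra hlt
      push Not at hlt
      have : (U.filter fun u => ix u < z) = ∅ := by
        rw [Finset.filter_eq_empty_iff]
        intro u hu h
        have := hC u hu
        omega
      simp only [this, Finset.card_empty] at hz
      omega⟩
    ⟨C + 1, by
      rw [Finset.filter_true_of_mem (fun u hu => by have := hC u hu; omega)]
      nlinarith⟩
  have hj1 : (U.filter fun u => ix u < j - 1).card < 2 ^ L := by
    by_contra h
    push Not at h
    have := hjmin _ h
    omega
  set s : ℤ := j / m with hs
  have hjm := Int.emod_add_mul_ediv j m
  have hj0 := Int.emod_nonneg j hm'.ne'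
  have hjlt := Int.emod_lt_of_pos j hm'
  set j' : ℤ := j % m with hj'
  set r : ℕ := (j' / B).toNat with hr
  have hr' : (r : ℤ) = j' / B := by
    have : 0 ≤ j' / B := Int.ediv_nonneg hj0 hB0'.le
    omega
  have hd1 := Int.emod_add_mul_ediv j' B
  have hd2 := Int.emod_nonneg j' hB0'.ne'
  have hd3 := Int.emod_lt_of_pos j' hB0'
  rw [← hr'] at hd1
  refine ⟨r, ?_, ?_⟩
  · rw [Nat.le_div_iff_mul_le hB0]
    have : (r : ℤ) * B ≤ m := by nlinarith
    exact_mod_cast this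
  intro z hz
  obtain ⟨z, hz', rfl⟩ := Finset.mem_image.1 hz
  refine good_core (e := e) harc hm hB e.injective hDs hDi hD (hg.shift s) (r + 1 + L)
    (U.filter fun u => ix u < j) (U.filter fun u => (r + 2 * L + 2) * B + s * m ≤ ix u) ?_ ?_ hj ?_ z hz'
  · intro u hu
    rw [Finset.mem_filter] at hu
    refine ⟨hU u hu.1, ?_⟩
    have := hu.2
    simp only [ix] at this
    nlinarith
  · intro u hu
    rw [Finset.mem_filter] at hu
    refine ⟨hU u hu.1, ?_⟩
    have := hu.2
    simp only [ix] at this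
    nlinarith
  · have h1 := hcnt (U.filter fun u => j - 1 ≤ ix u ∧ ix u < (r + 2 * L + 2) * B + s * m) (j - 1)
      ((r + 2 * L + 2) * B + s * m) (fun u hu => (Finset.mem_filter.1 hu).2)
    have h2 : (((r + 2 * L + 2) * B + s * m) - (j - 1) : ℤ) ≤ (2 * L + 3) * B := by nlinarith
    have h3 : (((r + 2 * L + 2) * B + s * m) - (j - 1) : ℤ).toNat ≤ (2 * L + 3) * B := by
      rw [Int.toNat_le]; push_cast; exact h2
    have hsub : U ⊆ (U.filter fun u => ix u < j - 1) ∪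
        ((U.filter fun u => j - 1 ≤ ix u ∧ ix u < (r + 2 * L + 2) * B + s * m) ∪
         (U.filter fun u => (r + 2 * L + 2) * B + s * m ≤ ix u)) := by
      intro u hu
      simp only [Finset.mem_union, Finset.mem_filter, hu, true_and]
      omega
    have h4 := (Finset.card_le_card hsub).trans (Finset.card_union_le _ _)
    have h5 := Finset.card_union_le (U.filter fun u => j - 1 ≤ ix u ∧ ix u < (r + 2 * L + 2) * B + s * m)
         (U.filter fun u => (r + 2 * L + 2) * B + s * m ≤ ix u)
    omega


lemma kfree_pair {V : Type*} [DecidableEq V] {G : SimpleGraph V} {t : ℕ} (hG : KttFree G t) (A C : Finset V)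
    (hA : 2 * t ≤ A.card) (hC : 2 * t ≤ C.card) : ∃ a ∈ A, ∃ c ∈ C, a ≠ c ∧ ¬ G.Adj a c := by
  by_contra hcon
  push Not at hcon
  obtain ⟨A', hA', hA'c⟩ := Finset.exists_subset_card_eq (show t ≤ A.card by omega)
  have h1 := Finset.le_card_sdiff A' C
  obtain ⟨C', hC', hC'c⟩ := Finset.exists_subset_card_eq (show t ≤ (C \ A').card by omega)
  have hdis : Disjoint A' C' := by
    rw [Finset.disjoint_left]
    intro a ha hac
    exact (Finset.mem_sdiff.1 (hC' hac)).2 ha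
  refine hG ⟨A', C', hdis, hA'c, hC'c, ?_⟩
  intro a ha c hc
  refine hcon a (hA' ha) c (Finset.mem_sdiff.1 (hC' hc)).1 ?_
  rintro rfl
  exact Finset.disjoint_left.1 hdis ha hc

theorem strip_count {V : Type*} [Fintype V] [DecidableEq V] {G : SimpleGraph V} {w : V → ℕ → ℤ × ℤ} {N : ℕ}
    (hw : ∀ v k, LStep (w v k) (w v (k + 1)))
    (hadj : ∀ u v, u ≠ v → (G.Adj u v ↔ ∃ i ≤ N, ∃ j ≤ N, w u i = w v j))
    {t L B : ℕ} (hG : KttFree G t) (hL : 2 * t ≤ 2 ^ L) (hB : 3 * 2 ^ L ≤ B)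
    (wa wb : ℕ → ℤ × ℤ) (Na Nb : ℕ)
    (hwa : ∀ k, LStep (wa k) (wa (k + 1))) (hwb : ∀ k, LStep (wb k) (wb (k + 1)))
    (hab : ∀ i ≤ Na, ∀ j ≤ Nb, wa i ≠ wb j) (s f ly : V → ℕ) (P : Finset (V × V))
    (hP1 : ∀ p ∈ P, s p.1 + 2 ≤ f p.1 ∧ f p.1 ≤ N ∧ (∃ k ≤ Na, wa k = w p.1 (s p.1)) ∧
      (∃ k ≤ Nb, wb k = w p.1 (f p.1)) ∧
      (∀ k, s p.1 < k → k < f p.1 → (∀ i ≤ Na, wa i ≠ w p.1 k) ∧ (∀ i ≤ Nb, wb i ≠ w p.1 k)))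
    (hP2 : ∀ p ∈ P, ly p.2 ≤ N ∧ ∀ k ≤ ly p.2, (∀ i ≤ Na, wa i ≠ w p.2 k) ∧ (∀ i ≤ Nb, wb i ≠ w p.2 k))
    (hP3 : ∀ p ∈ P, ∃ i ≤ ly p.2, ∃ k, s p.1 < k ∧ k < f p.1 ∧ w p.1 k = w p.2 i) :
    P.card ≤ Fintype.card V * (2 * 2 ^ L + (2 * L + 3) * B) +
      Fintype.card V * ((Fintype.card V / B + 1) * (2 * t)) := by
  classical
  set h := 2 * 2 ^ L + (2 * L + 3) * B with hh
  set n := Fintype.card V with hn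
  have hpow : 0 < 2 ^ L := by positivity
  have hB0 : 0 < B := by omega
  let Y : Finset V := Finset.univ.filter fun y => h ≤ (P.filter fun p => p.2 = y).card
  have hfibn : ∀ y, (P.filter fun p => p.2 = y).card ≤ n := by
    intro y
    rw [hn, ← Finset.card_univ]
    refine Finset.card_le_card_of_injOn Prod.fst (fun _ _ => Finset.mem_coe.2 (Finset.mem_univ _)) ?_
    intro p hp q hq hpq
    simp only [Finset.coe_filter, Set.mem_setOf_eq] at hp hq
    exact Prod.ext hpq (hp.2.trans hq.2.symm)
  suffices hY : Y.card ≤ (n / B + 1) * (2 * t) by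
    have h1 : P.card = ∑ y : V, (P.filter fun p => p.2 = y).card :=
      Finset.card_eq_sum_card_fiberwise (fun _ _ => Finset.mem_coe.2 (Finset.mem_univ _))
    have h2 : ∀ y : V, (P.filter fun p => p.2 = y).card ≤ h + if y ∈ Y then n else 0 := by
      intro y
      split_ifs with hy
      · exact (hfibn y).trans (by omega)
      · simp only [Y, Finset.mem_filter, Finset.mem_univ, true_and] at hy
        omega
    have h3 : ∑ y : V, (h + if y ∈ Y then n else 0) = n * h + Y.card * n := by
      rw [Finset.sum_add_distrib, Finset.sum_const, Finset.card_univ, ← Finset.sum_filter,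
        Finset.sum_const, Finset.filter_mem_eq_inter, Finset.univ_inter]
      simp [hn]
    rw [h1]
    refine (Finset.sum_le_sum fun y _ => h2 y).trans ?_
    rw [h3]
    nlinarith
  by_contra hYc
  push Not at hYc
  let X : Finset V := P.image Prod.fst
  let ι := {x // x ∈ X}
  have hX : ∀ x : ι, ∃ p ∈ P, p.1 = x.1 := fun x => Finset.mem_image.1 x.2
  have hXp : ∀ x : ι, s x.1 + 2 ≤ f x.1 ∧ f x.1 ≤ N ∧ (∃ k ≤ Na, wa k = w x.1 (s x.1)) ∧
      (∃ k ≤ Nb, wb k = w x.1 (f x.1)) ∧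
      (∀ k, s x.1 < k → k < f x.1 → (∀ i ≤ Na, wa i ≠ w x.1 k) ∧ (∀ i ≤ Nb, wb i ≠ w x.1 k)) := by
    intro x
    obtain ⟨p, hp, h1⟩ := hX x
    rw [← h1]
    exact hP1 p hp
  obtain ⟨e, he⟩ := arcs_order (ι := ι) wa wb Na Nb hwa hwb hab (fun x k => w x.1 (s x.1 + k))
    (fun x => f x.1 - s x.1) (fun x k => hw _ _) (fun x => by have := (hXp x).1; omega)
    (fun x => (hXp x).2.2.1)
    (fun x => by
      have := (hXp x).1
      rw [show s x.1 + (f x.1 - s x.1) = f x.1 by omega]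
      exact (hXp x).2.2.2.1)
    (fun x k h0 h1 => ((hXp x).2.2.2.2 (s x.1 + k) (by omega) (by omega)).1)
    (fun x k h0 h1 => ((hXp x).2.2.2.2 (s x.1 + k) (by omega) (by omega)).2)
  set D : ι → ι → Prop := fun x z => ∀ i ≤ f x.1 - s x.1, ∀ j ≤ f z.1 - s z.1,
    w x.1 (s x.1 + i) ≠ w z.1 (s z.1 + j) with hDdef
  have hDadj : ∀ x z : ι, x.1 ≠ z.1 → ¬ D x z → G.Adj x.1 z.1 := by
    intro x z hne hD
    simp only [hDdef] at hD
    push Not at hD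
    obtain ⟨i, hi, j, hj, hij⟩ := hD
    rw [hadj _ _ hne]
    have := (hXp x).1
    have := (hXp x).2.1
    have := (hXp z).1
    have := (hXp z).2.1
    exact ⟨_, by omega, _, by omega, hij⟩
  have hDs : ∀ x z, D x z → D z x := fun x z hD i hi j hj he' => hD j hj i hi he'.symm
  have hDi : ∀ x, ¬ D x x := fun x hD => hD 0 (by omega) 0 (by omega) rfl
  have hD : ∀ A C : Finset ι, 2 ^ L ≤ A.card → 2 ^ L ≤ C.card → ∃ a ∈ A, ∃ c ∈ C, D a c := by
    intro A C hA hC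
    obtain ⟨a, ha, c, hc, hne, hnadj⟩ := kfree_pair hG (A.map (Function.Embedding.subtype _))
      (C.map (Function.Embedding.subtype _)) (by rw [Finset.card_map]; omega) (by rw [Finset.card_map]; omega)
    simp only [Finset.mem_map, Function.Embedding.subtype_apply] at ha hc
    obtain ⟨a, ha, rfl⟩ := ha
    obtain ⟨c, hc, rfl⟩ := hc
    refine ⟨a, ha, c, hc, ?_⟩
    by_contra hcon
    exact hnadj (hDadj a c hne hcon)
  let m := Fintype.card ι
  have hmn : m ≤ n := by
    have : m = X.card := Fintype.card_coe X
    rw [this]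
    exact Finset.card_le_univ X
  -- the hits of y, as arcs
  let hit : V → ι → Prop := fun y p => ∃ i ≤ ly y, ∃ k, 0 < k ∧ k < f p.1 - s p.1 ∧ w p.1 (s p.1 + k) = w y i
  have hhits : ∀ y ∈ Y, ∃ U : Finset ι, (∀ u ∈ U, hit y u) ∧ h ≤ U.card := by
    intro y hy
    simp only [Y, Finset.mem_filter, Finset.mem_univ, true_and] at hy
    refine ⟨Finset.univ.filter fun u : ι => hit y u, fun u hu => (Finset.mem_filter.1 hu).2, hy.trans ?_⟩
    rw [← Finset.card_map (Function.Embedding.subtype _)]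
    refine Finset.card_le_card_of_injOn Prod.fst ?_ ?_
    · intro p hp
      simp only [Finset.coe_filter, Set.mem_setOf_eq] at hp
      obtain ⟨hp, rfl⟩ := hp
      obtain ⟨i, hi, k, hk1, hk2, hk3⟩ := hP3 p hp
      rw [Finset.mem_coe, Finset.mem_map]
      refine ⟨⟨p.1, Finset.mem_image_of_mem _ hp⟩, Finset.mem_filter.2 ⟨Finset.mem_univ _, ?_⟩, rfl⟩
      exact ⟨i, hi, k - s p.1, by omega, by simp only; omega, by simp only; rw [show s p.1 + (k - s p.1) = k by omega]; exact hk3⟩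
    · intro p hp q hq hpq
      simp only [Finset.coe_filter, Set.mem_setOf_eq] at hp hq
      exact Prod.ext hpq (hp.2.trans hq.2.symm)
  have hBm : B ≤ m := by
    have : Y.Nonempty := Finset.card_pos.1 (by omega)
    obtain ⟨y, hy⟩ := this
    obtain ⟨U, -, hU⟩ := hhits y hy
    have := Finset.card_le_univ U
    change U.card ≤ m at this
    nlinarith
  obtain ⟨Good, hGc, hGood⟩ := block_lemma e D B L hBm hB hDs hDi hD
  have hr : ∀ y, ∃ r, y ∈ Y → r ≤ m / B ∧ ∀ z ∈ Good r, hit y z := by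
    intro y
    by_cases hy : y ∈ Y
    · obtain ⟨U, hU1, hU2⟩ := hhits y hy
      have hy' := hy
      simp only [Y, Finset.mem_filter, Finset.mem_univ, true_and] at hy'
      have : (P.filter fun p => p.2 = y).Nonempty := Finset.card_pos.1 (by omega)
      obtain ⟨p, hp⟩ := this
      rw [Finset.mem_filter] at hp
      have h2 := hP2 p hp.1
      rw [hp.2] at h2
      obtain ⟨H, kk, hdata⟩ := he (w y) (ly y) (hw y) h2.2
      obtain ⟨r, hr1, hr2⟩ := hGood (hit y) H kk hdata U hU1 hU2
      exact ⟨r, fun _ => ⟨hr1, hr2⟩⟩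
    · exact ⟨0, fun h => absurd h hy⟩
  choose r hr using hr
  have hmB : m / B ≤ n / B := Nat.div_le_div_right hmn
  obtain ⟨r0, hr0, hr0c⟩ := Finset.exists_le_card_fiber_of_mul_le_card_of_maps_to (s := Y)
    (t := Finset.range (m / B + 1)) (f := r) (n := 2 * t)
    (fun y hy => Finset.mem_range.2 (by have := (hr y hy).1; omega)) ⟨0, by simp⟩
    (by rw [Finset.card_range]; nlinarith)
  obtain ⟨y, hy, z, hz, hyz, hnadj⟩ := kfree_pair hG (Y.filter fun y => r y = r0)
    ((Good r0).map (Function.Embedding.subtype _)) hr0c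
    (by rw [Finset.card_map]; have := hGc r0; omega)
  rw [Finset.mem_filter] at hy
  simp only [Finset.mem_map, Function.Embedding.subtype_apply] at hz
  obtain ⟨z, hz, rfl⟩ := hz
  obtain ⟨i, hi, k, hk1, hk2, hk3⟩ := (hr y hy.1).2 z (by rw [hy.2]; exact hz)
  have hy' := hy.1
  simp only [Y, Finset.mem_filter, Finset.mem_univ, true_and] at hy'
  have : (P.filter fun p => p.2 = y).Nonempty := Finset.card_pos.1 (by omega)
  obtain ⟨p, hp⟩ := this
  rw [Finset.mem_filter] at hp
  have h2 := (hP2 p hp.1).1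
  rw [hp.2] at h2
  refine hnadj ?_
  rw [hadj _ _ hyz]
  have := (hXp z).2.1
  exact ⟨i, by omega, _, by omega, hk3.symm⟩


open Classical in
/-- curves other than `y` met by the initial piece `w y [0..e]` -/
noncomputable def Nbr {V : Type*} [Fintype V] (w : V → ℕ → ℤ × ℤ) (N : ℕ) (y : V) (e : ℕ) : Finset V :=
  Finset.univ.filter fun x => x ≠ y ∧ ∃ i ≤ e, ∃ j ≤ N, w y i = w x j

section
variable {V : Type*} [Fintype V] [DecidableEq V] {G : SimpleGraph V} {w : V → ℕ → ℤ × ℤ} {N : ℕ}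

open Classical in
lemma point_few (hadj : ∀ u v, u ≠ v → (G.Adj u v ↔ ∃ i ≤ N, ∃ j ≤ N, w u i = w v j)) {t : ℕ}
    (hG : KttFree G t) (p : ℤ × ℤ) :
    (Finset.univ.filter fun x : V => ∃ j ≤ N, p = w x j).card < 2 * t := by
  by_contra h
  push Not at h
  obtain ⟨a, ha, c, hc, hne, hn⟩ := kfree_pair hG _ _ h h
  simp only [Finset.mem_filter, Finset.mem_univ, true_and] at ha hc
  obtain ⟨i, hi, h1⟩ := ha
  obtain ⟨j, hj, h2⟩ := hc
  exact hn ((hadj a c hne).2 ⟨i, hi, j, hj, h1.symm.trans h2⟩)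

lemma Nbr_succ (hadj : ∀ u v, u ≠ v → (G.Adj u v ↔ ∃ i ≤ N, ∃ j ≤ N, w u i = w v j)) {t : ℕ}
    (hG : KttFree G t) (y : V) (e : ℕ) : (Nbr w N y (e + 1)).card ≤ (Nbr w N y e).card + 2 * t := by
  classical
  have hsub : Nbr w N y (e + 1) ⊆ Nbr w N y e ∪ Finset.univ.filter fun x : V => ∃ j ≤ N, w y (e + 1) = w x j := by
    intro x hx
    simp only [Nbr, Finset.mem_filter, Finset.mem_univ, true_and, Finset.mem_union] at hx ⊢
    obtain ⟨h1, i, hi, h2⟩ := hx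
    rcases Nat.le_succ_iff.1 hi with h | rfl
    · exact Or.inl ⟨h1, i, h, h2⟩
    · exact Or.inr h2
  have h1 := (Finset.card_le_card hsub).trans (Finset.card_union_le _ _)
  have h2 := point_few hadj hG (w y (e + 1))
  omega

lemma Nbr_zero (hadj : ∀ u v, u ≠ v → (G.Adj u v ↔ ∃ i ≤ N, ∃ j ≤ N, w u i = w v j)) {t : ℕ}
    (hG : KttFree G t) (y : V) : (Nbr w N y 0).card ≤ 2 * t := by
  classical
  refine (Finset.card_le_card ?_).trans (point_few hadj hG (w y 0)).le
  intro x hx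
  simp only [Nbr, Finset.mem_filter, Finset.mem_univ, true_and] at hx ⊢
  obtain ⟨h1, i, hi, h2⟩ := hx
  rw [Nat.le_zero.1 hi] at h2
  exact h2

lemma exists_piece (hadj : ∀ u v, u ≠ v → (G.Adj u v ↔ ∃ i ≤ N, ∃ j ≤ N, w u i = w v j)) {t : ℕ}
    (hG : KttFree G t) (y : V) {s : ℕ} (hs : 2 * t ≤ s) (hd : s ≤ (Nbr w N y N).card) :
    ∃ e ≤ N, (Nbr w N y e).card ≤ s ∧ s ≤ (Nbr w N y e).card + 2 * t := by
  let P : ℕ → Prop := fun e => (Nbr w N y e).card ≤ s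
  have h0 : P 0 := (Nbr_zero hadj hG y).trans hs
  classical
  have hspec : P (Nat.findGreatest P N) := Nat.findGreatest_spec (Nat.zero_le N) h0
  refine ⟨Nat.findGreatest P N, Nat.findGreatest_le N, hspec, ?_⟩
  rcases (Nat.findGreatest_le (P := P) N).lt_or_eq with h | h
  · have h1 : ¬ P (Nat.findGreatest P N + 1) := Nat.findGreatest_is_greatest (Nat.lt_succ_self _) h
    simp only [P, not_le] at h1
    have := Nbr_succ hadj hG y (Nat.findGreatest P N)
    simp only [P] at this ⊢
    omega
  · rw [h]; omega

/-- pieces met by `x` at scale `i` -/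
def Lset (Nn : Fin 16 → V → Finset V) (i : Fin 16) (x : V) : Finset V :=
  Finset.univ.filter fun y => x ∈ Nn i y

def GoodPt (Nn : Fin 16 → V → Finset V) (sc : Fin 16 → ℕ) (x : V) (i j k : Fin 16) : Prop :=
  sc i ≤ 4 * (Lset Nn i x).card ∧ 2 * (sc i + 1) ≤ (Lset Nn j x).card ∧
    2 * (sc i + sc j + 2) ≤ (Lset Nn k x).card

lemma sum_L (Nn : Fin 16 → V → Finset V) (i : Fin 16) :
    ∑ x, (Lset Nn i x).card = ∑ y, (Nn i y).card := by
  simp only [Lset, Finset.card_filter]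
  rw [Finset.sum_comm]
  refine Finset.sum_congr rfl fun y _ => ?_
  simp

lemma bad_le (Nn : Fin 16 → V → Finset V) (s0 : ℕ) (hs0 : 4 ≤ s0) (x : V)
    (hbad : ¬ ∃ i j k, GoodPt Nn (fun i => s0 * 32 ^ (i : ℕ)) x i j k) :
    ∑ i : Fin 16, ((Lset Nn i x).card : ℝ) / ((s0 * 32 ^ (i : ℕ) : ℕ) : ℝ) ≤ 27 / 2 := by
  set sc : Fin 16 → ℕ := fun i => s0 * 32 ^ (i : ℕ) with hsc
  have hge : ∀ i, s0 ≤ sc i := fun i => Nat.le_mul_of_pos_right _ (by positivity)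
  have hmul : ∀ i j, i < j → 32 * sc i ≤ sc j := by
    intro i j hij
    simp only [hsc]
    calc 32 * (s0 * 32 ^ (i : ℕ)) = s0 * 32 ^ ((i : ℕ) + 1) := by ring
      _ ≤ s0 * 32 ^ (j : ℕ) := Nat.mul_le_mul_left _ (Nat.pow_le_pow_right (by norm_num) hij)
  have h5 : ∀ i, (Lset Nn i x).card < 5 * sc i := by
    intro i
    by_contra h
    push Not at h
    have := hge i
    exact hbad ⟨i, i, i, by omega, by omega, by omega⟩
  let T : Finset (Fin 16) := Finset.univ.filter fun i => sc i ≤ 4 * (Lset Nn i x).card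
  have hT : T.card ≤ 2 := by
    by_contra h
    push Not at h
    obtain ⟨T', hT', hT'c⟩ := Finset.exists_subset_card_eq (show 3 ≤ T.card by omega)
    let o := T'.orderEmbOfFin hT'c
    have ho : ∀ i, sc (o i) ≤ 4 * (Lset Nn (o i) x).card := fun i =>
      (Finset.mem_filter.1 (hT' (Finset.orderEmbOfFin_mem T' hT'c i))).2
    have l1 : o 0 < o 1 := o.strictMono (by decide)
    have l2 : o 1 < o 2 := o.strictMono (by decide)
    have m1 := hmul _ _ l1
    have m2 := hmul _ _ l2
    have g0 := hge (o 0)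
    have h0 := ho 0
    have h1 := ho 1
    have h2 := ho 2
    exact hbad ⟨o 0, o 1, o 2, h0, by omega, by omega⟩
  have hterm : ∀ i, ((Lset Nn i x).card : ℝ) / (sc i : ℝ) ≤ 1 / 4 + if i ∈ T then (19 / 4 : ℝ) else 0 := by
    intro i
    have hpos : (0 : ℝ) < sc i := by have := hge i; exact_mod_cast (by omega : 0 < sc i)
    rw [div_le_iff₀ hpos]
    split_ifs with h
    · have : ((Lset Nn i x).card : ℝ) < 5 * sc i := by exact_mod_cast h5 i
      linarith
    · simp only [T, Finset.mem_filter, Finset.mem_univ, true_and, not_le] at h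
      have : (4 * (Lset Nn i x).card : ℝ) < sc i := by exact_mod_cast h
      linarith
  refine (Finset.sum_le_sum fun i _ => hterm i).trans ?_
  rw [Finset.sum_add_distrib, ← Finset.sum_filter, Finset.sum_const, Finset.sum_const,
    Finset.filter_mem_eq_inter, Finset.univ_inter]
  have : (T.card : ℝ) ≤ 2 := by exact_mod_cast hT
  simp only [Finset.card_univ, Fintype.card_fin, nsmul_eq_mul]
  push_cast
  linarith

open Classical in
lemma many_good [Nonempty V] (Nn : Fin 16 → V → Finset V) (s0 t : ℕ) (hs0 : 4 ≤ s0) (ht : 64 * t ≤ s0)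
    (hN2 : ∀ (i : Fin 16) y, s0 * 32 ^ (i : ℕ) ≤ (Nn i y).card + 2 * t) :
    s0 ≤ 8 * (Finset.univ.filter fun x => ∃ i j k, GoodPt Nn (fun i => s0 * 32 ^ (i : ℕ)) x i j k).card := by
  set Gd := Finset.univ.filter fun x => ∃ i j k, GoodPt Nn (fun i => s0 * 32 ^ (i : ℕ)) x i j k with hGd
  set n := Fintype.card V with hn
  have hnpos : (0 : ℝ) < n := by exact_mod_cast Fintype.card_pos
  have hs0' : (0 : ℝ) < s0 := by exact_mod_cast (by omega : 0 < s0)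
  have ht' : (64 * t : ℝ) ≤ s0 := by exact_mod_cast ht
  let φ : V → ℝ := fun x => ∑ i : Fin 16, ((Lset Nn i x).card : ℝ) / ((s0 * 32 ^ (i : ℕ) : ℕ) : ℝ)
  have hlow : (31 / 2 : ℝ) * n ≤ ∑ x, φ x := by
    simp only [φ]
    rw [Finset.sum_comm]
    have : ∀ i : Fin 16, (31 / 32 : ℝ) * n ≤ ∑ x, ((Lset Nn i x).card : ℝ) / ((s0 * 32 ^ (i : ℕ) : ℕ) : ℝ) := by
      intro i
      have hge : (s0 : ℝ) ≤ ((s0 * 32 ^ (i : ℕ) : ℕ) : ℝ) := by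
        exact_mod_cast Nat.le_mul_of_pos_right _ (by positivity)
      set si : ℝ := ((s0 * 32 ^ (i : ℕ) : ℕ) : ℝ) with hsi
      rw [← Finset.sum_div, le_div_iff₀ (by linarith)]
      have h1 : (∑ x, ((Lset Nn i x).card : ℝ)) = ∑ y, ((Nn i y).card : ℝ) := by
        exact_mod_cast sum_L Nn i
      rw [h1]
      have h2 : ∀ y ∈ (Finset.univ : Finset V), si - 2 * t ≤ ((Nn i y).card : ℝ) := by
        intro y _
        have : si ≤ ((Nn i y).card : ℝ) + 2 * t := by rw [hsi]; exact_mod_cast hN2 i y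
        linarith
      have h3 := Finset.card_nsmul_le_sum _ _ _ h2
      rw [Finset.card_univ, nsmul_eq_mul] at h3
      nlinarith
    have := Finset.sum_le_sum (fun i (_ : i ∈ (Finset.univ : Finset (Fin 16))) => this i)
    simp only [Finset.sum_const, Finset.card_univ, Fintype.card_fin, nsmul_eq_mul] at this
    push_cast at this ⊢
    linarith
  have hup : ∀ x, φ x ≤ 27 / 2 + if x ∈ Gd then (16 * n / s0 : ℝ) else 0 := by
    intro x
    split_ifs with h
    · have : ∀ i : Fin 16, ((Lset Nn i x).card : ℝ) / ((s0 * 32 ^ (i : ℕ) : ℕ) : ℝ) ≤ n / s0 := by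
        intro i
        have hge : (s0 : ℝ) ≤ ((s0 * 32 ^ (i : ℕ) : ℕ) : ℝ) := by
          exact_mod_cast Nat.le_mul_of_pos_right _ (by positivity)
        have hc : ((Lset Nn i x).card : ℝ) ≤ n := by exact_mod_cast Finset.card_le_univ _
        exact div_le_div₀ hnpos.le hc hs0' hge
      have := Finset.sum_le_sum (fun i (_ : i ∈ (Finset.univ : Finset (Fin 16))) => this i)
      simp only [Finset.sum_const, Finset.card_univ, Fintype.card_fin, nsmul_eq_mul] at this
      simp only [φ]
      push_cast at this ⊢
      rw [mul_div_assoc]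
      linarith
    · have hb := bad_le Nn s0 hs0 x (by
        intro hex
        exact h (Finset.mem_filter.2 ⟨Finset.mem_univ _, hex⟩))
      simp only [φ]
      linarith
  have hsum := Finset.sum_le_sum (fun x (_ : x ∈ (Finset.univ : Finset V)) => hup x)
  rw [Finset.sum_add_distrib, ← Finset.sum_filter, Finset.sum_const, Finset.sum_const,
    Finset.filter_mem_eq_inter, Finset.univ_inter, Finset.card_univ] at hsum
  simp only [nsmul_eq_mul] at hsum
  rw [← hn] at hsum
  have h4 : (2 : ℝ) * n ≤ Gd.card * (16 * n / s0) := by linarith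
  rw [← mul_div_assoc, le_div_iff₀ hs0'] at h4
  have h5 : (s0 : ℝ) ≤ 8 * Gd.card := by
    have : (n : ℝ) * s0 ≤ n * (8 * Gd.card) := by nlinarith
    exact le_of_mul_le_mul_left this hnpos
  exact_mod_cast h5

lemma triple_card {X : Type*} [DecidableEq X] (T : Finset (X × X × X)) (A : Finset X) (Bf : X → Finset X)
    (Cf : X → X → Finset X) (p q r : ℕ) (hA : p ≤ A.card) (hB : ∀ a ∈ A, q ≤ (Bf a).card)
    (hC : ∀ a ∈ A, ∀ b ∈ Bf a, r ≤ (Cf a b).card)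
    (hT : ∀ a ∈ A, ∀ b ∈ Bf a, ∀ c ∈ Cf a b, (a, b, c) ∈ T) : p * q * r ≤ T.card := by
  let U := A.sigma fun a => (Bf a).sigma fun b => Cf a b
  have h1 : U.card ≤ T.card := by
    refine Finset.card_le_card_of_injOn (fun u => (u.1, u.2.1, u.2.2)) ?_ ?_
    · rintro ⟨a, b, c⟩ hu
      simp only [U, Finset.mem_coe, Finset.mem_sigma] at hu
      exact hT a hu.1 b hu.2.1 c hu.2.2
    · rintro ⟨a, b, c⟩ _ ⟨a', b', c'⟩ _ h
      simp only [Prod.mk.injEq] at h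
      obtain ⟨rfl, rfl, rfl⟩ := h
      rfl
  refine le_trans ?_ h1
  simp only [U, Finset.card_sigma]
  calc p * q * r ≤ A.card * (q * r) := by rw [mul_assoc]; exact Nat.mul_le_mul_right _ hA
    _ = ∑ a ∈ A, q * r := by simp
    _ ≤ _ := Finset.sum_le_sum fun a ha => by
        calc q * r ≤ (Bf a).card * r := Nat.mul_le_mul_right _ (hB a ha)
          _ = ∑ b ∈ Bf a, r := by simp
          _ ≤ _ := Finset.sum_le_sum fun b hb => hC a ha b hb
end


/-- the canonical gap of the walk `x` from `α` to `β` -/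
def Gap (N : ℕ) (x : ℕ → ℤ × ℤ) (α β : Set (ℤ × ℤ)) (s e : ℕ) : Prop :=
  e ≤ N ∧ x e ∈ β ∧ (∀ k < e, x k ∉ β) ∧ s < e ∧ x s ∈ α ∧ ∀ k, s < k → k < e → x k ∉ α

lemma Gap.unique {N : ℕ} {x : ℕ → ℤ × ℤ} {α β : Set (ℤ × ℤ)} {s e s' e' : ℕ} (h : Gap N x α β s e)
    (h' : Gap N x α β s' e') : s = s' ∧ e = e' := by
  obtain ⟨-, h1, h2, h3, h4, h5⟩ := h
  obtain ⟨-, g1, g2, g3, g4, g5⟩ := h'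
  have he : e = e' := by
    rcases lt_trichotomy e e' with h | h | h
    · exact absurd h1 (g2 e h)
    · exact h
    · exact absurd g1 (h2 e' h)
  subst he
  refine ⟨?_, rfl⟩
  rcases lt_trichotomy s s' with h | h | h
  · exact absurd g4 (h5 s' h g3)
  · exact h
  · exact absurd h4 (g5 s h h3)

lemma last_hit {x : ℕ → ℤ × ℤ} {α : Set (ℤ × ℤ)} {e k : ℕ} (hk : k < e) (h : x k ∈ α) :
    ∃ s < e, x s ∈ α ∧ ∀ k, s < k → k < e → x k ∉ α := by
  classical
  let P : ℕ → Prop := fun s => x s ∈ α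
  have h1 : P (Nat.findGreatest P (e - 1)) := Nat.findGreatest_spec (show k ≤ e - 1 by omega) h
  have h2 := Nat.findGreatest_le (P := P) (e - 1)
  exact ⟨_, by omega, h1, fun j hj hje => Nat.findGreatest_is_greatest hj (by omega)⟩

lemma gap_exists (N : ℕ) (x : ℕ → ℤ × ℤ) (A : Fin 3 → Set (ℤ × ℤ))
    (disj : ∀ i j, i ≠ j → ∀ p ∈ A i, p ∉ A j) (met : ∀ i, ∃ k ≤ N, x k ∈ A i) :
    ∃ σ : Equiv.Perm (Fin 3), ∃ s e, Gap N x (A (σ 0)) (A (σ 1)) s e ∧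
      ∃ k, s < k ∧ k < e ∧ x k ∈ A (σ 2) := by
  classical
  have hfirst : ∀ i, ∃ k ≤ N, x k ∈ A i ∧ ∀ j < k, x j ∉ A i := by
    intro i
    have hex : ∃ k, x k ∈ A i := let ⟨k, _, h⟩ := met i; ⟨k, h⟩
    obtain ⟨k, hk, h⟩ := met i
    exact ⟨Nat.find hex, (Nat.find_min' hex h).trans hk, Nat.find_spec hex, fun j hj => Nat.find_min hex hj⟩
  choose T hTN hT hTmin using hfirst
  obtain ⟨i, hi⟩ := Finite.exists_max T
  have n1 : i + 1 ≠ i := (by decide : ∀ i : Fin 3, i + 1 ≠ i) i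
  have n2 : i + 2 ≠ i := (by decide : ∀ i : Fin 3, i + 2 ≠ i) i
  have n3 : i + 1 ≠ i + 2 := (by decide : ∀ i : Fin 3, i + 1 ≠ i + 2) i
  have lt : ∀ j, j ≠ i → T j < T i := by
    intro j hj
    refine lt_of_le_of_ne (hi j) fun h => ?_
    have := hT j
    rw [h] at this
    exact disj j i hj _ this (hT i)
  obtain ⟨s1, h1, h1', h1''⟩ := last_hit (lt _ n1) (hT (i + 1))
  obtain ⟨s2, h2, h2', h2''⟩ := last_hit (lt _ n2) (hT (i + 2))
  have hne : s1 ≠ s2 := by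
    rintro rfl
    exact disj _ _ n3 _ h1' h2'
  have f1 : i + 1 - 1 = i := (by decide : ∀ i : Fin 3, i + 1 - 1 = i) i
  have f2 : i + 1 - 2 = i + 2 := (by decide : ∀ i : Fin 3, i + 1 - 2 = i + 2) i
  have f3 : i - 1 + 0 = i + 2 := (by decide : ∀ i : Fin 3, i - 1 + 0 = i + 2) i
  have f4 : i - 1 + 1 = i := (by decide : ∀ i : Fin 3, i - 1 + 1 = i) i
  have f5 : i - 1 + 2 = i + 1 := (by decide : ∀ i : Fin 3, i - 1 + 2 = i + 1) i
  rcases lt_or_gt_of_ne hne with h | h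
  · refine ⟨Equiv.subLeft (i + 1), s1, T i, ?_, s2, h, h2, ?_⟩
    · simp only [Equiv.subLeft_apply, sub_zero, f1]
      exact ⟨hTN i, hT i, hTmin i, h1, h1', h1''⟩
    · simp only [Equiv.subLeft_apply, f2]; exact h2'
  · refine ⟨Equiv.addLeft (i - 1), s2, T i, ?_, s1, h, h1, ?_⟩
    · simp only [Equiv.coe_addLeft, f3, f4]
      exact ⟨hTN i, hT i, hTmin i, h2, h2', h2''⟩
    · simp only [Equiv.coe_addLeft, f5]; exact h1'

section
variable {V : Type*} [Fintype V] [DecidableEq V] {G : SimpleGraph V} {w : V → ℕ → ℤ × ℤ} {N : ℕ}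

def Pc (w : V → ℕ → ℤ × ℤ) (ee : Fin 16 → V → ℕ) (l : V × Fin 16) : Set (ℤ × ℤ) :=
  {p | ∃ k ≤ ee l.2 l.1, w l.1 k = p}

def PDis (w : V → ℕ → ℤ × ℤ) (ee : Fin 16 → V → ℕ) (g : Fin 3 → V × Fin 16) : Prop :=
  ∀ i j, i ≠ j → ∀ p ∈ Pc w ee (g i), p ∉ Pc w ee (g j)

open Classical in
noncomputable def T4 (w : V → ℕ → ℤ × ℤ) (N : ℕ) (ee : Fin 16 → V → ℕ) : Finset (V × (Fin 3 → V × Fin 16)) :=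
  Finset.univ.filter fun q => PDis w ee q.2 ∧ ∀ i, ∃ k ≤ N, w q.1 k ∈ Pc w ee (q.2 i)

open Classical in
noncomputable def Q4 (w : V → ℕ → ℤ × ℤ) (N : ℕ) (ee : Fin 16 → V → ℕ) : Finset (V × (Fin 3 → V × Fin 16)) :=
  Finset.univ.filter fun q => PDis w ee q.2 ∧ ∃ s e, Gap N (w q.1) (Pc w ee (q.2 0)) (Pc w ee (q.2 1)) s e ∧
      ∃ k, s < k ∧ k < e ∧ w q.1 k ∈ Pc w ee (q.2 2)

lemma T4_le (ee : Fin 16 → V → ℕ) : (T4 w N ee).card ≤ 6 * (Q4 w N ee).card := by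
  classical
  have hsub : T4 w N ee ⊆ (Finset.univ : Finset (Equiv.Perm (Fin 3))).biUnion fun σ =>
      (Q4 w N ee).image fun q => (q.1, q.2 ∘ σ.symm) := by
    rintro ⟨x, g⟩ hq
    simp only [T4, Finset.mem_filter, Finset.mem_univ, true_and] at hq
    obtain ⟨hd, hm⟩ := hq
    obtain ⟨σ, hσ⟩ := gap_exists N (w x) (fun i => Pc w ee (g i)) hd hm
    rw [Finset.mem_biUnion]
    refine ⟨σ, Finset.mem_univ _, Finset.mem_image.2 ⟨(x, g ∘ σ), ?_, ?_⟩⟩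
    · simp only [Q4, Finset.mem_filter, Finset.mem_univ, true_and]
      exact ⟨fun i j hij => hd _ _ (fun h => hij (σ.injective h)), hσ⟩
    · simp [Function.comp_assoc]
  refine (Finset.card_le_card hsub).trans (Finset.card_biUnion_le.trans ?_)
  refine (Finset.sum_le_sum fun σ _ => Finset.card_image_le).trans ?_
  simp [Fintype.card_perm, Nat.factorial]

lemma Q4_le (hw : ∀ v k, LStep (w v k) (w v (k + 1)))
    (hadj : ∀ u v, u ≠ v → (G.Adj u v ↔ ∃ i ≤ N, ∃ j ≤ N, w u i = w v j))
    {t L B : ℕ} (hG : KttFree G t) (hL : 2 * t ≤ 2 ^ L) (hB : 3 * 2 ^ L ≤ B) (ee : Fin 16 → V → ℕ)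
    (hee : ∀ i y, ee i y ≤ N) :
    (Q4 w N ee).card ≤ (Fintype.card V * (2 * 2 ^ L + (2 * L + 3) * B) +
      Fintype.card V * ((Fintype.card V / B + 1) * (2 * t))) * (4096 * Fintype.card V ^ 2) := by
  classical
  have hcard : (Finset.univ : Finset ((V × Fin 16) × (V × Fin 16) × Fin 16)).card = 4096 * Fintype.card V ^ 2 := by
    simp [Finset.card_univ]; ring
  rw [← hcard]
  refine Finset.card_le_mul_card_image_of_maps_to (f := fun q : V × (Fin 3 → V × Fin 16) => (q.2 0, q.2 1, (q.2 2).2))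
    (fun _ _ => Finset.mem_coe.2 (Finset.mem_univ _)) _ ?_
  rintro ⟨α, β, iy⟩ -
  set Fb := (Q4 w N ee).filter fun q => (q.2 0, q.2 1, (q.2 2).2) = (α, β, iy) with hFb
  rcases Fb.eq_empty_or_nonempty with hem | ⟨q0, hq0⟩
  · rw [hem]; simp
  have hmem : ∀ q ∈ Fb, q.2 0 = α ∧ q.2 1 = β ∧ (q.2 2).2 = iy ∧ PDis w ee q.2 ∧
      ∃ s e, Gap N (w q.1) (Pc w ee α) (Pc w ee β) s e ∧ ∃ k, s < k ∧ k < e ∧ w q.1 k ∈ Pc w ee (q.2 2) := by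
    intro q hq
    simp only [hFb, Q4, Finset.mem_filter, Finset.mem_univ, true_and, Prod.mk.injEq] at hq
    obtain ⟨⟨h1, h2⟩, h3, h4, h5⟩ := hq
    rw [h3, h4] at h2
    exact ⟨h3, h4, h5, h1, h2⟩
  have hse : ∀ x : V, ∃ s e, (∃ s' e', Gap N (w x) (Pc w ee α) (Pc w ee β) s' e') →
      Gap N (w x) (Pc w ee α) (Pc w ee β) s e := by
    intro x
    by_cases h : ∃ s' e', Gap N (w x) (Pc w ee α) (Pc w ee β) s' e'
    · obtain ⟨s, e, h⟩ := h; exact ⟨s, e, fun _ => h⟩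
    · exact ⟨0, 0, fun h' => absurd h' h⟩
  choose s f hsf using hse
  have hinj : Set.InjOn (fun q : V × (Fin 3 → V × Fin 16) => (q.1, (q.2 2).1)) Fb := by
    intro q hq q' hq' h
    obtain ⟨a1, a2, a3, -⟩ := hmem q hq
    obtain ⟨b1, b2, b3, -⟩ := hmem q' hq'
    simp only [Prod.mk.injEq] at h
    refine Prod.ext h.1 ?_
    funext i
    fin_cases i
    · exact a1.trans b1.symm
    · exact a2.trans b2.symm
    · exact Prod.ext h.2 (a3.trans b3.symm)
  rw [← Finset.card_image_of_injOn hinj]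
  have hab : ∀ i ≤ ee α.2 α.1, ∀ j ≤ ee β.2 β.1, w α.1 i ≠ w β.1 j := by
    intro i hi j hj h
    obtain ⟨a1, a2, a3, a4, -⟩ := hmem q0 hq0
    have := a4 0 1 (by decide)
    rw [a1, a2] at this
    exact this _ ⟨i, hi, rfl⟩ ⟨j, hj, h.symm⟩
  refine strip_count hw hadj hG hL hB (w α.1) (w β.1) (ee α.2 α.1) (ee β.2 β.1) (hw _) (hw _) hab s f
    (ee iy) _ ?_ ?_ ?_
  · intro p hp
    obtain ⟨q, hq, rfl⟩ := Finset.mem_image.1 hp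
    obtain ⟨a1, a2, a3, a4, s', e', hg, k, hk1, hk2, hk3⟩ := hmem q hq
    have hg2 := hsf q.1 ⟨s', e', hg⟩
    obtain ⟨rfl, rfl⟩ := hg.unique hg2
    obtain ⟨g1, g2, g3, g4, g5, g6⟩ := hg
    refine ⟨by simp only; omega, g1, g5, g2, fun k h1 h2 => ⟨?_, ?_⟩⟩
    · intro i hi h
      exact g6 k h1 h2 ⟨i, hi, h⟩
    · intro i hi h
      exact g3 k h2 ⟨i, hi, h⟩
  · intro p hp
    obtain ⟨q, hq, rfl⟩ := Finset.mem_image.1 hp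
    obtain ⟨a1, a2, a3, a4, -⟩ := hmem q hq
    refine ⟨hee _ _, fun k hk => ⟨?_, ?_⟩⟩
    · intro i hi h
      have := a4 0 2 (by decide)
      rw [a1] at this
      refine this _ ⟨i, hi, h⟩ ⟨k, ?_, rfl⟩
      rw [a3]; exact hk
    · intro i hi h
      have := a4 1 2 (by decide)
      rw [a2] at this
      refine this _ ⟨i, hi, h⟩ ⟨k, ?_, rfl⟩
      rw [a3]; exact hk
  · intro p hp
    obtain ⟨q, hq, rfl⟩ := Finset.mem_image.1 hp
    obtain ⟨a1, a2, a3, a4, s', e', hg, k, hk1, hk2, i, hi, hi'⟩ := hmem q hq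
    obtain ⟨rfl, rfl⟩ := hg.unique (hsf q.1 ⟨s', e', hg⟩)
    rw [a3] at hi
    exact ⟨i, hi, k, hk1, hk2, hi'.symm⟩
end


section
variable {V : Type*} [Fintype V] [DecidableEq V] {G : SimpleGraph V} {w : V → ℕ → ℤ × ℤ} {N : ℕ}

lemma Pc_avoid {ee : Fin 16 → V → ℕ} (hee : ∀ i y, ee i y ≤ N) {a b : V × Fin 16} (hne : b.1 ≠ a.1)
    (h : b.1 ∉ Nbr w N a.1 (ee a.2 a.1)) : ∀ p ∈ Pc w ee a, p ∉ Pc w ee b := by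
  rintro p ⟨k, hk, rfl⟩ ⟨j, hj, h2⟩
  apply h
  simp only [Nbr, Finset.mem_filter, Finset.mem_univ, true_and]
  exact ⟨hne, k, hk, j, hj.trans (hee _ _), h2.symm⟩

lemma T4_fiber {ee : Fin 16 → V → ℕ} (hee : ∀ i y, ee i y ≤ N) (sc : Fin 16 → ℕ) (s0 : ℕ)
    (hsc : ∀ i, s0 ≤ sc i) (hN : ∀ i y, (Nbr w N y (ee i y)).card ≤ sc i) (x : V)
    (hx : ∃ i j k, GoodPt (fun i y => Nbr w N y (ee i y)) sc x i j k) :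
    s0 ^ 3 ≤ 4 * ((T4 w N ee).filter fun q => q.1 = x).card := by
  classical
  obtain ⟨i, j, k, h1, h2, h3⟩ := hx
  set Nn : Fin 16 → V → Finset V := fun i y => Nbr w N y (ee i y) with hNn
  let T : Finset ((V × Fin 16) × (V × Fin 16) × (V × Fin 16)) :=
    Finset.univ.filter fun a => (x, ![a.1, a.2.1, a.2.2]) ∈ T4 w N ee
  have hTle : T.card ≤ ((T4 w N ee).filter fun q => q.1 = x).card := by
    refine Finset.card_le_card_of_injOn (fun a => (x, ![a.1, a.2.1, a.2.2])) ?_ ?_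
    · intro a ha
      rw [Finset.mem_coe, Finset.mem_filter] at ha ⊢
      exact ⟨ha.2, rfl⟩
    · rintro ⟨a, b, c⟩ _ ⟨a', b', c'⟩ _ h
      simp only [Prod.mk.injEq, true_and] at h
      have e0 := congrFun h 0
      have e1 := congrFun h 1
      have e2 := congrFun h 2
      simp at e0 e1 e2
      rw [e0, e1, e2]
  have hmet : ∀ (i : Fin 16) (a : V), a ∈ Lset Nn i x → ∃ k ≤ N, w x k ∈ Pc w ee (a, i) := by
    intro i a ha
    simp only [Lset, hNn, Nbr, Finset.mem_filter, Finset.mem_univ, true_and] at ha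
    obtain ⟨-, k, hk, j, hj, h⟩ := ha
    exact ⟨j, hj, k, hk, h⟩
  have hcm : ∀ (i : Fin 16) (S : Finset V), (S.image fun a => (a, i)).card = S.card := fun i S =>
    Finset.card_image_of_injective _ (fun a b h => (Prod.mk.inj h).1)
  have key := triple_card T ((Lset Nn i x).image fun a => (a, i))
    (fun a => ((Lset Nn j x) \ (insert a.1 (Nn i a.1))).image fun b => (b, j))
    (fun a b => ((Lset Nn k x) \ (insert a.1 (Nn i a.1) ∪ insert b.1 (Nn j b.1))).image fun c => (c, k))
    (Lset Nn i x).card (sc i + 1) (sc i + sc j + 2) (by rw [hcm])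
    (by
      intro a _
      rw [hcm]
      have l1 := Finset.le_card_sdiff (insert a.1 (Nn i a.1)) (Lset Nn j x)
      have l2 := Finset.card_insert_le a.1 (Nn i a.1)
      have l3 : (Nn i a.1).card ≤ sc i := hN i a.1
      omega)
    (by
      intro a _ b _
      rw [hcm]
      have l1 := Finset.le_card_sdiff (insert a.1 (Nn i a.1) ∪ insert b.1 (Nn j b.1)) (Lset Nn k x)
      have l4 := Finset.card_union_le (insert a.1 (Nn i a.1)) (insert b.1 (Nn j b.1))
      have l2 := Finset.card_insert_le a.1 (Nn i a.1)
      have l3 : (Nn i a.1).card ≤ sc i := hN i a.1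
      have l2' := Finset.card_insert_le b.1 (Nn j b.1)
      have l3' : (Nn j b.1).card ≤ sc j := hN j b.1
      omega)
    (by
      intro a ha b hb c hc
      obtain ⟨a, ha', rfl⟩ := Finset.mem_image.1 ha
      obtain ⟨b, hb', rfl⟩ := Finset.mem_image.1 hb
      obtain ⟨c, hc', rfl⟩ := Finset.mem_image.1 hc
      simp only [Finset.mem_sdiff, Finset.mem_insert, Finset.mem_union, not_or] at hb' hc'
      obtain ⟨hb1, hb2, hb3⟩ := hb'
      obtain ⟨hc1, ⟨hc2, hc3⟩, hc4, hc5⟩ := hc'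
      have d1 : ∀ p ∈ Pc w ee (a, i), p ∉ Pc w ee (b, j) := Pc_avoid hee hb2 hb3
      have d2 : ∀ p ∈ Pc w ee (a, i), p ∉ Pc w ee (c, k) := Pc_avoid hee hc2 hc3
      have d3 : ∀ p ∈ Pc w ee (b, j), p ∉ Pc w ee (c, k) := Pc_avoid hee hc4 hc5
      simp only [T, T4, Finset.mem_filter, Finset.mem_univ, true_and]
      constructor
      · intro u v huv
        fin_cases u <;> fin_cases v
        · exact absurd rfl huv
        · exact d1
        · exact d2
        · exact fun p h h' => d1 p h' h
        · exact absurd rfl huv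
        · exact d3
        · exact fun p h h' => d2 p h' h
        · exact fun p h h' => d3 p h' h
        · exact absurd rfl huv
      · intro u
        fin_cases u
        · exact hmet i a ha'
        · exact hmet j b hb1
        · exact hmet k c hc1)
  have hi := hsc i
  calc s0 ^ 3 = s0 * s0 * s0 := by ring
    _ ≤ (4 * (Lset Nn i x).card) * (sc i + 1) * (sc i + sc j + 2) :=
        Nat.mul_le_mul (Nat.mul_le_mul (by omega) (by omega)) (by omega)
    _ = 4 * ((Lset Nn i x).card * (sc i + 1) * (sc i + sc j + 2)) := by ring
    _ ≤ _ := Nat.mul_le_mul_left _ (key.trans hTle)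

theorem partD [Nonempty V] (hw : ∀ v k, LStep (w v k) (w v (k + 1)))
    (hadj : ∀ u v, u ≠ v → (G.Adj u v ↔ ∃ i ≤ N, ∃ j ≤ N, w u i = w v j))
    {t L B s0 : ℕ} (hG : KttFree G t) (hL : 2 * t ≤ 2 ^ L) (hB : 3 * 2 ^ L ≤ B)
    (hs0 : 4 ≤ s0) (ht : 64 * t ≤ s0) (hdeg : ∀ y, s0 * 32 ^ 15 ≤ (Nbr w N y N).card) :
    s0 ^ 4 ≤ 786432 * Fintype.card V ^ 2 * (Fintype.card V * (2 * 2 ^ L + (2 * L + 3) * B) +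
      Fintype.card V * ((Fintype.card V / B + 1) * (2 * t))) := by
  classical
  have hpiece : ∀ (i : Fin 16) (y : V), ∃ e ≤ N, (Nbr w N y e).card ≤ s0 * 32 ^ (i : ℕ) ∧
      s0 * 32 ^ (i : ℕ) ≤ (Nbr w N y e).card + 2 * t := by
    intro i y
    refine exists_piece hadj hG y ?_ ?_
    · have : s0 ≤ s0 * 32 ^ (i : ℕ) := Nat.le_mul_of_pos_right _ (by positivity)
      omega
    · refine le_trans (Nat.mul_le_mul_left _ (Nat.pow_le_pow_right (by norm_num) ?_)) (hdeg y)
      have := i.2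
      omega
  choose ee hee hN1 hN2 using hpiece
  have hgood := many_good (fun i y => Nbr w N y (ee i y)) s0 t hs0 ht hN2
  set Gd := Finset.univ.filter fun x => ∃ i j k, GoodPt (fun i y => Nbr w N y (ee i y)) (fun i => s0 * 32 ^ (i : ℕ)) x i j k with hGd
  have hlow : Gd.card * s0 ^ 3 ≤ 4 * (T4 w N ee).card := by
    have h1 : (T4 w N ee).card = ∑ x : V, ((T4 w N ee).filter fun q => q.1 = x).card :=
      Finset.card_eq_sum_card_fiberwise (fun _ _ => Finset.mem_coe.2 (Finset.mem_univ _))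
    rw [h1, Finset.mul_sum]
    calc Gd.card * s0 ^ 3 = ∑ x ∈ Gd, s0 ^ 3 := by simp
      _ ≤ ∑ x ∈ Gd, 4 * ((T4 w N ee).filter fun q => q.1 = x).card :=
          Finset.sum_le_sum fun x hx => T4_fiber hee (fun i => s0 * 32 ^ (i : ℕ)) s0
            (fun i => Nat.le_mul_of_pos_right _ (by positivity)) hN1 x (Finset.mem_filter.1 hx).2
      _ ≤ _ := Finset.sum_le_sum_of_subset (Finset.subset_univ _)
  have h2 := T4_le (w := w) (N := N) ee
  have h3 := Q4_le hw hadj hG hL hB ee hee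
  set R := (Fintype.card V * (2 * 2 ^ L + (2 * L + 3) * B) +
      Fintype.card V * ((Fintype.card V / B + 1) * (2 * t)))
  calc s0 ^ 4 = s0 * s0 ^ 3 := by ring
    _ ≤ (8 * Gd.card) * s0 ^ 3 := Nat.mul_le_mul_right _ hgood
    _ = 8 * (Gd.card * s0 ^ 3) := by ring
    _ ≤ 8 * (4 * (T4 w N ee).card) := Nat.mul_le_mul_left _ hlow
    _ ≤ 8 * (4 * (6 * (R * (4096 * Fintype.card V ^ 2)))) := by
        refine Nat.mul_le_mul_left _ (Nat.mul_le_mul_left _ (h2.trans (Nat.mul_le_mul_left _ h3)))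
    _ = 786432 * Fintype.card V ^ 2 * R := by ring
end


section
variable {V : Type*} [Fintype V] [DecidableEq V] {G : SimpleGraph V} {w : V → ℕ → ℤ × ℤ} {N : ℕ}

lemma min_deg (G : SimpleGraph V) [DecidableRel G.Adj] (d : ℕ)
    (h : 2 * d * Fintype.card V < (Finset.univ.filter fun p : V × V => G.Adj p.1 p.2).card) :
    ∃ A : Finset V, A.Nonempty ∧ ∀ v ∈ A, d ≤ (A.filter fun x => G.Adj v x).card := by
  classical
  let φ : Finset V → ℤ := fun A => (∑ x ∈ A, ∑ y ∈ A, if G.Adj x y then 1 else 0) - 2 * d * A.card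
  obtain ⟨A, -, hA⟩ := Finset.exists_max_image (Finset.univ : Finset (Finset V)) φ ⟨∅, Finset.mem_univ _⟩
  have hpos : 0 < φ Finset.univ := by
    have : (∑ x : V, ∑ y : V, if G.Adj x y then (1 : ℤ) else 0) =
        ((Finset.univ.filter fun p : V × V => G.Adj p.1 p.2).card : ℤ) := by
      rw [Finset.card_filter, ← Finset.univ_product_univ, Finset.sum_product]
      push_cast
      rfl
    simp only [φ, this, Finset.card_univ]
    have h' : ((2 * d * Fintype.card V : ℕ) : ℤ) < ((Finset.univ.filter fun p : V × V => G.Adj p.1 p.2).card : ℤ) := by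
      exact_mod_cast h
    push_cast at h'
    linarith
  have hne : A.Nonempty := by
    rw [Finset.nonempty_iff_ne_empty]
    rintro rfl
    have := hA Finset.univ (Finset.mem_univ _)
    simp only [φ] at this hpos
    simp at this hpos
    linarith
  refine ⟨A, hne, fun v hv => ?_⟩
  have h1 := hA (A.erase v) (Finset.mem_univ _)
  have hdeg : (((A.filter fun x => G.Adj v x).card : ℕ) : ℤ) = ∑ y ∈ A, if G.Adj v y then (1 : ℤ) else 0 := by
    rw [Finset.card_filter]; push_cast; rfl
  have e1 : ∀ f : V → ℤ, ∑ x ∈ A, f x = f v + ∑ x ∈ A.erase v, f x := fun f =>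
    (Finset.add_sum_erase A f hv).symm
  have e2 : (A.card : ℤ) = (A.erase v).card + 1 := by
    have := Finset.card_erase_add_one hv
    exact_mod_cast this.symm
  have e3 : ∑ x ∈ A, ∑ y ∈ A, (if G.Adj x y then (1 : ℤ) else 0) =
      2 * (∑ y ∈ A, if G.Adj v y then (1 : ℤ) else 0) +
      ∑ x ∈ A.erase v, ∑ y ∈ A.erase v, (if G.Adj x y then (1 : ℤ) else 0) := by
    rw [e1]
    have : ∑ x ∈ A.erase v, ∑ y ∈ A, (if G.Adj x y then (1 : ℤ) else 0) =
        (∑ x ∈ A.erase v, if G.Adj v x then (1 : ℤ) else 0) +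
        ∑ x ∈ A.erase v, ∑ y ∈ A.erase v, (if G.Adj x y then (1 : ℤ) else 0) := by
      rw [← Finset.sum_add_distrib]
      refine Finset.sum_congr rfl fun x _ => ?_
      rw [e1]
      simp only [G.adj_comm]
    rw [this]
    have h4 := e1 (fun y => if G.Adj v y then (1 : ℤ) else 0)
    simp only [SimpleGraph.irrefl, if_false, zero_add] at h4
    rw [h4]; ring
  simp only [φ] at h1
  rw [e3, e2, ← hdeg] at h1
  have : (d : ℤ) ≤ ((A.filter fun x => G.Adj v x).card : ℤ) := by linarith
  exact_mod_cast this

theorem partD2 (hw : ∀ v k, LStep (w v k) (w v (k + 1)))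
    (hadj : ∀ u v, u ≠ v → (G.Adj u v ↔ ∃ i ≤ N, ∃ j ≤ N, w u i = w v j)) [DecidableRel G.Adj]
    {t L B s0 : ℕ} (hG : KttFree G t) (hL : 2 * t ≤ 2 ^ L) (hB : 3 * 2 ^ L ≤ B)
    (hs0 : 4 ≤ s0) (ht : 64 * t ≤ s0)
    (h : 2 * (s0 * 32 ^ 15) * Fintype.card V < (Finset.univ.filter fun p : V × V => G.Adj p.1 p.2).card) :
    s0 ^ 4 ≤ 786432 * Fintype.card V ^ 2 * (Fintype.card V * (2 * 2 ^ L + (2 * L + 3) * B) +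
      Fintype.card V * ((Fintype.card V / B + 1) * (2 * t))) := by
  classical
  obtain ⟨A, hne, hA⟩ := min_deg G _ h
  have : Nonempty {v // v ∈ A} := hne.to_subtype
  have hc : Fintype.card {v // v ∈ A} ≤ Fintype.card V := Fintype.card_subtype_le _
  have key := partD (V := {v // v ∈ A}) (G := G.comap Subtype.val) (w := fun v => w v.1) (N := N)
    (fun v k => hw v.1 k) (fun u v huv => hadj u.1 v.1 (fun e => huv (Subtype.ext e)))
    (t := t) (L := L) (B := B) (s0 := s0) ?_ hL hB hs0 ht ?_
  · refine key.trans ?_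
    gcongr
  · rintro ⟨X, Y, hd, hX, hY, hXY⟩
    refine hG ⟨X.map (Function.Embedding.subtype _), Y.map (Function.Embedding.subtype _), ?_, ?_, ?_, ?_⟩
    · exact (Finset.disjoint_map _).2 hd
    · rw [Finset.card_map, hX]
    · rw [Finset.card_map, hY]
    · intro a ha b hb
      obtain ⟨a, ha', rfl⟩ := Finset.mem_map.1 ha
      obtain ⟨b, hb', rfl⟩ := Finset.mem_map.1 hb
      exact hXY a ha' b hb'
  · intro y
    refine (hA y.1 y.2).trans ?_
    rw [← Finset.card_map (Function.Embedding.subtype (fun v => v ∈ A)) (s := Nbr _ _ _ _)]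
    refine Finset.card_le_card ?_
    intro x hx
    rw [Finset.mem_filter] at hx
    refine Finset.mem_map.2 ⟨⟨x, hx.1⟩, ?_, rfl⟩
    simp only [Nbr, Finset.mem_filter, Finset.mem_univ, true_and]
    have hxy : y.1 ≠ x := hx.2.ne
    exact ⟨fun e => hxy (congrArg Subtype.val e).symm, (hadj _ _ hxy).1 hx.2⟩

set_option exponentiation.threshold 2000

lemma arith_core {n L t δ : ℝ} (hL : 1 ≤ L) (ht : 1 ≤ t) (hδ : 0 < δ) (hδ1 : δ ≤ 1)
    (hbig : 2 ^ 840 * L ^ 17 * t ≤ n * δ ^ 32) : 2 ^ 200 * L ^ 2 * t ≤ n * δ ^ 4 := by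
  have hn : 0 ≤ n := by
    by_contra hn
    push Not at hn
    have h1 : n * δ ^ 32 ≤ 0 := mul_nonpos_of_nonpos_of_nonneg hn.le (by positivity)
    have : 0 < 2 ^ 840 * L ^ 17 * t := by positivity
    linarith
  calc 2 ^ 200 * L ^ 2 * t ≤ 2 ^ 840 * L ^ 17 * t := by
        gcongr
        all_goals norm_num
    _ ≤ n * δ ^ 32 := hbig
    _ ≤ n * δ ^ 4 := mul_le_mul_of_nonneg_left (pow_le_pow_of_le_one hδ.le hδ1 (by norm_num)) hn

set_option maxHeartbeats 1000000 in
theorem core (G : SimpleGraph V) (hw : ∀ v k, LStep (w v k) (w v (k + 1)))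
    (hadj : ∀ u v, u ≠ v → (G.Adj u v ↔ ∃ i ≤ N, ∃ j ≤ N, w u i = w v j))
    {t : ℕ} (ht : 1 ≤ t) (hG : KttFree G t) {δ : ℝ} (hδ : 0 < δ) (hδ' : δ ≤ 1 / 4)
    (L : ℕ) (hL : 1 ≤ L) (hLn : Fintype.card V ≤ 2 ^ L) (hV : 1 ≤ Fintype.card V)
    (hbig : (2 : ℝ) ^ 840 * L ^ 17 * t ≤ Fintype.card V * δ ^ 32) :
    ∃ S : Finset V, IsSeparator G S ∧ (S.card : ℝ) ≤ δ * Fintype.card V := by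
  classical
  by_contra hcon
  push Not at hcon
  have hS := partS G hw hadj hδ hδ' hcon L hL hLn hV
  have hLR : (1 : ℝ) ≤ L := by exact_mod_cast hL
  have htR : (1 : ℝ) ≤ t := by exact_mod_cast ht
  have hsmall := arith_core hLR htR hδ (by linarith) hbig
  have hPle : (Finset.univ.filter fun p : V × V => p.1 = p.2 ∨ G.Adj p.1 p.2).card ≤
      Fintype.card V + (Finset.univ.filter fun p : V × V => G.Adj p.1 p.2).card := by
    rw [Finset.filter_or]
    refine (Finset.card_union_le _ _).trans (Nat.add_le_add_right ?_ _)
    rw [← Finset.card_univ]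
    refine Finset.card_le_card_of_injOn Prod.fst (fun _ _ => Finset.mem_coe.2 (Finset.mem_univ _)) ?_
    rintro ⟨a, b⟩ h1 ⟨c, d⟩ h2 h
    simp at h1 h2 h
    simp [← h1, ← h2, h]
  have hPR : ((Finset.univ.filter fun p : V × V => p.1 = p.2 ∨ G.Adj p.1 p.2).card : ℝ) ≤
      Fintype.card V + ((Finset.univ.filter fun p : V × V => G.Adj p.1 p.2).card : ℝ) := by
    exact_mod_cast hPle
  have hD2 := fun (L B s0 : ℕ) => partD2 hw hadj (G := G) (t := t) (L := L) (B := B) (s0 := s0) (hG := hG)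
  generalize hP : (Finset.univ.filter fun p : V × V => G.Adj p.1 p.2).card = P at *
  generalize (Finset.univ.filter fun p : V × V => p.1 = p.2 ∨ G.Adj p.1 p.2).card = P' at *
  generalize Fintype.card V = n at *
  have hnR : (1 : ℝ) ≤ n := by exact_mod_cast hV
  have hn0 : (0 : ℝ) < n := by linarith
  have hL0 : (0 : ℝ) < L := by linarith
  set M : ℝ := n * δ ^ 4 / (1200000 * L ^ 2) with hM
  have hMP : n * M ≤ n + P := by
    rw [hM, ← mul_div_assoc, div_le_iff₀ (by positivity)]
    nlinarith [mul_le_mul_of_nonneg_left hPR (by positivity : (0 : ℝ) ≤ 1200000 * L ^ 2)]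
  have hMbig : 2 ^ 179 * (t : ℝ) ≤ M := by
    rw [hM, le_div_iff₀ (by positivity)]
    refine le_trans ?_ hsmall
    have : (0 : ℝ) ≤ L ^ 2 * t := by positivity
    nlinarith
  have hMn : M ≤ n := by
    rw [hM, div_le_iff₀ (by positivity)]
    refine mul_le_mul_of_nonneg_left ?_ hn0.le
    have h1 : δ ^ 4 ≤ 1 := pow_le_one₀ hδ.le (by linarith)
    nlinarith
  set s0 : ℕ := ⌊M / 2 ^ 77⌋₊ with hs0
  have hs_le : (s0 : ℝ) ≤ M / 2 ^ 77 := Nat.floor_le (by positivity)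
  have hs_gt : M / 2 ^ 77 < s0 + 1 := Nat.lt_floor_add_one _
  have hq : 2 ^ 102 * (t : ℝ) ≤ M / 2 ^ 77 := by
    rw [le_div_iff₀ (by positivity)]; linarith
  have hs64 : 64 * t ≤ s0 := by
    have : (64 * t : ℝ) ≤ s0 := by linarith
    exact_mod_cast this
  have hs_low : M / 2 ^ 78 ≤ s0 := by
    have : M / 2 ^ 78 = M / 2 ^ 77 / 2 := by rw [div_div (M)]; norm_num
    rw [this]; linarith
  have htn : 4 * t ≤ n := by
    have h1 : (4 * t : ℝ) ≤ n := by linarith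
    exact_mod_cast h1
  set κ : ℝ := (δ ^ 4 / (2 ^ 99 * L ^ 2)) ^ 4 with hκ
  have hκ0 : 0 < κ := by positivity
  have hκ1 : κ ≤ 1 := by
    refine pow_le_one₀ (by positivity) ?_
    rw [div_le_one (by positivity)]
    have h1 : δ ^ 4 ≤ 1 := pow_le_one₀ hδ.le (by linarith)
    nlinarith
  have hsκ : κ * n ^ 4 ≤ (s0 : ℝ) ^ 4 := by
    rw [hκ, ← mul_pow]
    refine pow_le_pow_left₀ (by positivity) (le_trans ?_ hs_low) 4
    rw [hM, div_div, div_mul_eq_mul_div, mul_comm]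
    refine div_le_div_of_nonneg_left (by positivity) (by positivity) ?_
    have : (0 : ℝ) < L ^ 2 := by positivity
    nlinarith
  -- choose `l`
  set l : ℕ := Nat.clog 2 (2 * t) with hl
  have hl1 : 2 * t ≤ 2 ^ l := Nat.le_pow_clog (by norm_num) _
  have hl2 : 2 ^ l ≤ 4 * t := by
    have h1 : 2 ^ (l - 1) < 2 * t := Nat.pow_pred_clog_lt_self (by norm_num) (by omega)
    have h2 : 2 ^ l = 2 * 2 ^ (l - 1) := by
      rw [← pow_succ']
      congr 1
      have : 0 < l := Nat.clog_pos (by norm_num) (by omega)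
      omega
    omega
  have hlL : l ≤ L := (Nat.pow_le_pow_iff_right (by norm_num : 1 < 2)).1 ((hl2.trans htn).trans hLn)
  set C : ℝ := 4 * 786432 with hC
  set B : ℕ := ⌈C * t / κ⌉₊ with hBdef
  have hB1 : C * t / κ ≤ B := Nat.le_ceil _
  have hCt : C * t ≤ C * t / κ := by
    rw [le_div_iff₀ hκ0]
    have : (0 : ℝ) ≤ C * t := by positivity
    nlinarith
  have hB2 : (B : ℝ) ≤ 2 * (C * t / κ) := by
    have h1 : (B : ℝ) < C * t / κ + 1 := Nat.ceil_lt_add_one (by positivity)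
    have h2 : 1 ≤ C * t := by rw [hC]; linarith
    linarith
  have hB12 : 12 * t ≤ B := by
    have : (12 * t : ℝ) ≤ B := by rw [hC] at hCt hB1; linarith
    exact_mod_cast this
  have hBpos : (0 : ℝ) < B := by
    have : 0 < B := by omega
    exact_mod_cast this
  have hfin := hD2 l B s0 hl1 (by omega) (by omega) hs64 (by
    have h1 : (2 * (s0 * 32 ^ 15) * n : ℝ) < P := by
      have h2 : (2 * (s0 * 32 ^ 15) : ℝ) ≤ M / 2 := by
        have : M / 2 = 2 * (M / 2 ^ 77 * 32 ^ 15) := by ring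
        rw [this]
        gcongr
      have h3 : M / 2 < M - 1 := by linarith
      have h4 : (2 * (s0 * 32 ^ 15) : ℝ) * n < (M - 1) * n :=
        mul_lt_mul_of_pos_right (h2.trans_lt h3) hn0
      linarith
    exact_mod_cast h1)
  have hfinR : (s0 : ℝ) ^ 4 ≤ 786432 * n ^ 2 * (n * (2 * 2 ^ l + (2 * l + 3) * B) +
      n * ((n / B + 1) * (2 * t))) := by
    have h1 : (s0 : ℝ) ^ 4 ≤ 786432 * n ^ 2 * (n * (2 * 2 ^ l + (2 * l + 3) * B) +
      n * (((n / B : ℕ) + 1) * (2 * t))) := by exact_mod_cast hfin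
    refine h1.trans ?_
    have := Nat.cast_div_le (α := ℝ) (m := n) (n := B)
    gcongr
  have hl2R : (2 : ℝ) ^ l ≤ 4 * t := by exact_mod_cast hl2
  have hlLR : (l : ℝ) ≤ L := by exact_mod_cast hlL
  have hB12R : (12 * t : ℝ) ≤ B := by exact_mod_cast hB12
  have hstep : (2 * 2 ^ l + (2 * l + 3) * B : ℝ) + (n / B + 1) * (2 * t) ≤ 7 * L * B + 2 * t * n / B := by
    have h1 : (2 * l + 3) * (B : ℝ) ≤ (2 * L + 3) * B := by gcongr
    have h2 : (n / B + 1) * (2 * t : ℝ) = 2 * t * n / B + 2 * t := by ring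
    rw [h2]
    have h3 : (B : ℝ) ≤ L * B := by nlinarith
    linarith
  clear_value C M B κ s0 l
  have hk1 : κ * n ≤ 786432 * (7 * L * B + 2 * t * n / B) := by
    have h1 : κ * n ^ 4 ≤ n ^ 3 * (786432 * (7 * L * B + 2 * t * n / B)) := by
      refine (hsκ.trans hfinR).trans ?_
      have h2 := mul_le_mul_of_nonneg_left hstep (by positivity : (0 : ℝ) ≤ 786432 * n ^ 3)
      linarith
    have h3 : n ^ 3 * (κ * n) ≤ n ^ 3 * (786432 * (7 * L * B + 2 * t * n / B)) := by
      refine le_trans (le_of_eq ?_) h1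
      ring
    exact le_of_mul_le_mul_left h3 (by positivity)
  have hk2 : 786432 * (2 * t * n / B) ≤ κ * n / 2 := by
    rw [div_le_iff₀ hκ0] at hB1
    rw [← mul_div_assoc, div_le_iff₀ hBpos]
    have := mul_le_mul_of_nonneg_left hB1 hn0.le
    rw [hC] at this
    linarith
  have hk3 : κ * n / 2 ≤ 786432 * (7 * L * (2 * (C * t / κ))) := by
    have : 786432 * (7 * L * B) ≤ 786432 * (7 * L * (2 * (C * t / κ))) := by gcongr
    linarith
  have hk4 : κ ^ 2 * n ≤ 2 ^ 47 * L * t := by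
    have h1 : 786432 * (7 * L * (2 * (C * t / κ))) = (786432 * 14 * C * (L * t)) / κ := by ring
    rw [h1, le_div_iff₀ hκ0] at hk3
    have : (0 : ℝ) ≤ L * t := by positivity
    rw [hC] at hk3
    linarith
  have hk5 : κ ^ 2 = δ ^ 32 / (2 ^ 792 * L ^ 16) := by
    rw [hκ, ← pow_mul, div_pow, mul_pow, ← pow_mul, ← pow_mul, ← pow_mul]
  rw [hk5, div_mul_eq_mul_div, div_le_iff₀ (by positivity)] at hk4
  have h6 : 2 ^ 47 * L * t * (2 ^ 792 * L ^ 16) = 2 ^ 839 * (L ^ 17 * t : ℝ) := by ring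
  rw [h6] at hk4
  have h7 : (0 : ℝ) < 2 ^ 839 * (L ^ 17 * t : ℝ) := by positivity
  have h8 : (2 : ℝ) ^ 840 * L ^ 17 * t = 2 * (2 ^ 839 * (L ^ 17 * t : ℝ)) := by ring
  rw [h8] at hbig
  linarith
end


lemma univ_isSeparator {V : Type*} [Fintype V] [DecidableEq V] (G : SimpleGraph V) :
    IsSeparator G Finset.univ := by
  refine ⟨∅, ∅, by simp, by simp, by simp, by simp, ?_, ?_, by simp⟩
  · simp only [Finset.card_empty, Nat.cast_zero]; positivity
  · simp only [Finset.card_empty, Nat.cast_zero]; positivity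

set_option exponentiation.threshold 2000

/-- There are constants `d' > 0` and `b ≥ 1` such that for every integer `t ≥ 1`, every
`K_{t,t}`-free string graph on `n ≥ 2` vertices has a separator of size at most
`d'·t^(1/(2b))·(log₂ n)^(1+1/(2b))·n^(1−1/(2b))`. -/
theorem ktt_free_string_graph_separator :
    ∃ d' b : ℝ, 0 < d' ∧ 1 ≤ b ∧
      ∀ (t : ℕ), 1 ≤ t →
        ∀ (V : Type) [Fintype V] [DecidableEq V] (G : SimpleGraph V),
          IsStringGraph G → KttFree G t → 2 ≤ Fintype.card V →
          ∃ S : Finset V, IsSeparator G S ∧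
            (S.card : ℝ) ≤ d' * (t : ℝ) ^ ((1 : ℝ) / (2 * b)) *
              (Real.logb 2 (Fintype.card V)) ^ (1 + 1 / (2 * b)) *
              (Fintype.card V : ℝ) ^ (1 - 1 / (2 * b)) := by
  refine ⟨2 ^ 29, 16, by norm_num, by norm_num, ?_⟩
  intro t ht V _ _ G hG hK hn
  have hnR : (2 : ℝ) ≤ Fintype.card V := by exact_mod_cast hn
  have hn0 : (0 : ℝ) < Fintype.card V := by linarith
  have htR : (1 : ℝ) ≤ t := by exact_mod_cast ht
  have ht0 : (0 : ℝ) < t := by linarith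
  set lam : ℝ := Real.logb 2 (Fintype.card V) with hlam
  have hlam1 : 1 ≤ lam := by
    rw [hlam, Real.le_logb_iff_rpow_le (by norm_num) hn0]
    simpa using hnR
  have hlam0 : 0 < lam := by linarith
  set δ : ℝ := 2 ^ 27 * (t : ℝ) ^ ((1 : ℝ) / 32) * lam ^ ((33 : ℝ) / 32) *
    (Fintype.card V : ℝ) ^ (-(1 : ℝ) / 32) with hδ
  have hδ0 : 0 < δ := by positivity
  have hbound : 2 ^ 29 * (t : ℝ) ^ ((1 : ℝ) / (2 * 16)) * lam ^ (1 + 1 / (2 * 16) : ℝ) *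
      (Fintype.card V : ℝ) ^ (1 - 1 / (2 * 16) : ℝ) = 4 * δ * Fintype.card V := by
    have h1 : (Fintype.card V : ℝ) ^ (1 - 1 / (2 * 16) : ℝ) =
        (Fintype.card V : ℝ) ^ (-(1 : ℝ) / 32) * Fintype.card V := by
      rw [← Real.rpow_add_one hn0.ne']; norm_num
    have h2 : (1 + 1 / (2 * 16) : ℝ) = 33 / 32 := by norm_num
    have h3 : ((1 : ℝ) / (2 * 16)) = 1 / 32 := by norm_num
    rw [h1, h2, h3, hδ]
    ring
  rw [hbound]
  by_cases hd : δ ≤ 1 / 4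
  · obtain ⟨w, N, hw, hadj⟩ := discretize G hG
    have hpow : Fintype.card V * δ ^ 32 = (2 : ℝ) ^ 864 * t * lam ^ 33 := by
      have e1 : ((t : ℝ) ^ ((1 : ℝ) / 32)) ^ 32 = t := by
        rw [← Real.rpow_natCast, ← Real.rpow_mul ht0.le]; norm_num
      have e2 : (lam ^ ((33 : ℝ) / 32)) ^ 32 = lam ^ 33 := by
        rw [← Real.rpow_natCast, ← Real.rpow_mul hlam0.le, ← Real.rpow_natCast]; norm_num
      have e3 : ((Fintype.card V : ℝ) ^ (-(1 : ℝ) / 32)) ^ 32 = (Fintype.card V : ℝ)⁻¹ := by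
        rw [← Real.rpow_natCast, ← Real.rpow_mul hn0.le, ← Real.rpow_neg_one]; norm_num
      have e4 : ((2 : ℝ) ^ 27) ^ 32 = 2 ^ 864 := by rw [← pow_mul]
      rw [hδ, mul_pow, mul_pow, mul_pow, e1, e2, e3, e4]
      field_simp
    have hLle : ((⌈lam⌉₊ : ℕ) : ℝ) ≤ 2 * lam := by
      have := Nat.ceil_lt_add_one hlam0.le
      linarith
    have hA : Fintype.card V ≤ 2 ^ ⌈lam⌉₊ := by
      have h1 : (Fintype.card V : ℝ) ≤ 2 ^ ⌈lam⌉₊ := by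
        have h2 : (Fintype.card V : ℝ) = 2 ^ lam := by
          rw [hlam, Real.rpow_logb (by norm_num) (by norm_num) hn0]
        rw [h2, ← Real.rpow_natCast]
        exact Real.rpow_le_rpow_of_exponent_le (by norm_num) (Nat.le_ceil _)
      exact_mod_cast h1
    have hBig : (2 : ℝ) ^ 840 * ((⌈lam⌉₊ : ℕ) : ℝ) ^ 17 * t ≤ Fintype.card V * δ ^ 32 := by
      rw [hpow]
      have h1 : ((⌈lam⌉₊ : ℕ) : ℝ) ^ 17 ≤ 2 ^ 17 * lam ^ 33 := by
        calc ((⌈lam⌉₊ : ℕ) : ℝ) ^ 17 ≤ (2 * lam) ^ 17 := by gcongr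
          _ = 2 ^ 17 * lam ^ 17 := by rw [mul_pow]
          _ ≤ 2 ^ 17 * lam ^ 33 := by
              gcongr
              norm_num
      calc (2 : ℝ) ^ 840 * ((⌈lam⌉₊ : ℕ) : ℝ) ^ 17 * t ≤ 2 ^ 840 * (2 ^ 17 * lam ^ 33) * t := by gcongr
        _ = 2 ^ 857 * t * lam ^ 33 := by
            rw [← mul_assoc, ← pow_add]; ring
        _ ≤ 2 ^ 864 * t * lam ^ 33 := by
            gcongr
            all_goals norm_num
    obtain ⟨S, hS, hc⟩ := core G hw hadj ht hK hδ0 hd ⌈lam⌉₊ (Nat.ceil_pos.2 hlam0) hA (by omega) hBig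
    refine ⟨S, hS, hc.trans ?_⟩
    nlinarith [mul_pos hδ0 hn0]
  · refine ⟨Finset.univ, univ_isSeparator G, ?_⟩
    rw [Finset.card_univ]
    push Not at hd
    nlinarith
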